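/- Assume the Riemann Hypothesis. Then γ_r > e^{−γ} for every integer r ≥ 0. -/

import Mathlib

open Filter

/-- Generalized Euler constant for a finite set of primes `P`:
`γ(P) = ∏_{p∈P}(1 - 1/p) * (γ + ∑_{p∈P} log p / (p-1))`. -/
noncomputable def gammaP (P : Finset ℕ) : ℝ :=
  (∏ p ∈ P, (1 - 1 / (p : ℝ))) *
    (Real.eulerMascheroniConstant + ∑ p ∈ P, Real.log p / ((p : ℝ) - 1))

/-- `γ_r = γ({p_1, …, p_r})`, the generalized Euler constant for the first `r` primes. -/
noncomputable def gammaR (r : ℕ) : ℝ :=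
  gammaP ((Finset.range r).image (Nat.nth Nat.Prime))

/-! Write `ξ` for Riemann's function. Under the Riemann hypothesis `1 / ξ(s + h)` is holomorphic for
`re s > (1 - h) / 2`, and the functional equation makes `ξ(s) / ξ(s + h)` unimodular on the boundary
line, so by Phragmén–Lindelöf `|ξ|` increases with `re s` to the right of the critical line. Hence
`re (ξ' / ξ) ≥ 0` there, and a Poisson kernel estimate bounds the Taylor coefficients of a twice
divided difference of `ξ' / ξ` by `2 (ξ' / ξ)(1) = 2 + γ - log (4π) ≤ 0.05`, with no sum over zeros.
Post–Widder inversion of the Laplace transform turns this into an explicit formula: up to a small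
archimedean term,
`|κ - γ u + u² / 2 - ∑ Λ(n) / n * (u - log n)₊| ≤ 0.05 e^{-u / 2}` for a constant `κ`.

Integration by parts gives a lower bound for the error term
`l log l + (γ - 1) l + γ - ∑ Λ(n) / (n log n) * (l - log n)₊` of a smoothed Mertens formula. For a
set `P` of primes put `l = γ + ∑ log p / (p - 1)`. Then `log γ(P) + γ` is this error divided by `l`
plus a nonnegative sum measuring how the prime powers built from `P` differ from those up to `e^l`.
Each prime power `n` in `(e^{l / 2}, e^{l / 2 + 1}]` contributes to that sum: through `n²` if `n` is
built from `P`, and through `n` itself otherwise. For `l ≥ 4` this gain outweighs the error,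
and only `r < 15` is left to numerics. -/

section ZetaGrowth

open Complex Set

lemma riemannZeta₁_eq_mul {s : ℂ} (hs : s ≠ 1) : riemannZeta₁ s = (s - 1) * riemannZeta s := by
  rw [riemannZeta_eq_inv_sub_mul hs, mul_inv_cancel_left₀ (sub_ne_zero.2 hs)]

lemma riemannZeta₁_conj (s : ℂ) :
    riemannZeta₁ (starRingEnd ℂ s) = starRingEnd ℂ (riemannZeta₁ s) := by
  by_cases h : s = 1
  · simp [h]
  have h' : starRingEnd ℂ s ≠ 1 := fun h' => h <| by simpa using congrArg (starRingEnd ℂ) h'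
  simp [riemannZeta₁_eq_mul h, riemannZeta₁_eq_mul h', riemannZeta_conj]

lemma riemannZeta₁_ne_zero_of_RH (hRH : RiemannHypothesis) {s : ℂ} (hs : 1 / 2 < s.re) :
    riemannZeta₁ s ≠ 0 := by
  by_cases h1 : s = 1
  · simp [h1]
  refine fun h0 => hs.ne' (hRH s (by rw [riemannZeta_eq_inv_sub_mul h1, h0, mul_zero]) ?_ h1)
  rintro ⟨n, rfl⟩
  simp at hs
  linarith [(Nat.cast_nonneg n : (0 : ℝ) ≤ n)]

lemma isOpen_setOf_lt_re (a : ℝ) : IsOpen {z : ℂ | a < z.re} :=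
  isOpen_lt continuous_const continuous_re

lemma summable_nat_add_one_rpow {p : ℝ} (hp : p < -1) :
    Summable fun n : ℕ => (n + 1 : ℝ) ^ p := by
  simpa using (summable_nat_add_iff 1).2 (Real.summable_nat_rpow.2 hp)

lemma summable_one_div_nat_add_one_cpow {s : ℂ} (hs : 1 < s.re) :
    Summable fun n : ℕ => 1 / (n + 1 : ℂ) ^ s := by
  simpa using (summable_nat_add_iff 1).2 (summable_one_div_nat_cpow.2 hs)

lemma hasDerivAt_ofReal_cpow_of_pos {x : ℝ} (hx : 0 < x) (s : ℂ) :
    HasDerivAt (fun y : ℝ => (y : ℂ) ^ s) (s * (x : ℂ) ^ (s - 1)) x := by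
  simpa using
    ((hasDerivAt_id (x : ℂ)).cpow_const (c := s) (Or.inl (by simpa using hx))).comp_ofReal

lemma norm_ofReal_cpow_neg_sub_le {a b : ℝ} (ha : 0 < a) (hab : a ≤ b) {s : ℂ} (hs : 0 ≤ s.re) :
    ‖(b : ℂ) ^ (-s) - (a : ℂ) ^ (-s)‖ ≤ ‖s‖ * a ^ (-s.re - 1) * (b - a) := by
  refine norm_image_sub_le_of_norm_deriv_le_segment' (f := fun y : ℝ => (y : ℂ) ^ (-s))
    (f' := fun x => -s * (x : ℂ) ^ (-s - 1))
    (fun x hx => (hasDerivAt_ofReal_cpow_of_pos (ha.trans_le hx.1) _).hasDerivWithinAt)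
    (fun x hx => ?_) b (right_mem_Icc.2 hab)
  rw [norm_mul, norm_neg, norm_cpow_eq_rpow_re_of_pos (ha.trans_le hx.1)]
  gcongr
  simp only [sub_re, neg_re, one_re]
  exact Real.rpow_le_rpow_of_nonpos ha hx.1 (by linarith)

/-- The terms of the series for `(s - 1) ζ(s) - 1` on `0 < re s`: the Dirichlet series of
`(s - 1) ζ(s)` minus the integrals of `(s - 1) x⁻ˢ` over `[n + 1, n + 2]`, which is what makes it
converge to the left of `re s = 1`. -/
noncomputable def zetaTerm (n : ℕ) (s : ℂ) : ℂ :=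
  (s - 1) * ((n + 1 : ℝ) : ℂ) ^ (-s) +
    (((n + 2 : ℝ) : ℂ) ^ (1 - s) - ((n + 1 : ℝ) : ℂ) ^ (1 - s))

lemma norm_zetaTerm_le (n : ℕ) {s : ℂ} (hs : 0 ≤ s.re) :
    ‖zetaTerm n s‖ ≤ ‖s - 1‖ * ‖s‖ * (n + 1 : ℝ) ^ (-s.re - 1) := by
  have hn : (0 : ℝ) < n + 1 := by positivity
  set g : ℝ → ℂ := fun y => (s - 1) * ((n + 1 : ℝ) : ℂ) ^ (-s) * (y : ℂ) + (y : ℂ) ^ (1 - s)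
  set g' : ℝ → ℂ := fun x => (s - 1) * ((n + 1 : ℝ) : ℂ) ^ (-s) * 1 +
    (1 - s) * (x : ℂ) ^ (1 - s - 1)
  have hg : ∀ x ∈ Icc (n + 1 : ℝ) (n + 2), HasDerivWithinAt g (g' x) (Icc (n + 1 : ℝ) (n + 2)) x :=
    fun x hx => (((hasDerivAt_id (x : ℂ)).comp_ofReal.const_mul _).add
      (hasDerivAt_ofReal_cpow_of_pos (hn.trans_le hx.1) _)).hasDerivWithinAt
  have hg' : ∀ x ∈ Ico (n + 1 : ℝ) (n + 2),
      ‖g' x‖ ≤ ‖s - 1‖ * ‖s‖ * (n + 1 : ℝ) ^ (-s.re - 1) := fun x hx => by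
    have hfactor : g' x = -((s - 1) * ((x : ℂ) ^ (-s) - ((n + 1 : ℝ) : ℂ) ^ (-s))) := by
      simp only [g', show (1 - s - 1 : ℂ) = -s by ring]
      ring
    rw [hfactor, norm_neg, norm_mul, mul_assoc]
    gcongr
    refine (norm_ofReal_cpow_neg_sub_le hn hx.1 hs).trans ?_
    exact mul_le_of_le_one_right (by positivity) (by linarith [hx.2])
  have hmean := norm_image_sub_le_of_norm_deriv_le_segment' hg hg' _
    (right_mem_Icc.2 (by linarith : (n + 1 : ℝ) ≤ n + 2))
  convert hmean using 1
  · simp only [zetaTerm, g]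
    push_cast
    ring_nf
  · ring

lemma differentiable_zetaTerm (n : ℕ) : Differentiable ℂ (zetaTerm n) := by
  have h1 : ((n + 1 : ℝ) : ℂ) ≠ 0 := by exact_mod_cast (by positivity : (n + 1 : ℝ) ≠ 0)
  have h2 : ((n + 2 : ℝ) : ℂ) ≠ 0 := by exact_mod_cast (by positivity : (n + 2 : ℝ) ≠ 0)
  have hsub : Differentiable ℂ fun s : ℂ => 1 - s := by fun_prop
  exact ((differentiable_id.sub_const 1).mul (differentiable_id.neg.const_cpow (Or.inl h1))).add
    ((hsub.const_cpow (Or.inl h2)).sub (hsub.const_cpow (Or.inl h1)))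

lemma norm_zetaTerm_le_of_le_re (n : ℕ) {σ : ℝ} (hσ : 0 < σ) {s : ℂ} (hs : σ ≤ s.re) :
    ‖zetaTerm n s‖ ≤ ‖s - 1‖ * ‖s‖ * (n + 1 : ℝ) ^ (-σ - 1) := by
  refine (norm_zetaTerm_le n (hσ.le.trans hs)).trans ?_
  gcongr
  simp

lemma summable_zetaTerm {s : ℂ} (hs : 0 < s.re) : Summable fun n => zetaTerm n s :=
  .of_norm_bounded ((summable_nat_add_one_rpow (by linarith)).mul_left _)
    fun n => norm_zetaTerm_le n hs.le

lemma sum_range_zetaTerm (N : ℕ) (s : ℂ) :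
    ∑ n ∈ Finset.range N, zetaTerm n s =
      ∑ n ∈ Finset.range N, (s - 1) * (1 / (n + 1 : ℂ) ^ s) + ((N + 1 : ℂ) ^ (1 - s) - 1) := by
  have htelescope := Finset.sum_range_sub (fun n : ℕ => (n + 1 : ℂ) ^ (1 - s)) N
  simp only [Nat.cast_zero, zero_add, one_cpow] at htelescope
  rw [← htelescope, ← Finset.sum_add_distrib]
  refine Finset.sum_congr rfl fun n _ => ?_
  simp only [zetaTerm, cpow_neg, one_div]
  push_cast
  ring_nf

lemma tendsto_nat_add_one_cpow_atTop_zero {s : ℂ} (hs : s.re < 0) :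
    Tendsto (fun N : ℕ => (N + 1 : ℂ) ^ s) atTop (nhds 0) := by
  have hnorm (N : ℕ) : ‖(N + 1 : ℂ) ^ s‖ = ((N + 1 : ℕ) : ℝ) ^ (-(-s.re)) := by
    rw [neg_neg, ← Nat.cast_succ, norm_natCast_cpow_of_pos N.succ_pos]
  rw [tendsto_zero_iff_norm_tendsto_zero]
  simp only [hnorm]
  exact (tendsto_rpow_neg_atTop (neg_pos.2 hs)).comp
    (tendsto_natCast_atTop_atTop.comp (tendsto_add_atTop_nat 1))

lemma tsum_zetaTerm_of_one_lt_re {s : ℂ} (hs : 1 < s.re) :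
    ∑' n, zetaTerm n s = riemannZeta₁ s - 1 := by
  have hs1 : s ≠ 1 := by rintro rfl; simp at hs
  have hz : HasSum (fun n : ℕ => (s - 1) * (1 / (n + 1 : ℂ) ^ s)) (riemannZeta₁ s) := by
    rw [riemannZeta₁_eq_mul hs1, zeta_eq_tsum_one_div_nat_add_one_cpow hs]
    exact (summable_one_div_nat_add_one_cpow hs).hasSum.mul_left _
  have hlim := hz.tendsto_sum_nat.add
    ((tendsto_nat_add_one_cpow_atTop_zero (s := 1 - s) (by simpa using hs)).sub_const 1)
  simp only [← sum_range_zetaTerm, zero_sub, ← sub_eq_add_neg] at hlim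
  exact tendsto_nhds_unique (summable_zetaTerm (by linarith)).hasSum.tendsto_sum_nat hlim

lemma differentiableOn_tsum_zetaTerm :
    DifferentiableOn ℂ (fun s => ∑' n, zetaTerm n s) {s | 0 < s.re} := by
  intro s (hs : 0 < s.re)
  set R : ℝ := ‖s‖ + 1
  set U : Set ℂ := {z | s.re / 2 < z.re} ∩ Metric.ball 0 R
  have hU : IsOpen U := (isOpen_setOf_lt_re _).inter Metric.isOpen_ball
  have hsU : s ∈ U := ⟨half_lt_self hs, by simp [R]⟩
  refine ((differentiableOn_tsum_of_summable_norm
    (u := fun n : ℕ => (R + 1) * R * (n + 1 : ℝ) ^ (-(s.re / 2) - 1))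
    ((summable_nat_add_one_rpow (by linarith)).mul_left _)
    (fun n => (differentiable_zetaTerm n).differentiableOn) hU fun n w hw => ?_).differentiableAt
    (hU.mem_nhds hsU)).differentiableWithinAt
  have hwR : ‖w‖ ≤ R := (mem_ball_zero_iff.1 hw.2).le
  refine (norm_zetaTerm_le_of_le_re n (half_pos hs) hw.1.le).trans ?_
  have : ‖w - 1‖ ≤ R + 1 := (norm_sub_le _ _).trans (by simpa using hwR)
  gcongr

lemma tsum_zetaTerm {s : ℂ} (hs : 0 < s.re) : ∑' n, zetaTerm n s = riemannZeta₁ s - 1 := by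
  refine AnalyticOnNhd.eqOn_of_preconnected_of_eventuallyEq (z₀ := 2)
    (f := fun z => ∑' n, zetaTerm n z) (g := fun z => riemannZeta₁ z - 1)
    (differentiableOn_tsum_zetaTerm.analyticOnNhd (isOpen_setOf_lt_re 0))
    ((differentiable_riemannZeta₁.sub_const 1).differentiableOn.analyticOnNhd
      (isOpen_setOf_lt_re 0))
    (convex_halfSpace_re_gt 0).isPreconnected (by simp) ?_ hs
  filter_upwards [(isOpen_setOf_lt_re 1).mem_nhds (show (1 : ℝ) < (2 : ℂ).re by norm_num)] with z hz
  exact tsum_zetaTerm_of_one_lt_re hz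

lemma exists_norm_riemannZeta₁_le {σ : ℝ} (hσ : 0 < σ) :
    ∃ C : ℝ, 0 < C ∧ ∀ s : ℂ, σ ≤ s.re → ‖riemannZeta₁ s‖ ≤ C * (1 + ‖s‖) ^ 2 := by
  have hsum := summable_nat_add_one_rpow (p := -σ - 1) (by linarith)
  set A : ℝ := ∑' n : ℕ, (n + 1 : ℝ) ^ (-σ - 1)
  have : 0 ≤ A := tsum_nonneg fun n => by positivity
  refine ⟨1 + A, by positivity, fun s hs => ?_⟩
  have htsum : ‖riemannZeta₁ s - 1‖ ≤ ‖s - 1‖ * ‖s‖ * A := by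
    rw [← tsum_zetaTerm (hσ.trans_le hs)]
    exact tsum_of_norm_bounded (hsum.hasSum.mul_left _) fun n => norm_zetaTerm_le_of_le_re n hσ hs
  have h1 : ‖s - 1‖ ≤ 1 + ‖s‖ := (norm_sub_le _ _).trans (by simp [add_comm])
  calc ‖riemannZeta₁ s‖ ≤ ‖s - 1‖ * ‖s‖ * A + 1 := by
        linarith [norm_le_norm_sub_add (riemannZeta₁ s) 1, norm_one (α := ℂ)]
    _ ≤ (1 + ‖s‖) * (1 + ‖s‖) * A + (1 + ‖s‖) * (1 + ‖s‖) := by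
        gcongr
        · linarith
        · nlinarith [norm_nonneg s]
    _ = (1 + A) * (1 + ‖s‖) ^ 2 := by ring

lemma exists_norm_riemannZeta₁_le_exp {σ : ℝ} (hσ : 0 < σ) :
    ∃ C : ℝ, ∀ s : ℂ, σ ≤ s.re → ‖riemannZeta₁ s‖ ≤ Real.exp (C + 2 * ‖s‖) := by
  obtain ⟨C, hC, h⟩ := exists_norm_riemannZeta₁_le hσ
  refine ⟨Real.log C, fun s hs => (h s hs).trans ?_⟩
  rw [Real.exp_add, Real.exp_log hC, mul_comm 2, Real.exp_mul, Real.rpow_two]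
  gcongr
  simpa [add_comm] using Real.add_one_le_exp ‖s‖

lemma norm_riemannZeta_sub_one_le {s : ℂ} (hs : 2 ≤ s.re) : ‖riemannZeta s - 1‖ ≤ 3 / 4 := by
  have hs1 : 1 < s.re := by linarith
  have htail : riemannZeta s - 1 = ∑' n : ℕ, 1 / ((n + 1 : ℕ) + 1 : ℂ) ^ s := by
    rw [zeta_eq_tsum_one_div_nat_add_one_cpow hs1,
      (summable_one_div_nat_add_one_cpow hs1).tsum_eq_zero_add]
    simp
  have hbasel : HasSum (fun n : ℕ => 1 / ((n + 2 : ℕ) : ℝ) ^ 2) (Real.pi ^ 2 / 6 - 1) := by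
    simpa [Finset.sum_range_succ] using (hasSum_nat_add_iff' 2).2 hasSum_zeta_two
  have hle : ‖riemannZeta s - 1‖ ≤ Real.pi ^ 2 / 6 - 1 := by
    rw [htail]
    refine tsum_of_norm_bounded hbasel fun n => ?_
    rw [← Nat.cast_succ, norm_div, norm_one, norm_natCast_cpow_of_pos (by omega)]
    gcongr
    rw [← Real.rpow_natCast]
    exact Real.rpow_le_rpow_of_exponent_le (by simp; linarith) (by simpa using hs)
  nlinarith [Real.pi_lt_d2, Real.pi_pos]

lemma norm_sub_one_div_four_le_norm_riemannZeta₁ {s : ℂ} (hs : 2 ≤ s.re) :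
    ‖s - 1‖ / 4 ≤ ‖riemannZeta₁ s‖ := by
  have hs1 : s ≠ 1 := by rintro rfl; norm_num at hs
  have hζ : 1 / 4 ≤ ‖riemannZeta s‖ := by
    have h := norm_sub_norm_le (1 : ℂ) (1 - riemannZeta s)
    rw [norm_sub_rev 1 (riemannZeta s), norm_one, sub_sub_cancel] at h
    linarith [norm_riemannZeta_sub_one_le hs]
  rw [riemannZeta₁_eq_mul hs1, norm_mul, div_eq_mul_one_div]
  gcongr

lemma norm_riemannZeta₁_le_two_mul {s : ℂ} (hs : 2 ≤ s.re) :
    ‖riemannZeta₁ s‖ ≤ 2 * ‖s - 1‖ := by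
  have hs1 : s ≠ 1 := by rintro rfl; norm_num at hs
  have hζ : ‖riemannZeta s‖ ≤ 2 := by
    have h := norm_le_norm_sub_add (riemannZeta s) 1
    rw [norm_one] at h
    linarith [norm_riemannZeta_sub_one_le hs]
  rw [riemannZeta₁_eq_mul hs1, norm_mul, mul_comm 2]
  gcongr

lemma one_fourth_le_norm_riemannZeta₁ {s : ℂ} (hs : 2 ≤ s.re) : 1 / 4 ≤ ‖riemannZeta₁ s‖ := by
  have h1 : s.re - 1 ≤ ‖s - 1‖ := by simpa using re_le_norm (s - 1)
  linarith [norm_sub_one_div_four_le_norm_riemannZeta₁ hs]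

end ZetaGrowth

section BorelCaratheodory

open Complex Metric

lemma exists_eq_mul_exp_of_ne_zero_on_ball {f : ℂ → ℂ} {c : ℂ} {R : ℝ}
    (hf : DifferentiableOn ℂ f (ball c R)) (h0 : ∀ z ∈ ball c R, f z ≠ 0) :
    ∃ g : ℂ → ℂ, DifferentiableOn ℂ g (ball c R) ∧ g c = 0 ∧
      ∀ z ∈ ball c R, f z = f c * exp (g z) := by
  obtain ⟨g, hgc, hg⟩ := ((hf.deriv isOpen_ball).div hf h0).isExactOn_ball.with_val_at c 0
  refine ⟨g, fun z hz => (hg z hz).differentiableAt.differentiableWithinAt, hgc, fun z hz => ?_⟩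
  have hder : ∀ z ∈ ball c R, HasDerivAt (fun z => f z * exp (-g z)) 0 z := fun z hz => by
    have hfz := (hf.differentiableAt (isOpen_ball.mem_nhds hz)).hasDerivAt
    refine (hfz.mul (hg z hz).neg.cexp).congr_deriv ?_
    have := h0 z hz
    simp only [Pi.div_apply]
    field_simp
    ring
  have hconst := isOpen_ball.is_const_of_deriv_eq_zero (convex_ball c R).isPreconnected
    (fun z hz => (hder z hz).differentiableAt.differentiableWithinAt)
    (fun z hz => (hder z hz).deriv) hz (mem_ball_self (pos_of_mem_ball hz))
  simp only [hgc, neg_zero, exp_zero, mul_one] at hconst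
  rw [← hconst, mul_assoc, ← exp_add, neg_add_cancel, exp_zero, mul_one]

lemma norm_mul_exp_le_norm_of_ne_zero_on_ball {f : ℂ → ℂ} {c : ℂ} {R M : ℝ} (hM : 0 < M)
    (hf : DifferentiableOn ℂ f (ball c R)) (h0 : ∀ z ∈ ball c R, f z ≠ 0)
    (hb : ∀ z ∈ ball c R, ‖f z‖ ≤ ‖f c‖ * Real.exp M) {z : ℂ} (hz : z ∈ ball c R) :
    ‖f c‖ * Real.exp (-(2 * M * ‖z - c‖ / (R - ‖z - c‖))) ≤ ‖f z‖ := by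
  obtain ⟨g, hgd, hgc, hg⟩ := exists_eq_mul_exp_of_ne_zero_on_ball hf h0
  have hR : 0 < R := pos_of_mem_ball hz
  have hfc : 0 < ‖f c‖ := norm_pos_iff.2 (h0 c (mem_ball_self hR))
  have hmap : ∀ w ∈ ball (0 : ℂ) R, c + w ∈ ball c R := fun w hw => by simpa using hw
  have hre : ∀ w ∈ ball (0 : ℂ) R, (g (c + w)).re ≤ M := fun w hw => by
    have h1 := hb _ (hmap w hw)
    rw [hg _ (hmap w hw), norm_mul, norm_exp] at h1
    exact Real.exp_le_exp.1 (le_of_mul_le_mul_left h1 hfc)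
  have hbc := borelCaratheodory_zero (f := fun w => g (c + w)) (z := z - c) hM
    (hgd.comp (by fun_prop) hmap) hre hR (by simpa [dist_eq_norm] using hz) (by simp [hgc])
  simp only [add_sub_cancel] at hbc
  rw [hg z hz, norm_mul, norm_exp]
  gcongr
  linarith [(abs_le.1 (abs_re_le_norm (g z))).1]

lemma mul_exp_le_norm_of_ne_zero_on_ball {f : ℂ → ℂ} {c z : ℂ} {R M m δ : ℝ} (hM : 0 < M)
    (hδ : 0 < δ) (hf : DifferentiableOn ℂ f (ball c R)) (h0 : ∀ z ∈ ball c R, f z ≠ 0)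
    (hc : m ≤ ‖f c‖) (hb : ∀ z ∈ ball c R, ‖f z‖ ≤ m * Real.exp M) (hz : ‖z - c‖ ≤ R - δ) :
    m * Real.exp (-(2 * M * R / δ)) ≤ ‖f z‖ := by
  have hzR : z ∈ ball c R := by rw [mem_ball, dist_eq_norm]; linarith
  have hR := pos_of_mem_ball hzR
  have hquot : 2 * M * ‖z - c‖ / (R - ‖z - c‖) ≤ 2 * M * R / δ := by
    gcongr <;> linarith
  calc m * Real.exp (-(2 * M * R / δ))
      ≤ ‖f c‖ * Real.exp (-(2 * M * ‖z - c‖ / (R - ‖z - c‖))) := by gcongr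
    _ ≤ ‖f z‖ := norm_mul_exp_le_norm_of_ne_zero_on_ball hM hf h0
        (fun w hw => (hb w hw).trans (by gcongr)) hzR

lemma lt_re_of_mem_ball {c z : ℂ} {a r : ℝ} (hz : z ∈ ball c r) (ha : a + r ≤ c.re) : a < z.re := by
  have h1 : ‖z - c‖ < r := by simpa [dist_eq_norm] using hz
  have h2 := (abs_le.1 (abs_re_le_norm (z - c))).1
  rw [sub_re] at h2
  linarith

/-- The disks of radius `b - a` centred on `re s = b` sweep out the strip, and Borel–Carathéodory
applies to `log f` on each of them. -/
lemma exists_exp_neg_le_norm_of_ne_zero {f : ℂ → ℂ} {a b m B C δ : ℝ} (hm : 0 < m) (hδ : 0 < δ)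
    (hB : 0 ≤ B) (hf : DifferentiableOn ℂ f {s | a < s.re}) (h0 : ∀ s, a < s.re → f s ≠ 0)
    (hup : ∀ s, a < s.re → ‖f s‖ ≤ Real.exp (C + B * ‖s‖)) (hlow : ∀ s, b ≤ s.re → m ≤ ‖f s‖) :
    ∃ K : ℝ, 0 ≤ K ∧ ∀ s, a + δ ≤ s.re → Real.exp (-(K * (1 + ‖s‖))) ≤ ‖f s‖ := by
  set R := b - a
  set A := |C - Real.log m| + 2 * B * |R| + 1 + B
  refine ⟨|Real.log m| + 2 * A * |R| / δ, by positivity, fun s hs => ?_⟩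
  set M := A * (1 + ‖s‖)
  suffices h : m * Real.exp (-(2 * M * |R| / δ)) ≤ ‖f s‖ by
    refine le_trans ?_ h
    rw [← Real.le_log_iff_exp_le (by positivity), Real.log_mul hm.ne' (Real.exp_pos _).ne',
      Real.log_exp, show 2 * M * |R| / δ = 2 * A * |R| / δ * (1 + ‖s‖) by ring]
    nlinarith [neg_abs_le (Real.log m), abs_nonneg (Real.log m), norm_nonneg s]
  rcases le_total b s.re with hbs | hbs
  · refine (mul_le_of_le_one_right hm.le ?_).trans (hlow s hbs)
    exact Real.exp_le_one_iff.2 (neg_nonpos.2 (by positivity))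
  set c : ℂ := s + ((b - s.re : ℝ) : ℂ)
  have hcre : c.re = b := by simp [c]
  have hsc : ‖s - c‖ = b - s.re := by
    rw [sub_add_cancel_left, norm_neg, norm_real, Real.norm_of_nonneg (by linarith)]
  have hR : |R| = b - a := abs_of_nonneg (by linarith)
  have hre : ∀ z ∈ ball c |R|, a < z.re := fun z hz =>
    lt_re_of_mem_ball hz (by linarith)
  refine mul_exp_le_norm_of_ne_zero_on_ball (by positivity) hδ (hf.mono hre)
    (fun z hz => h0 z (hre z hz)) (hlow c hcre.ge) (fun z hz => ?_)
    (by linarith : ‖s - c‖ ≤ |R| - δ)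
  have hzs : ‖z‖ ≤ ‖s‖ + 2 * |R| := by
    have h1 : ‖z - c‖ < |R| := by simpa [dist_eq_norm] using hz
    have h2 := norm_sub_le_norm_sub_add_norm_sub z c s
    rw [norm_sub_rev c s] at h2
    linarith [norm_sub_norm_le z s]
  refine (hup z (hre z hz)).trans ?_
  rw [← Real.log_le_log_iff (Real.exp_pos _) (by positivity), Real.log_exp,
    Real.log_mul hm.ne' (Real.exp_pos _).ne', Real.log_exp]
  have hBz : B * ‖z‖ ≤ B * (‖s‖ + 2 * |R|) := by gcongr
  have hAs : 0 ≤ (A - B) * ‖s‖ := mul_nonneg (by simp only [A]; ring_nf; positivity) (norm_nonneg s)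
  linarith [le_abs_self (C - Real.log m)]

lemma exists_exp_neg_le_norm_riemannZeta₁ (hRH : RiemannHypothesis) {δ : ℝ} (hδ : 0 < δ) :
    ∃ K : ℝ, 0 ≤ K ∧ ∀ s : ℂ, 1 / 2 + δ ≤ s.re →
      Real.exp (-(K * (1 + ‖s‖))) ≤ ‖riemannZeta₁ s‖ := by
  obtain ⟨C, hC⟩ := exists_norm_riemannZeta₁_le_exp one_half_pos
  exact exists_exp_neg_le_norm_of_ne_zero (m := 1 / 4) (by norm_num) hδ zero_le_two
    differentiable_riemannZeta₁.differentiableOn (fun s hs => riemannZeta₁_ne_zero_of_RH hRH hs)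
    (fun s hs => hC s hs.le) fun s hs => one_fourth_le_norm_riemannZeta₁ hs

end BorelCaratheodory

section RiemannXi

open Complex

lemma differentiableAt_Gamma_of_re_pos {s : ℂ} (hs : 0 < s.re) : DifferentiableAt ℂ Gamma s :=
  differentiableAt_Gamma s fun m h => by
    rw [h, neg_re, natCast_re] at hs
    linarith [m.cast_nonneg (α := ℝ)]

/-- The archimedean factor `π ^ (-s / 2) Γ(1 + s / 2)` of Riemann's `ξ`. Writing `Γ(1 + s / 2)` for
`(s / 2) Γ(s / 2)` absorbs the trivial zero factor `s`. -/
noncomputable def xiGamma (s : ℂ) : ℂ := (Real.pi : ℂ) ^ (-s / 2) * Gamma (1 + s / 2)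

/-- Riemann's `ξ`-function `s (s - 1) / 2 * π ^ (-s / 2) Γ(s / 2) ζ(s)`, in the half-plane
`0 < re s`; at the poles of `Γ(1 + s / 2)` the value is junk. -/
noncomputable def riemannXi (s : ℂ) : ℂ := riemannZeta₁ s * xiGamma s

lemma xiGamma_ne_zero {s : ℂ} (hs : -2 < s.re) : xiGamma s ≠ 0 :=
  mul_ne_zero (cpow_ne_zero_iff.2 (Or.inl (by exact_mod_cast Real.pi_ne_zero)))
    (Gamma_ne_zero_of_re_pos (by simp; linarith))

lemma differentiableAt_xiGamma {s : ℂ} (hs : -2 < s.re) : DifferentiableAt ℂ xiGamma s := by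
  have hΓ : DifferentiableAt ℂ Gamma (1 + s / 2) :=
    differentiableAt_Gamma_of_re_pos (by simp; linarith)
  exact ((differentiableAt_id.neg.div_const 2).const_cpow
    (Or.inl (by exact_mod_cast Real.pi_ne_zero))).mul
    (hΓ.comp s (f := fun z => 1 + z / 2) (by fun_prop))

lemma differentiableAt_riemannXi {s : ℂ} (hs : -2 < s.re) : DifferentiableAt ℂ riemannXi s :=
  (differentiable_riemannZeta₁ s).mul (differentiableAt_xiGamma hs)

lemma riemannXi_ne_zero_of_RH (hRH : RiemannHypothesis) {s : ℂ} (hs : 1 / 2 < s.re) :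
    riemannXi s ≠ 0 :=
  mul_ne_zero (riemannZeta₁_ne_zero_of_RH hRH hs) (xiGamma_ne_zero (by linarith))

lemma riemannXi_eq_completedRiemannZeta {s : ℂ} (hs : 0 < s.re) (hs1 : s ≠ 1) :
    riemannXi s = s * (s - 1) / 2 * completedRiemannZeta s := by
  have h0 : s ≠ 0 := by rintro rfl; simp at hs
  rw [riemannXi, xiGamma, riemannZeta₁_eq_mul hs1, riemannZeta_def_of_ne_zero h0, add_comm 1,
    Gamma_add_one _ (div_ne_zero h0 two_ne_zero)]
  have := Gammaℝ_ne_zero_of_re_pos hs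
  field_simp
  rw [Gammaℝ]
  ring_nf

lemma riemannXi_one_sub {s : ℂ} (h0 : 0 < s.re) (h1 : s.re < 1) :
    riemannXi (1 - s) = riemannXi s := by
  have hs1 : s ≠ 1 := by rintro rfl; simp at h1
  have hs0 : 1 - s ≠ 1 := fun h => by simp [sub_eq_self.1 h] at h0
  rw [riemannXi_eq_completedRiemannZeta h0 hs1,
    riemannXi_eq_completedRiemannZeta (by simpa using h1) hs0, completedRiemannZeta_one_sub]
  ring

lemma xiGamma_conj (s : ℂ) : xiGamma (starRingEnd ℂ s) = starRingEnd ℂ (xiGamma s) := by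
  have h2 : starRingEnd ℂ 2 = 2 := map_ofNat (starRingEnd ℂ) 2
  have hπ : (Real.pi : ℂ) ^ (-(starRingEnd ℂ s) / 2) =
      starRingEnd ℂ ((Real.pi : ℂ) ^ (-s / 2)) := by
    have := cpow_conj (Real.pi : ℂ) (-s / 2) (by
      rw [arg_ofReal_of_nonneg Real.pi_pos.le]; exact Real.pi_ne_zero.symm)
    simpa [conj_ofReal, h2] using this
  rw [xiGamma, xiGamma, hπ, map_mul, ← Gamma_conj]
  simp [h2]

lemma riemannXi_conj (s : ℂ) : riemannXi (starRingEnd ℂ s) = starRingEnd ℂ (riemannXi s) := by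
  rw [riemannXi, riemannXi, riemannZeta₁_conj, xiGamma_conj, map_mul]

lemma norm_riemannXi_eq_of_re_add_re {s w : ℂ} (h0 : 0 < s.re) (h1 : s.re < 1)
    (hre : s.re + w.re = 1) (him : s.im = w.im) : ‖riemannXi w‖ = ‖riemannXi s‖ := by
  have hw : w = 1 - starRingEnd ℂ s := by
    apply Complex.ext
    · simp only [sub_re, one_re, conj_re]; linarith
    · simp [him]
  rw [hw, riemannXi_one_sub (by simpa using h0) (by simpa using h1), riemannXi_conj, norm_conj]

lemma norm_betaIntegral_le {a : ℂ} {δ : ℝ} (ha : 1 ≤ a.re) (hδ : 0 < δ) :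
    ‖betaIntegral a δ‖ ≤ 1 / δ := by
  have hint : IntervalIntegrable (fun x : ℝ => (1 - x) ^ (δ - 1)) MeasureTheory.volume 0 1 := by
    simpa using ((intervalIntegral.intervalIntegrable_rpow' (a := 0) (b := 1) (r := δ - 1)
      (by linarith)).comp_sub_left 1).symm
  have hval : ∫ x : ℝ in (0 : ℝ)..1, (1 - x) ^ (δ - 1) = 1 / δ := by
    rw [intervalIntegral.integral_comp_sub_left (fun x : ℝ => x ^ (δ - 1)) 1,
      integral_rpow (Or.inl (by linarith))]
    simp [Real.zero_rpow hδ.ne']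
  rw [betaIntegral, ← hval]
  refine intervalIntegral.norm_integral_le_of_norm_le zero_le_one ?_ hint
  filter_upwards [MeasureTheory.Measure.ae_ne MeasureTheory.volume 1] with x hx1 hx
  have hx' : 0 < 1 - x := sub_pos.2 (lt_of_le_of_ne hx.2 hx1)
  have hfactor : ‖((1 : ℂ) - x) ^ ((δ : ℂ) - 1)‖ = (1 - x) ^ (δ - 1) := by
    rw [show (1 : ℂ) - x = ((1 - x : ℝ) : ℂ) by push_cast; ring, norm_cpow_eq_rpow_re_of_pos hx']
    simp
  rw [norm_mul, norm_cpow_eq_rpow_re_of_pos hx.1, hfactor]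
  exact mul_le_of_le_one_left (by positivity) (Real.rpow_le_one hx.1.le hx.2 (by simpa using ha))

lemma norm_Gamma_mul_norm_Gamma_le {a : ℂ} {δ : ℝ} (ha : 1 ≤ a.re) (hδ : 0 < δ) :
    ‖Gamma a‖ * ‖Gamma δ‖ ≤ ‖Gamma (a + δ)‖ * (1 / δ) := by
  rw [← norm_mul, Gamma_mul_Gamma_eq_betaIntegral (by linarith) (by simpa using hδ), norm_mul]
  gcongr
  exact norm_betaIntegral_le ha hδ

lemma exists_norm_xiGamma_le {h : ℝ} (hh : 0 < h) :
    ∃ D : ℝ, 0 < D ∧ ∀ s : ℂ, 0 ≤ s.re → ‖xiGamma s‖ ≤ D * ‖xiGamma (s + h)‖ := by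
  have hΓ : 0 < ‖Gamma ((h / 2 : ℝ) : ℂ)‖ :=
    norm_pos_iff.2 (Gamma_ne_zero_of_re_pos (by simpa using hh))
  refine ⟨Real.pi ^ (h / 2) * (1 / (h / 2) / ‖Gamma ((h / 2 : ℝ) : ℂ)‖), by positivity,
    fun s hs => ?_⟩
  have hGamma : ‖Gamma (1 + s / 2)‖ ≤
      ‖Gamma (1 + (s + h) / 2)‖ * (1 / (h / 2) / ‖Gamma ((h / 2 : ℝ) : ℂ)‖) := by
    have h1 := norm_Gamma_mul_norm_Gamma_le (a := 1 + s / 2) (by simp; linarith) (half_pos hh)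
    rw [← mul_div_assoc, le_div_iff₀ hΓ]
    rwa [show 1 + s / 2 + ((h / 2 : ℝ) : ℂ) = 1 + (s + h) / 2 by push_cast; ring] at h1
  have hpi (z : ℂ) : ‖(Real.pi : ℂ) ^ (-z / 2)‖ = Real.pi ^ (-z.re / 2) := by
    simp [norm_cpow_eq_rpow_re_of_pos Real.pi_pos]
  have hshift : Real.pi ^ (-s.re / 2) = Real.pi ^ (h / 2) * Real.pi ^ (-(s + h).re / 2) := by
    rw [← Real.rpow_add Real.pi_pos, add_re, ofReal_re]; ring_nf
  rw [xiGamma, xiGamma, norm_mul, norm_mul, hpi, hpi, hshift]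
  calc _ ≤ Real.pi ^ (h / 2) * Real.pi ^ (-(s + h).re / 2) *
        (‖Gamma (1 + (s + h) / 2)‖ * (1 / (h / 2) / ‖Gamma ((h / 2 : ℝ) : ℂ)‖)) := by gcongr
    _ = _ := by ring

end RiemannXi

section XiMonotone

open Complex

lemma norm_le_of_norm_le_on_re_eq {f : ℂ → ℂ} {a b A B C M : ℝ} (hB : 0 ≤ B)
    (hdiff : ∀ s : ℂ, a ≤ s.re → DifferentiableAt ℂ f s)
    (hexp : ∀ s : ℂ, a ≤ s.re → ‖f s‖ ≤ Real.exp (A + B * ‖s‖))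
    (hbdd : ∀ s : ℂ, b ≤ s.re → ‖f s‖ ≤ M) (hline : ∀ s : ℂ, s.re = a → ‖f s‖ ≤ C)
    {s : ℂ} (hs : a ≤ s.re) : ‖f s‖ ≤ C := by
  have hre {z : ℂ} (hz : 0 ≤ z.re) : a ≤ (a + z).re := by simpa using hz
  have hdiff' {z : ℂ} (hz : 0 ≤ z.re) : DifferentiableAt ℂ (fun z => f (a + z)) z :=
    (hdiff _ (hre hz)).comp z (by fun_prop)
  have hmain : ‖f (a + (s - a))‖ ≤ C := by
    refine PhragmenLindelof.right_half_plane_of_bounded_on_real (f := fun z => f (a + z))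
      ⟨fun z hz => (hdiff' (le_of_lt hz)).differentiableWithinAt, fun z hz => ?_⟩
      ⟨1, one_lt_two, B, Asymptotics.IsBigO.of_bound (Real.exp (A + B * |a|)) ?_⟩
      ⟨M, eventually_map.2 ?_⟩ (fun y => hline _ (by simp)) (by simpa using hs)
    · rw [closure_setOfPred_lt_re] at hz
      exact (hdiff' hz).continuousAt.continuousWithinAt
    · refine eventually_inf_principal.2 (Eventually.of_forall fun z hz => ?_)
      have hnorm : ‖(a : ℂ) + z‖ ≤ |a| + ‖z‖ := by simpa using norm_add_le (a : ℂ) z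
      rw [Real.norm_of_nonneg (Real.exp_pos _).le, Real.rpow_one, ← Real.exp_add]
      refine (hexp _ (hre (le_of_lt hz))).trans (Real.exp_le_exp.2 ?_)
      linarith [mul_le_mul_of_nonneg_left hnorm hB]
    · filter_upwards [eventually_ge_atTop (b - a)] with x hx
      exact hbdd _ (by simp; linarith)
  simpa using hmain

lemma exists_norm_riemannXi_div_le {h : ℝ} (hh : 0 < h) :
    ∃ D : ℝ, 0 < D ∧ ∀ s : ℂ, 0 ≤ s.re →
      ‖riemannXi s / riemannXi (s + h)‖ ≤ D * (‖riemannZeta₁ s‖ / ‖riemannZeta₁ (s + h)‖) := by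
  obtain ⟨D, hD, hxi⟩ := exists_norm_xiGamma_le hh
  refine ⟨D, hD, fun s hs => ?_⟩
  have hpos : 0 < ‖xiGamma (s + h)‖ := norm_pos_iff.2 (xiGamma_ne_zero (by simp; linarith))
  rw [riemannXi, riemannXi, norm_div, norm_mul, norm_mul, mul_div_mul_comm, mul_comm D]
  gcongr
  exact (div_le_iff₀ hpos).2 (hxi s hs)

lemma exists_norm_riemannXi_div_le_exp (hRH : RiemannHypothesis) {h : ℝ} (h0 : 0 < h)
    (h1 : h < 1) : ∃ A B : ℝ, 0 ≤ B ∧ ∀ s : ℂ, (1 - h) / 2 ≤ s.re →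
      ‖riemannXi s / riemannXi (s + h)‖ ≤ Real.exp (A + B * ‖s‖) := by
  obtain ⟨C, hup⟩ := exists_norm_riemannZeta₁_le_exp (σ := (1 - h) / 2) (by linarith)
  obtain ⟨K, hK, hlow⟩ := exists_exp_neg_le_norm_riemannZeta₁ hRH (half_pos h0)
  obtain ⟨D, hD, hle⟩ := exists_norm_riemannXi_div_le h0
  refine ⟨Real.log D + C + K * (1 + h), 2 + K, by linarith, fun s hs => ?_⟩
  have hnorm : ‖s + h‖ ≤ ‖s‖ + h := by
    simpa [abs_of_pos h0] using norm_add_le s (h : ℂ)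
  calc ‖riemannXi s / riemannXi (s + h)‖
      ≤ D * (‖riemannZeta₁ s‖ / ‖riemannZeta₁ (s + h)‖) := hle s (by linarith)
    _ ≤ D * (Real.exp (C + 2 * ‖s‖) / Real.exp (-(K * (1 + (‖s‖ + h))))) := by
      gcongr
      · exact hup s hs
      · refine le_trans ?_ (hlow (s + h) (by simp; linarith))
        gcongr
    _ = Real.exp (Real.log D + C + K * (1 + h) + (2 + K) * ‖s‖) := by
      nth_rw 1 [← Real.exp_log hD]
      rw [← Real.exp_sub, ← Real.exp_add]
      ring_nf

lemma exists_norm_riemannXi_div_le_of_two_le_re {h : ℝ} (hh : 0 < h) :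
    ∃ M : ℝ, ∀ s : ℂ, 2 ≤ s.re → ‖riemannXi s / riemannXi (s + h)‖ ≤ M := by
  obtain ⟨D, hD, hle⟩ := exists_norm_riemannXi_div_le hh
  refine ⟨D * 8, fun s hs => (hle s (by linarith)).trans ?_⟩
  have hup := norm_riemannZeta₁_le_two_mul hs
  have hlow := norm_sub_one_div_four_le_norm_riemannZeta₁ (s := s + h) (by simp; linarith)
  have hmono : ‖s - 1‖ ≤ ‖s + h - 1‖ := by
    rw [← sq_le_sq₀ (norm_nonneg _) (norm_nonneg _), ← normSq_eq_norm_sq, ← normSq_eq_norm_sq,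
      normSq_apply, normSq_apply]
    simp only [sub_re, add_re, ofReal_re, one_re, sub_im, add_im, ofReal_im, one_im]
    nlinarith
  have hpos : 0 < ‖s - 1‖ := norm_pos_iff.2 fun h0 => by
    rw [sub_eq_zero.1 h0, one_re] at hs
    norm_num at hs
  gcongr
  rw [div_le_iff₀ (by linarith)]
  linarith

/-- The quotient `ξ(s) / ξ(s + h)` has modulus `1` on the line `re s = (1 - h) / 2` by the
functional equation, and Phragmén–Lindelöf propagates the bound to the right. -/
lemma norm_riemannXi_le_of_RH (hRH : RiemannHypothesis) {h : ℝ} (h0 : 0 < h) (h1 : h < 1)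
    {s : ℂ} (hs : 1 / 2 ≤ s.re) : ‖riemannXi s‖ ≤ ‖riemannXi (s + h)‖ := by
  obtain ⟨A, B, hB, hexp⟩ := exists_norm_riemannXi_div_le_exp hRH h0 h1
  obtain ⟨M, hM⟩ := exists_norm_riemannXi_div_le_of_two_le_re h0
  have hne {z : ℂ} (hz : (1 - h) / 2 ≤ z.re) : riemannXi (z + h) ≠ 0 :=
    riemannXi_ne_zero_of_RH hRH (by simp; linarith)
  have hdiff (z : ℂ) (hz : (1 - h) / 2 ≤ z.re) :
      DifferentiableAt ℂ (fun z => riemannXi z / riemannXi (z + h)) z :=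
    (differentiableAt_riemannXi (by linarith)).div
      ((differentiableAt_riemannXi (by simp; linarith)).comp z (by fun_prop)) (hne hz)
  have hline (z : ℂ) (hz : z.re = (1 - h) / 2) : ‖riemannXi z / riemannXi (z + h)‖ ≤ 1 := by
    rw [norm_div, div_le_one (norm_pos_iff.2 (hne hz.ge)), norm_riemannXi_eq_of_re_add_re (s := z)
      (w := z + h) (by linarith) (by linarith) (by simp [hz]; ring) (by simp)]
  have hs' : (1 - h) / 2 ≤ s.re := by linarith
  have hquot := norm_le_of_norm_le_on_re_eq hB hdiff hexp hM hline hs'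
  rwa [norm_div, div_le_one (norm_pos_iff.2 (hne hs'))] at hquot

lemma re_logDeriv_nonneg_of_norm_le {f : ℂ → ℂ} {s : ℂ} (hf : DifferentiableAt ℂ f s)
    (hmono : ∀ᶠ h : ℝ in nhdsWithin 0 (Set.Ioi 0), ‖f s‖ ≤ ‖f (s + h)‖) :
    0 ≤ (logDeriv f s).re := by
  have hd : HasDerivAt (fun h : ℝ => f (s + h)) (deriv f s) 0 := by
    have hs : HasDerivAt f (deriv f s) (s + ((0 : ℝ) : ℂ)) := by simpa using hf.hasDerivAt
    exact (hs.comp_const_add s _).comp_ofReal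
  have hsq : 0 ≤ 2 * inner ℝ (f (s + ((0 : ℝ) : ℂ))) (deriv f s) := by
    have hright : nhdsWithin (0 : ℝ) (Set.Ioi 0) ≤ nhdsWithin 0 {0}ᶜ :=
      nhdsWithin_mono 0 fun _ hx => ne_of_gt hx
    refine ge_of_tendsto (hd.norm_sq.tendsto_slope.mono_left hright) ?_
    filter_upwards [hmono, self_mem_nhdsWithin] with h hle hpos
    rw [slope_def_field, sub_zero, ofReal_zero, add_zero]
    exact div_nonneg (sub_nonneg.2 (pow_le_pow_left₀ (norm_nonneg _) hle 2)) (le_of_lt hpos)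
  simp only [ofReal_zero, add_zero, Complex.inner] at hsq
  rw [logDeriv_apply, div_eq_mul_inv, inv_def, ← mul_assoc, re_mul_ofReal]
  exact mul_nonneg (by linarith) (inv_nonneg.2 (normSq_nonneg _))

lemma re_logDeriv_riemannXi_nonneg (hRH : RiemannHypothesis) {s : ℂ} (hs : 1 / 2 ≤ s.re) :
    0 ≤ (logDeriv riemannXi s).re := by
  refine re_logDeriv_nonneg_of_norm_le (differentiableAt_riemannXi (by linarith)) ?_
  filter_upwards [Ioo_mem_nhdsGT one_pos] with h hh
  exact norm_riemannXi_le_of_RH hRH hh.1 hh.2 hs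

lemma differentiableAt_logDeriv_riemannXi (hRH : RiemannHypothesis) {s : ℂ}
    (hs : 1 / 2 < s.re) : DifferentiableAt ℂ (logDeriv riemannXi) s := by
  have hU : IsOpen {z : ℂ | 1 / 2 < z.re} := isOpen_setOf_lt_re _
  have hd : DifferentiableOn ℂ riemannXi {z : ℂ | 1 / 2 < z.re} := fun z hz =>
    (differentiableAt_riemannXi (lt_trans (by norm_num) hz)).differentiableWithinAt
  have hquot := (hd.deriv hU).div hd fun z hz => riemannXi_ne_zero_of_RH hRH hz
  exact hquot.differentiableAt (hU.mem_nhds hs)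

end XiMonotone

section ContourPairing

open Complex Metric

lemma circleAverage_conj (f : ℂ → ℂ) (c : ℂ) (R : ℝ) :
    Real.circleAverage (fun z => starRingEnd ℂ (f z)) c R
      = starRingEnd ℂ (Real.circleAverage f c R) := by
  rw [Real.circleAverage_def, Real.circleAverage_def,
    intervalIntegral.integral_of_le (by positivity),
    intervalIntegral.integral_of_le (by positivity), integral_conj, real_smul, real_smul,
    map_mul, conj_ofReal]

lemma norm_circleAverage_le {f : ℂ → ℂ} {g : ℂ → ℝ} {c : ℂ} {R : ℝ} (hR : 0 ≤ R)
    (hg : CircleIntegrable g c R) (h : ∀ z ∈ sphere c R, ‖f z‖ ≤ g z) :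
    ‖Real.circleAverage f c R‖ ≤ Real.circleAverage g c R := by
  rw [Real.circleAverage_def, Real.circleAverage_def, norm_smul, smul_eq_mul,
    Real.norm_of_nonneg (by positivity)]
  gcongr
  exact intervalIntegral.norm_integral_le_of_norm_le (by positivity)
    (Eventually.of_forall fun θ _ => h _ (circleMap_mem_sphere _ hR _)) hg

lemma circleAverage_conj_eq_zero {F : ℂ → ℂ} {c : ℂ} {R : ℝ}
    (hF : DiffContOnCl ℂ F (ball c |R|)) (hFc : F c = 0) :
    Real.circleAverage (fun z => starRingEnd ℂ (F z)) c R = 0 := by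
  rw [circleAverage_conj, hF.circleAverage, hFc, map_zero]

lemma circleAverage_div_sub_center_pow {Q : ℂ → ℂ} {c : ℂ} {R : ℝ} (hR : 0 < R)
    (hQ : DiffContOnCl ℂ Q (ball c R)) (n : ℕ) :
    Real.circleAverage (fun z => Q z / (z - c) ^ n) c R = iteratedDeriv n Q c / n.factorial := by
  have hcongr : (∮ z in C(c, R), (z - c)⁻¹ • (Q z / (z - c) ^ n))
      = ∮ z in C(c, R), (1 / (z - c) ^ (n + 1)) • Q z :=
    circleIntegral.integral_congr hR.le fun z _ => by
      rw [smul_eq_mul, smul_eq_mul, pow_succ', inv_mul_eq_div, div_div, mul_comm (_ ^ n),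
        one_div_mul_eq_div]
  rw [Real.circleAverage_eq_circleIntegral hR.ne', hcongr,
    hQ.circleIntegral_one_div_sub_center_pow_smul hR n, smul_eq_mul, smul_eq_mul,
    div_mul_eq_mul_div, mul_div_assoc, inv_mul_cancel_left₀ two_pi_I_ne_zero]

lemma sq_sub_conj_mul_ne_zero {a w : ℂ} {R : ℝ} (ha : ‖a‖ < R) (hw : ‖w‖ ≤ R) :
    (R : ℂ) ^ 2 - starRingEnd ℂ a * w ≠ 0 := fun h0 => by
  have hR : 0 < R := (norm_nonneg a).trans_lt ha
  have hnorm := congrArg norm (sub_eq_zero.1 h0)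
  rw [norm_mul, norm_conj, norm_pow, norm_real, Real.norm_of_nonneg hR.le] at hnorm
  nlinarith [norm_nonneg a]

lemma conj_sq_sub_conj_mul {a w : ℂ} {R : ℝ} (hw : ‖w‖ = R) :
    starRingEnd ℂ ((R : ℂ) ^ 2 - starRingEnd ℂ a * w) = starRingEnd ℂ w * (w - a) := by
  have hsq : starRingEnd ℂ w * w = (R : ℂ) ^ 2 := by rw [conj_mul', hw]
  rw [map_sub, map_mul, conj_conj, map_pow, conj_ofReal, ← hsq]
  ring

/-- On the circle `conj (z - c) = R ^ 2 / (z - c)`, so the integrand is the conjugate of a function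
holomorphic in the disc and vanishing at `c`. -/
lemma circleAverage_conj_div_eq_zero {g : ℂ → ℂ} {c p : ℂ} {R : ℝ} (hp : p ∈ ball c R)
    (hg : DiffContOnCl ℂ g (ball c R)) (n : ℕ) {k : ℕ} (hk : k ≠ 0) :
    Real.circleAverage (fun z => starRingEnd ℂ (g z) / ((z - c) ^ n * (z - p) ^ k)) c R = 0 := by
  have hR : 0 < R := pos_of_mem_ball hp
  set a : ℂ := starRingEnd ℂ (p - c) with ha
  have hden {z : ℂ} (hz : z ∈ closedBall c R) :
      ((R : ℂ) ^ 2) ^ n * ((R : ℂ) ^ 2 - a * (z - c)) ^ k ≠ 0 :=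
    mul_ne_zero (pow_ne_zero _ (pow_ne_zero _ (by exact_mod_cast hR.ne'))) (pow_ne_zero _
      (sq_sub_conj_mul_ne_zero (mem_ball_iff_norm.1 hp) (mem_closedBall_iff_norm.1 hz)))
  set F : ℂ → ℂ := fun z => g z * ((z - c) ^ (n + k) /
    (((R : ℂ) ^ 2) ^ n * ((R : ℂ) ^ 2 - a * (z - c)) ^ k)) with hF
  have hFd : DiffContOnCl ℂ F (ball c |R|) := by
    rw [abs_of_pos hR]
    refine DiffContOnCl.mk_ball (hg.1.mul fun z hz => ?_) (hg.continuousOn_ball.mul fun z hz => ?_)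
    · exact DifferentiableAt.differentiableWithinAt (DifferentiableAt.div (by fun_prop)
        (by fun_prop) (hden (ball_subset_closedBall hz)))
    · exact ContinuousAt.continuousWithinAt (ContinuousAt.div (by fun_prop) (by fun_prop) (hden hz))
  rw [← circleAverage_conj_eq_zero hFd (by simp [hF, hk])]
  refine Real.circleAverage_congr_sphere fun z hz => ?_
  rw [abs_of_pos hR] at hz
  have hzc : ‖z - c‖ = R := mem_sphere_iff_norm.1 hz
  have hconj : starRingEnd ℂ (z - c) ≠ 0 := (map_ne_zero _).2 (norm_pos_iff.1 (hzc ▸ hR))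
  have hsq : (R : ℂ) ^ 2 = starRingEnd ℂ (z - c) * (z - c) := by rw [conj_mul', hzc]
  simp only [hF, ha, map_mul, map_div₀, map_pow, conj_sq_sub_conj_mul hzc, conj_ofReal,
    sub_sub_sub_cancel_right]
  rw [hsq, mul_pow, mul_pow, pow_add, ← mul_div_mul_left _ ((z - c) ^ n * (z - p) ^ k)
    (mul_ne_zero (pow_ne_zero n hconj) (pow_ne_zero k hconj)), ← mul_div_assoc]
  ring

lemma div_eq_re_sub_conj_sub_div {q g A B d w : ℂ} (hd : d ≠ 0) (hw : w ≠ 0)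
    (hq : w ^ 2 * q = g - A - w * B) :
    q / d = (2 * g.re : ℂ) / (d * w ^ 2) - starRingEnd ℂ g / (d * w ^ 2) - A / (d * w ^ 2)
      - B / (d * w ^ 1) := by
  have htwo : (2 * g.re : ℂ) = g + starRingEnd ℂ g := by
    rw [add_conj]
    push_cast
    ring
  rw [← mul_div_cancel_left₀ q (pow_ne_zero 2 hw), hq, htwo]
  field_simp
  ring

/-- Replacing `Q` by `(2 re G - conj G - A - (z - p) B) / (z - p) ^ 2`, all terms but the first
average to zero. -/
lemma circleAverage_div_eq_circleAverage_re_div {G Q : ℂ → ℂ} {c p A B : ℂ} {R : ℝ}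
    (hp : p ∈ ball c R) (hG : DiffContOnCl ℂ G (ball c R))
    (hQG : ∀ z ∈ sphere c R, (z - p) ^ 2 * Q z = G z - A - (z - p) * B) (n : ℕ) :
    Real.circleAverage (fun z => Q z / (z - c) ^ n) c R
      = Real.circleAverage (fun z => (2 * (G z).re : ℂ) / ((z - c) ^ n * (z - p) ^ 2)) c R := by
  have hR : 0 < R := pos_of_mem_ball hp
  have hzc {z : ℂ} (hz : z ∈ sphere c R) : z - c ≠ 0 := sub_ne_zero.2 (ne_of_mem_sphere hz hR.ne')
  have hzp {z : ℂ} (hz : z ∈ sphere c R) : z - p ≠ 0 := sub_ne_zero.2 fun h =>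
    (mem_ball.1 hp).ne (h ▸ mem_sphere.1 hz)
  have hGc : ContinuousOn G (sphere c R) := hG.continuousOn_ball.mono sphere_subset_closedBall
  have hint {f : ℂ → ℂ} (hf : ContinuousOn f (sphere c R)) (m : ℕ) :
      CircleIntegrable (fun z => f z / ((z - c) ^ n * (z - p) ^ m)) c R :=
    ContinuousOn.circleIntegrable hR.le (hf.div (by fun_prop) fun z hz =>
      mul_ne_zero (pow_ne_zero _ (hzc hz)) (pow_ne_zero _ (hzp hz)))
  have hconj := hint (f := fun z => starRingEnd ℂ (G z)) (continuous_conj.comp_continuousOn hGc) 2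
  have hre := hint (f := fun z => 2 * (G z).re) (continuousOn_const.mul
    (continuous_ofReal.comp_continuousOn (continuous_re.comp_continuousOn hGc))) 2
  have hA := circleAverage_conj_div_eq_zero (g := fun _ => starRingEnd ℂ A) (k := 2) hp
    diffContOnCl_const n two_ne_zero
  have hB := circleAverage_conj_div_eq_zero (g := fun _ => starRingEnd ℂ B) (k := 1) hp
    diffContOnCl_const n one_ne_zero
  simp only [conj_conj] at hA hB
  have hcongr : Real.circleAverage (fun z => Q z / (z - c) ^ n) c R = Real.circleAverage (fun z =>
      (2 * (G z).re : ℂ) / ((z - c) ^ n * (z - p) ^ 2)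
        - starRingEnd ℂ (G z) / ((z - c) ^ n * (z - p) ^ 2)
        - A / ((z - c) ^ n * (z - p) ^ 2) - B / ((z - c) ^ n * (z - p) ^ 1)) c R := by
    refine Real.circleAverage_congr_sphere fun z hz => ?_
    rw [abs_of_pos hR] at hz
    exact div_eq_re_sub_conj_sub_div (pow_ne_zero n (hzc hz)) (hzp hz) (hQG z hz)
  have hintA := hint (f := fun _ => A) continuousOn_const 2
  have hintB := hint (f := fun _ => B) continuousOn_const 1
  rw [hcongr, Real.circleAverage_fun_sub (by exact (hre.sub hconj).sub hintA) hintB,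
    Real.circleAverage_fun_sub (by exact hre.sub hconj) hintA,
    Real.circleAverage_fun_sub hre hconj, hA, hB,
    circleAverage_conj_div_eq_zero hp hG n two_ne_zero, sub_zero, sub_zero, sub_zero]

lemma circleAverage_poissonKernel_mul_re {G : ℂ → ℂ} {c p : ℂ} {R : ℝ} (hp : p ∈ ball c R)
    (hG : DiffContOnCl ℂ G (ball c R)) :
    CircleIntegrable (fun z => poissonKernel c p z * (G z).re) c R ∧
      Real.circleAverage (fun z => poissonKernel c p z * (G z).re) c R = (G p).re := by
  have hR : 0 < R := pos_of_mem_ball hp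
  have hker : ContinuousOn (poissonKernel c p) (sphere c R) := by
    have := continuousOn_herglotzRieszKernel_sphere hp
    rw [abs_of_pos hR] at this
    rw [poissonKernel_eq_re_herglotzRieszKernel]
    exact continuous_re.comp_continuousOn this
  have hGc : ContinuousOn G (sphere c R) := hG.continuousOn_ball.mono sphere_subset_closedBall
  refine ⟨(hker.mul (continuous_re.comp_continuousOn hGc)).circleIntegrable hR.le, ?_⟩
  rw [← hG.circleAverage_poissonKernel_smul hp]
  exact (congrArg (Real.circleAverage · c R) (funext fun z => by simp)).trans
    (reCLM.circleAverage_comp_comm ((hker.smul hGc).circleIntegrable hR.le))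

/-- On the circle `‖2 re G / ((z - c) ^ n (z - p) ^ 2)‖` is a constant multiple of the Poisson
kernel at `p` times `re G`. -/
lemma norm_iteratedDeriv_mul_le_of_re_nonneg {G Q : ℂ → ℂ} {c p A B : ℂ} {R : ℝ}
    (hp : p ∈ ball c R) (hG : DiffContOnCl ℂ G (ball c R)) (hQ : DiffContOnCl ℂ Q (ball c R))
    (hre : ∀ z ∈ sphere c R, 0 ≤ (G z).re)
    (hQG : ∀ z ∈ sphere c R, (z - p) ^ 2 * Q z = G z - A - (z - p) * B) (n : ℕ) :
    ‖iteratedDeriv n Q c‖ / n.factorial * R ^ n * (R ^ 2 - ‖p - c‖ ^ 2) ≤ 2 * (G p).re := by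
  have hR : 0 < R := pos_of_mem_ball hp
  set T : ℝ := R ^ 2 - ‖p - c‖ ^ 2 with hT
  have hTpos : 0 < T := sub_pos.2 (pow_lt_pow_left₀ (mem_ball_iff_norm.1 hp) (norm_nonneg _)
    two_ne_zero)
  obtain ⟨hint, hval⟩ := circleAverage_poissonKernel_mul_re hp hG
  have hbound : ‖iteratedDeriv n Q c‖ / n.factorial ≤ 2 / (R ^ n * T) * (G p).re := by
    rw [← hval, ← smul_eq_mul (2 / _), ← Real.circleAverage_smul, ← norm_natCast, ← norm_div,
      ← circleAverage_div_sub_center_pow hR hQ n,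
      circleAverage_div_eq_circleAverage_re_div hp hG hQG]
    refine norm_circleAverage_le hR.le hint.const_smul fun z hz => le_of_eq ?_
    have hzp : 0 < ‖z - p‖ := norm_pos_iff.2 (sub_ne_zero.2 fun h =>
      (mem_ball.1 hp).ne (h ▸ mem_sphere.1 hz))
    simp only [Pi.smul_apply, smul_eq_mul, poissonKernel, sub_sub_sub_cancel_right, norm_div,
      norm_mul, norm_pow, norm_ofNat, norm_real, Real.norm_of_nonneg (hre z hz),
      mem_sphere_iff_norm.1 hz, ← hT]
    field_simp
  calc ‖iteratedDeriv n Q c‖ / n.factorial * R ^ n * T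
      = ‖iteratedDeriv n Q c‖ / n.factorial * (R ^ n * T) := by ring
    _ ≤ 2 / (R ^ n * T) * (G p).re * (R ^ n * T) := by gcongr
    _ = 2 * (G p).re := by field_simp

lemma norm_iteratedDeriv_mul_le_of_re_nonneg_halfPlane {G Q : ℂ → ℂ} {A B : ℂ} {q : ℝ}
    (hq : 0 < q) (hG : DifferentiableOn ℂ G {z | 0 < z.re})
    (hQ : DifferentiableOn ℂ Q {z | 0 < z.re}) (hre : ∀ z : ℂ, 0 < z.re → 0 ≤ (G z).re)
    (hQG : ∀ z : ℂ, 0 < z.re → (z - q) ^ 2 * Q z = G z - A - (z - q) * B) (n : ℕ)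
    {x : ℝ} (hx : q < x) :
    ‖iteratedDeriv n Q x‖ / n.factorial * x ^ n * (q * (2 * x - q)) ≤ 2 * (G q).re := by
  have hnorm : ‖(q : ℂ) - x‖ = x - q := by
    rw [← ofReal_sub, norm_real, Real.norm_eq_abs, abs_sub_comm, abs_of_pos (sub_pos.2 hx)]
  have hlim : Tendsto (fun R : ℝ => ‖iteratedDeriv n Q x‖ / n.factorial * R ^ n *
      (R ^ 2 - ‖(q : ℂ) - x‖ ^ 2)) (nhdsWithin x (Set.Iio x))
      (nhds (‖iteratedDeriv n Q x‖ / n.factorial * x ^ n * (q * (2 * x - q)))) := by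
    have hcont : Continuous fun R : ℝ => ‖iteratedDeriv n Q x‖ / n.factorial * R ^ n *
      (R ^ 2 - ‖(q : ℂ) - x‖ ^ 2) := by fun_prop
    convert (hcont.tendsto x).mono_left nhdsWithin_le_nhds using 2
    rw [hnorm]
    ring
  refine le_of_tendsto hlim ?_
  filter_upwards [Ioo_mem_nhdsLT (sub_lt_self x hq)] with R hR
  have hsub : closedBall (x : ℂ) R ⊆ {z | 0 < z.re} := fun z hz => by
    have h := (abs_le.1 ((abs_re_le_norm _).trans (mem_closedBall_iff_norm.1 hz))).1
    rw [sub_re, ofReal_re] at h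
    exact (by linarith [hR.2] : 0 < z.re)
  have hsphere {z : ℂ} (hz : z ∈ sphere (x : ℂ) R) : 0 < z.re := hsub (sphere_subset_closedBall hz)
  exact norm_iteratedDeriv_mul_le_of_re_nonneg (mem_ball_iff_norm.2 (hnorm ▸ hR.1))
    (hG.diffContOnCl_ball hsub) (hQ.diffContOnCl_ball hsub) (fun z hz => hre z (hsphere hz))
    (fun z hz => hQG z (hsphere hz)) n

end ContourPairing

section PostWidder

open Complex MeasureTheory Set Topology

lemma integrableOn_pow_mul_exp_neg (n : ℕ) {r : ℝ} (hr : 0 < r) :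
    IntegrableOn (fun u : ℝ => u ^ n * Real.exp (-(r * u))) (Ioi 0) :=
  (integrableOn_rpow_mul_exp_neg_mul_rpow (s := n) (p := 1) (b := r)
    (neg_one_lt_zero.trans_le n.cast_nonneg) one_pos hr).congr_fun (fun u _ => by simp)
    measurableSet_Ioi

lemma integral_pow_mul_exp_neg (n : ℕ) {r : ℝ} (hr : 0 < r) :
    ∫ u in Ioi (0 : ℝ), u ^ n * Real.exp (-(r * u)) = n.factorial / r ^ (n + 1) := by
  have hval := Real.integral_rpow_mul_exp_neg_mul_Ioi (a := (n + 1 : ℕ)) (r := r)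
    (by positivity) hr
  rw [Real.rpow_natCast, Nat.cast_add_one, Real.Gamma_nat_eq_factorial, div_pow, one_pow,
    one_div_mul_eq_div] at hval
  rw [← hval]
  exact setIntegral_congr_fun measurableSet_Ioi fun u _ => by simp

/-- The density on `(0, ∞)` of the Gamma distribution with shape `n + 1` and rate `x`, which is the
kernel of the Post–Widder inversion formula. -/
noncomputable def postWidderKernel (n : ℕ) (x u : ℝ) : ℝ :=
  x ^ (n + 1) / n.factorial * (u ^ n * Real.exp (-(x * u)))

lemma integrableOn_pow_mul_postWidderKernel (m n : ℕ) {x : ℝ} (hx : 0 < x) :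
    IntegrableOn (fun u => u ^ m * postWidderKernel n x u) (Ioi 0) :=
  IntegrableOn.congr_fun ((integrableOn_pow_mul_exp_neg (n + m) hx).const_mul
    (x ^ (n + 1) / n.factorial)) (fun u _ => by rw [postWidderKernel]; ring) measurableSet_Ioi

lemma integral_pow_mul_postWidderKernel (m n : ℕ) {x : ℝ} (hx : 0 < x) :
    ∫ u in Ioi (0 : ℝ), u ^ m * postWidderKernel n x u
      = (n + m).factorial / (n.factorial * x ^ m) := by
  calc ∫ u in Ioi (0 : ℝ), u ^ m * postWidderKernel n x u
      = ∫ u in Ioi (0 : ℝ),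
          x ^ (n + 1) / n.factorial * (u ^ (n + m) * Real.exp (-(x * u))) :=
        setIntegral_congr_fun measurableSet_Ioi fun u _ => by
          simp only [postWidderKernel]; ring
    _ = x ^ (n + 1) / n.factorial * ((n + m).factorial / x ^ (n + m + 1)) := by
        rw [integral_const_mul, integral_pow_mul_exp_neg _ hx]
    _ = (n + m).factorial / (n.factorial * x ^ m) := by
        rw [div_mul_div_comm, show n + m + 1 = n + 1 + m by ring, pow_add x (n + 1) m]
        field_simp

lemma integrableOn_postWidderKernel (n : ℕ) {x : ℝ} (hx : 0 < x) :
    IntegrableOn (postWidderKernel n x) (Ioi 0) := by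
  simpa using integrableOn_pow_mul_postWidderKernel 0 n hx

lemma integral_postWidderKernel (n : ℕ) {x : ℝ} (hx : 0 < x) :
    ∫ u in Ioi (0 : ℝ), postWidderKernel n x u = 1 := by
  have h := integral_pow_mul_postWidderKernel 0 n hx
  simpa [div_self (Nat.cast_ne_zero.2 n.factorial_ne_zero : (n.factorial : ℝ) ≠ 0)] using h

lemma sq_sub_mul_eq (u a k : ℝ) :
    (u - a) ^ 2 * k = u ^ 2 * k - 2 * a * (u ^ 1 * k) + a ^ 2 * k := by ring

lemma integrableOn_sq_sub_mul_postWidderKernel (n : ℕ) {x : ℝ} (hx : 0 < x) (a : ℝ) :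
    IntegrableOn (fun u => (u - a) ^ 2 * postWidderKernel n x u) (Ioi 0) := by
  simp only [sq_sub_mul_eq]
  exact ((integrableOn_pow_mul_postWidderKernel 2 n hx).sub
    ((integrableOn_pow_mul_postWidderKernel 1 n hx).const_mul _)).add
    ((integrableOn_postWidderKernel n hx).const_mul _)

lemma integral_sq_sub_mul_postWidderKernel (n : ℕ) {x : ℝ} (hx : 0 < x) (a : ℝ) :
    ∫ u in Ioi (0 : ℝ), (u - a) ^ 2 * postWidderKernel n x u
      = (n + 1) * (n + 2) / x ^ 2 - 2 * a * ((n + 1) / x) + a ^ 2 := by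
  have h2 := integrableOn_pow_mul_postWidderKernel 2 n hx
  have h1 := (integrableOn_pow_mul_postWidderKernel 1 n hx).const_mul (2 * a)
  have hfac : (n.factorial : ℝ) ≠ 0 := Nat.cast_ne_zero.2 n.factorial_ne_zero
  simp only [sq_sub_mul_eq]
  rw [integral_add (by exact h2.sub h1) ((integrableOn_postWidderKernel n hx).const_mul _),
    integral_sub h2 h1, integral_const_mul, integral_const_mul, integral_postWidderKernel n hx,
    integral_pow_mul_postWidderKernel 2 n hx, integral_pow_mul_postWidderKernel 1 n hx,
    Nat.factorial_succ (n + 1), Nat.factorial_succ n]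
  push_cast
  field_simp
  ring

lemma exists_norm_sub_le_of_bounded {F : ℝ → ℂ} {C u₀ : ℝ} (hc : ContinuousOn F (Ici 0))
    (hb : ∀ u, 0 ≤ u → ‖F u‖ ≤ C) (hu₀ : 0 ≤ u₀) {ε : ℝ} (hε : 0 < ε) :
    ∃ K, 0 ≤ K ∧ ∀ u, 0 ≤ u → ‖F u - F u₀‖ ≤ ε + K * (u - u₀) ^ 2 := by
  have hC : 0 ≤ C := (norm_nonneg _).trans (hb 0 le_rfl)
  obtain ⟨δ, hδ, hnear⟩ := Metric.continuousWithinAt_iff.1 (hc u₀ hu₀) ε hε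
  refine ⟨2 * C / δ ^ 2, by positivity, fun u hu => ?_⟩
  rcases lt_or_ge (dist u u₀) δ with hd | hd
  · have := dist_eq_norm (F u) (F u₀) ▸ hnear hu hd
    have : 0 ≤ 2 * C / δ ^ 2 * (u - u₀) ^ 2 := by positivity
    linarith
  · have hsq : δ ^ 2 ≤ (u - u₀) ^ 2 := by
      rw [← sq_abs (u - u₀)]
      exact pow_le_pow_left₀ hδ.le hd 2
    calc ‖F u - F u₀‖ ≤ 2 * C := by linarith [norm_sub_le (F u) (F u₀), hb u hu, hb u₀ hu₀]
      _ = 2 * C / δ ^ 2 * δ ^ 2 := by field_simp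
      _ ≤ 2 * C / δ ^ 2 * (u - u₀) ^ 2 := by gcongr
      _ ≤ ε + 2 * C / δ ^ 2 * (u - u₀) ^ 2 := by linarith

lemma integrableOn_postWidderKernel_mul {F : ℝ → ℂ} {C : ℝ} (hc : ContinuousOn F (Ici 0))
    (hb : ∀ u, 0 ≤ u → ‖F u‖ ≤ C) (n : ℕ) {x : ℝ} (hx : 0 < x) :
    IntegrableOn (fun u => (postWidderKernel n x u : ℂ) * F u) (Ioi 0) :=
  (integrableOn_postWidderKernel n hx).ofReal.mul_bdd
    ((hc.mono Ioi_subset_Ici_self).aestronglyMeasurable measurableSet_Ioi)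
    ((ae_restrict_mem measurableSet_Ioi).mono fun u hu => hb u (le_of_lt hu))

lemma norm_integral_postWidderKernel_mul_sub_le {F : ℝ → ℂ} {w : ℂ} {a ε K x : ℝ} {n : ℕ}
    (hx : 0 < x) (hF : IntegrableOn (fun u => (postWidderKernel n x u : ℂ) * F u) (Ioi 0))
    (hle : ∀ u, 0 ≤ u → ‖F u - w‖ ≤ ε + K * (u - a) ^ 2) :
    ‖(∫ u in Ioi (0 : ℝ), (postWidderKernel n x u : ℂ) * F u) - w‖
      ≤ ε + K * ((n + 1) * (n + 2) / x ^ 2 - 2 * a * ((n + 1) / x) + a ^ 2) := by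
  have hker := integrableOn_postWidderKernel n hx
  have hw : w = ∫ u in Ioi (0 : ℝ), (postWidderKernel n x u : ℂ) * w := by
    rw [integral_mul_const, integral_complex_ofReal, integral_postWidderKernel n hx, ofReal_one,
      one_mul]
  have hsq := integrableOn_sq_sub_mul_postWidderKernel n hx a
  have hconst : IntegrableOn (fun u => (postWidderKernel n x u : ℂ) * w) (Ioi 0) :=
    hker.ofReal.mul_const w
  calc ‖(∫ u in Ioi (0 : ℝ), (postWidderKernel n x u : ℂ) * F u) - w‖
      = ‖∫ u in Ioi (0 : ℝ),
          ((postWidderKernel n x u : ℂ) * F u - (postWidderKernel n x u : ℂ) * w)‖ := by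
        rw [integral_sub hF hconst, ← hw]
    _ ≤ ∫ u in Ioi (0 : ℝ), (ε * postWidderKernel n x u
          + K * ((u - a) ^ 2 * postWidderKernel n x u)) := by
        refine norm_integral_le_of_norm_le ((hker.const_mul _).add (hsq.const_mul _)) ?_
        filter_upwards [ae_restrict_mem measurableSet_Ioi] with u (hu : 0 < u)
        have hnonneg : 0 ≤ postWidderKernel n x u := by
          rw [postWidderKernel]; positivity
        rw [← mul_sub, norm_mul, norm_real, Real.norm_of_nonneg hnonneg]
        calc _ ≤ postWidderKernel n x u * (ε + K * (u - a) ^ 2) := by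
              gcongr
              exact hle u hu.le
          _ = _ := by ring
    _ = _ := by
        rw [integral_add (hker.const_mul _) (hsq.const_mul _), integral_const_mul,
          integral_const_mul, integral_postWidderKernel n hx,
          integral_sq_sub_mul_postWidderKernel n hx, mul_one]

lemma tendsto_integral_postWidderKernel_mul {F : ℝ → ℂ} {C u₀ : ℝ} (hc : ContinuousOn F (Ici 0))
    (hb : ∀ u, 0 ≤ u → ‖F u‖ ≤ C) (hu₀ : 0 < u₀) :
    Tendsto (fun n : ℕ => ∫ u in Ioi (0 : ℝ), (postWidderKernel n (n / u₀) u : ℂ) * F u)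
      atTop (𝓝 (F u₀)) := by
  have hvar : Tendsto (fun n : ℕ => u₀ ^ 2 * ((n : ℝ)⁻¹ + 2 * (n : ℝ)⁻¹ ^ 2)) atTop (𝓝 0) := by
    have hinv : Tendsto (fun n : ℕ => (n : ℝ)⁻¹) atTop (𝓝 0) := tendsto_inv_atTop_nhds_zero_nat
    simpa using (hinv.add ((hinv.pow 2).const_mul 2)).const_mul (u₀ ^ 2)
  refine Metric.tendsto_atTop'.2 fun ε hε => ?_
  obtain ⟨K, -, hK⟩ := exists_norm_sub_le_of_bounded hc hb hu₀.le (half_pos hε)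
  have hsmall := (mul_zero K ▸ hvar.const_mul K).eventually (gt_mem_nhds (half_pos hε))
  obtain ⟨N, hN⟩ := eventually_atTop.1 (hsmall.and (eventually_gt_atTop 0))
  refine ⟨N, fun n hn => ?_⟩
  obtain ⟨hlt, hpos⟩ := hN n hn.le
  have : (0 : ℝ) < n := Nat.cast_pos.2 hpos
  have hx : (n : ℝ) / u₀ > 0 := by positivity
  have hmoment : ((n : ℝ) + 1) * (n + 2) / (n / u₀) ^ 2 - 2 * u₀ * ((n + 1) / (n / u₀)) + u₀ ^ 2
      = u₀ ^ 2 * ((n : ℝ)⁻¹ + 2 * (n : ℝ)⁻¹ ^ 2) := by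
    field_simp
    ring
  have hle := norm_integral_postWidderKernel_mul_sub_le hx
    (integrableOn_postWidderKernel_mul hc hb n hx) hK
  rw [hmoment] at hle
  rw [dist_eq_norm]
  linarith

section Laplace

variable {E : ℝ → ℂ} {C a : ℝ}

lemma norm_laplace_integrand_le (hb : ∀ u, 0 ≤ u → ‖E u‖ ≤ C * Real.exp (a * u)) (n : ℕ) {z : ℂ}
    {b u : ℝ} (hbz : b ≤ z.re) (hu : 0 ≤ u) :
    ‖(u : ℂ) ^ n * E u * exp (-(z * u))‖ ≤ C * (u ^ n * Real.exp (-((b - a) * u))) := by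
  have hC : 0 ≤ C := by simpa using (norm_nonneg _).trans (hb 0 le_rfl)
  rw [norm_mul, norm_mul, norm_pow, norm_real, Real.norm_of_nonneg hu, norm_exp]
  have hexp : (-(z * u)).re ≤ -(b * u) := by
    rw [neg_re, re_mul_ofReal]
    exact neg_le_neg (mul_le_mul_of_nonneg_right hbz hu)
  calc u ^ n * ‖E u‖ * Real.exp (-(z * u)).re
      ≤ u ^ n * (C * Real.exp (a * u)) * Real.exp (-(b * u)) := by
        have := hb u hu
        gcongr
    _ = C * (u ^ n * Real.exp (-((b - a) * u))) := by
        rw [show -((b - a) * u) = a * u + -(b * u) by ring, Real.exp_add]; ring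

lemma aestronglyMeasurable_laplace_integrand (hc : ContinuousOn E (Ici 0)) (n : ℕ) (z : ℂ) :
    AEStronglyMeasurable (fun u : ℝ => (u : ℂ) ^ n * E u * exp (-(z * u)))
      (volume.restrict (Ioi 0)) := by
  refine ContinuousOn.aestronglyMeasurable ?_ measurableSet_Ioi
  have : ContinuousOn E (Ioi 0) := hc.mono Ioi_subset_Ici_self
  fun_prop

lemma integrableOn_laplace_integrand (hc : ContinuousOn E (Ici 0))
    (hb : ∀ u, 0 ≤ u → ‖E u‖ ≤ C * Real.exp (a * u)) (n : ℕ) {z : ℂ} (hz : a < z.re) :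
    IntegrableOn (fun u : ℝ => (u : ℂ) ^ n * E u * exp (-(z * u))) (Ioi 0) := by
  refine Integrable.mono' ((integrableOn_pow_mul_exp_neg n (sub_pos.2 hz)).const_mul C)
    (aestronglyMeasurable_laplace_integrand hc n z) ?_
  filter_upwards [ae_restrict_mem measurableSet_Ioi] with u hu
  exact norm_laplace_integrand_le hb n le_rfl (le_of_lt hu)

lemma hasDerivAt_laplace (hc : ContinuousOn E (Ici 0))
    (hb : ∀ u, 0 ≤ u → ‖E u‖ ≤ C * Real.exp (a * u)) (n : ℕ) {z : ℂ} (hz : a < z.re) :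
    HasDerivAt (fun w : ℂ => ∫ u in Ioi (0 : ℝ), (u : ℂ) ^ n * E u * exp (-(w * u)))
      (-∫ u in Ioi (0 : ℝ), (u : ℂ) ^ (n + 1) * E u * exp (-(z * u))) z := by
  obtain ⟨b, hab, hbz⟩ := exists_between hz
  rw [← integral_neg]
  refine (hasDerivAt_integral_of_dominated_loc_of_deriv_le (s := {w : ℂ | b < w.re})
    (F := fun (w : ℂ) (u : ℝ) => (u : ℂ) ^ n * E u * exp (-(w * u)))
    (F' := fun (w : ℂ) (u : ℝ) => -((u : ℂ) ^ (n + 1) * E u * exp (-(w * u))))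
    (bound := fun u => C * (u ^ (n + 1) * Real.exp (-((b - a) * u))))
    ((isOpen_setOf_lt_re _).mem_nhds hbz)
    (Eventually.of_forall fun w => aestronglyMeasurable_laplace_integrand hc n w)
    (integrableOn_laplace_integrand hc hb n hz)
    (aestronglyMeasurable_laplace_integrand hc (n + 1) z).neg ?_
    ((integrableOn_pow_mul_exp_neg (n + 1) (sub_pos.2 hab)).const_mul C) ?_).2
  · filter_upwards [ae_restrict_mem measurableSet_Ioi] with u hu w hw
    rw [norm_neg]
    exact norm_laplace_integrand_le hb (n + 1) (le_of_lt hw) (le_of_lt hu)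
  · filter_upwards with u w _
    have h1 : HasDerivAt (fun w : ℂ => -(w * u)) (-(1 * (u : ℂ))) w :=
      ((hasDerivAt_id w).mul_const (u : ℂ)).neg
    exact (h1.cexp.const_mul ((u : ℂ) ^ n * E u)).congr_deriv (by ring)

lemma iteratedDeriv_laplace (hc : ContinuousOn E (Ici 0))
    (hb : ∀ u, 0 ≤ u → ‖E u‖ ≤ C * Real.exp (a * u)) (n : ℕ) :
    ∀ z : ℂ, a < z.re →
    iteratedDeriv n (fun w : ℂ => ∫ u in Ioi (0 : ℝ), E u * exp (-(w * u))) z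
      = (-1) ^ n * ∫ u in Ioi (0 : ℝ), (u : ℂ) ^ n * E u * exp (-(z * u)) := by
  induction n with
  | zero => intro z _; simp
  | succ n ih =>
    intro z hz
    rw [iteratedDeriv_succ]
    have : iteratedDeriv n (fun w : ℂ => ∫ u in Ioi (0 : ℝ), E u * exp (-(w * u))) =ᶠ[𝓝 z]
        fun z => (-1) ^ n * ∫ u in Ioi (0 : ℝ), (u : ℂ) ^ n * E u * exp (-(z * u)) := by
      filter_upwards [(isOpen_setOf_lt_re _).mem_nhds hz] with w hw
      exact ih w hw
    rw [this.deriv_eq, ((hasDerivAt_laplace hc hb n hz).const_mul _).deriv]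
    ring

lemma eqOn_of_forall_ofReal_eq {f g : ℂ → ℂ} {a : ℝ} (hf : DifferentiableOn ℂ f {z | a < z.re})
    (hg : DifferentiableOn ℂ g {z | a < z.re}) (h : ∀ x : ℝ, a < x → f x = g x) :
    EqOn f g {z | a < z.re} := by
  have hopen := isOpen_setOf_lt_re a
  have hmem : ((a + 1 : ℝ) : ℂ) ∈ {z : ℂ | a < z.re} := by simp
  refine AnalyticOnNhd.eqOn_of_preconnected_of_frequently_eq (𝕜 := ℂ) (hf.analyticOnNhd hopen)
    (hg.analyticOnNhd hopen) (convex_halfSpace_re_gt a).isPreconnected hmem ?_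
  have hreal : Tendsto ofReal (𝓝[≠] (a + 1)) (𝓝[≠] ((a + 1 : ℝ) : ℂ)) :=
    continuous_ofReal.continuousWithinAt.tendsto_nhdsWithin fun _ h => ofReal_injective.ne h
  have hev : ∀ᶠ x : ℝ in 𝓝[≠] (a + 1), f x = g x :=
    ((lt_mem_nhds (lt_add_one a)).mono h).filter_mono nhdsWithin_le_nhds
  exact hreal.frequently hev.frequently

lemma integral_postWidderKernel_mul_laplace (n : ℕ) (y : ℝ) :
    ∫ u in Ioi (0 : ℝ), (postWidderKernel n y u : ℂ) * (E u * exp (-(a * u)))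
      = (y ^ (n + 1) / n.factorial : ℝ)
        * ∫ u in Ioi (0 : ℝ), (u : ℂ) ^ n * E u * exp (-((y + a : ℝ) * u)) := by
  rw [← integral_const_mul]
  refine setIntegral_congr_fun measurableSet_Ioi fun u _ => ?_
  have hexp : exp (-((y + a : ℝ) * u)) = exp (-(y * u)) * exp (-(a * u)) := by
    rw [← exp_add]; push_cast; ring_nf
  simp only [postWidderKernel, hexp]
  push_cast
  ring

lemma norm_integral_postWidderKernel_mul_laplace_le {b B y : ℝ} {n : ℕ} (hba : b ≤ a) (hy : 0 < y)
    (hya : 0 < y + a) (hB : ‖∫ u in Ioi (0 : ℝ), (u : ℂ) ^ n * E u * exp (-((y + a : ℝ) * u))‖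
      / n.factorial * (y + a) ^ n * (y + a - b) ≤ B) :
    ‖∫ u in Ioi (0 : ℝ), (postWidderKernel n y u : ℂ) * (E u * exp (-(a * u)))‖
      ≤ (y / (y + a)) ^ n * B := by
  rw [integral_postWidderKernel_mul_laplace, norm_mul, norm_real,
    Real.norm_of_nonneg (by positivity)]
  have hnonneg := norm_nonneg (∫ u in Ioi (0 : ℝ), (u : ℂ) ^ n * E u * exp (-((y + a : ℝ) * u)))
  generalize ‖∫ u in Ioi (0 : ℝ), (u : ℂ) ^ n * E u * exp (-((y + a : ℝ) * u))‖ = Y at *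
  calc y ^ (n + 1) / n.factorial * Y
      = (y / (y + a)) ^ n * (Y / n.factorial * (y + a) ^ n * y) := by
        rw [div_pow, pow_succ]
        field_simp
    _ ≤ (y / (y + a)) ^ n * (Y / n.factorial * (y + a) ^ n * (y + a - b)) := by
        gcongr; linarith
    _ ≤ (y / (y + a)) ^ n * B := by gcongr

lemma tendsto_div_add_pow (a : ℝ) {u : ℝ} (hu : 0 < u) :
    Tendsto (fun n : ℕ => ((n / u) / (n / u + a)) ^ n) atTop (𝓝 (Real.exp (-(a * u)))) := by
  have h := (Real.tendsto_one_add_div_pow_exp (a * u)).inv₀ (Real.exp_ne_zero _)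
  rw [← Real.exp_neg] at h
  refine h.congr' ?_
  filter_upwards [eventually_gt_atTop 0] with n hn
  have : (0 : ℝ) < n := Nat.cast_pos.2 hn
  rw [← inv_pow]
  congr 1
  rw [← inv_div ((n : ℝ) / u + a)]
  congr 1
  field_simp

lemma norm_le_of_laplace_of_iteratedDeriv_le (hc : ContinuousOn E (Ici 0))
    (hb : ∀ u, 0 ≤ u → ‖E u‖ ≤ C * Real.exp (a * u)) {Q : ℂ → ℂ} {b B : ℝ} (hba : b ≤ a)
    (hQd : DifferentiableOn ℂ Q {z | a < z.re})
    (hQ : ∀ x : ℝ, a < x → Q x = ∫ u in Ioi (0 : ℝ), E u * exp (-(x * u)))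
    (hB : ∀ (n : ℕ) (x : ℝ), a < x →
      ‖iteratedDeriv n Q x‖ / n.factorial * x ^ n * (x - b) ≤ B) {u₀ : ℝ} (hu₀ : 0 < u₀) :
    ‖E u₀‖ ≤ B := by
  have hnorm (u : ℝ) : ‖E u * exp (-(a * u))‖ = ‖E u‖ * Real.exp (-(a * u)) := by
    rw [norm_mul, norm_exp, neg_re, re_mul_ofReal, ofReal_re]
  have hEd : DifferentiableOn ℂ (fun w => ∫ u in Ioi (0 : ℝ), E u * exp (-(w * u)))
      {z | a < z.re} := fun z hz => by
    simpa using (hasDerivAt_laplace hc hb 0 hz).differentiableAt.differentiableWithinAt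
  have hQE := eqOn_of_forall_ofReal_eq hQd hEd hQ
  have hlim := (tendsto_integral_postWidderKernel_mul (F := fun u => E u * exp (-(a * u)))
    (C := C) (by fun_prop) (fun u hu => ?_) hu₀).norm
  · have hx : Tendsto (fun n : ℕ => (n : ℝ) / u₀) atTop atTop :=
      tendsto_natCast_atTop_atTop.atTop_div_const hu₀
    have hle := le_of_tendsto_of_tendsto hlim ((tendsto_div_add_pow a hu₀).mul_const B) ?_
    · rw [hnorm, mul_comm] at hle
      exact le_of_mul_le_mul_left hle (Real.exp_pos _)
    filter_upwards [hx.eventually (eventually_gt_atTop 0), hx.eventually (eventually_gt_atTop (-a))]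
      with n hy hya
    set y : ℝ := n / u₀
    have hxpos : 0 < y + a := by linarith
    have hax : a < y + a := by linarith
    have hderiv : iteratedDeriv n Q (y + a : ℝ)
        = (-1) ^ n * ∫ u in Ioi (0 : ℝ), (u : ℂ) ^ n * E u * exp (-((y + a : ℝ) * u)) := by
      rw [← iteratedDeriv_laplace hc hb n (y + a : ℝ) hax]
      exact ((hQE.eventuallyEq_of_mem ((isOpen_setOf_lt_re a).mem_nhds hax))).iteratedDeriv_eq n
    have hBn := hB n (y + a) hax
    rw [hderiv, norm_mul, norm_pow, norm_neg, norm_one, one_pow, one_mul] at hBn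
    exact norm_integral_postWidderKernel_mul_laplace_le hba hy hxpos hBn
  · rw [hnorm]
    calc _ ≤ C * Real.exp (a * u) * Real.exp (-(a * u)) := by gcongr; exact hb u hu
      _ = C := by rw [mul_assoc, ← Real.exp_add, add_neg_cancel, Real.exp_zero, mul_one]

end Laplace

end PostWidder

section DigammaAsymptotics

open Set Topology Real

lemma differentiableAt_Gamma_of_pos {x : ℝ} (hx : 0 < x) : DifferentiableAt ℝ Gamma x :=
  differentiableOn_Gamma_Ioi.differentiableAt (Ioi_mem_nhds hx)

lemma differentiableAt_log_Gamma {x : ℝ} (hx : 0 < x) : DifferentiableAt ℝ (log ∘ Gamma) x :=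
  (differentiableAt_Gamma_of_pos hx).log (Gamma_pos_of_pos hx).ne'

lemma log_Gamma_add_one {x : ℝ} (hx : 0 < x) :
    (log ∘ Gamma) (x + 1) = (log ∘ Gamma) x + log x := by
  simp only [Function.comp_apply, Gamma_add_one hx.ne', log_mul hx.ne' (Gamma_pos_of_pos hx).ne',
    add_comm]

lemma deriv_log_Gamma_add_one {x : ℝ} (hx : 0 < x) :
    deriv (log ∘ Gamma) (x + 1) = deriv (log ∘ Gamma) x + 1 / x := by
  rw [← deriv_comp_add_const, one_div, ← deriv_log,
    ← deriv_add (differentiableAt_log_Gamma hx) (differentiableAt_log hx.ne')]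
  apply EventuallyEq.deriv_eq
  filter_upwards [eventually_gt_nhds hx] with y hy using log_Gamma_add_one hy

lemma deriv_log_Gamma_le {x : ℝ} (hx : 0 < x) : deriv (log ∘ Gamma) x ≤ log x := by
  refine (convexOn_log_Gamma.deriv_le_slope hx (add_pos hx one_pos) (lt_add_one x)
    (differentiableAt_log_Gamma hx)).trans_eq ?_
  rw [slope_def_field, add_sub_cancel_left, div_one, log_Gamma_add_one hx, add_sub_cancel_left]

lemma log_sub_inv_le_deriv_log_Gamma {x : ℝ} (hx : 0 < x) :
    log x - 1 / x ≤ deriv (log ∘ Gamma) x := by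
  have h := convexOn_log_Gamma.slope_le_deriv hx (add_pos hx one_pos) (lt_add_one x)
    (differentiableAt_log_Gamma (by positivity))
  rw [slope_def_field, add_sub_cancel_left, div_one, log_Gamma_add_one hx, add_sub_cancel_left,
    deriv_log_Gamma_add_one hx] at h
  linarith

lemma deriv_log_Gamma_add_nat {x : ℝ} (hx : 0 < x) (N : ℕ) :
    deriv (log ∘ Gamma) (x + N) = deriv (log ∘ Gamma) x + ∑ n ∈ Finset.range N, 1 / (x + n) := by
  induction N with
  | zero => simp
  | succ N ih =>
    rw [Finset.sum_range_succ, ← add_assoc, ← ih, ← deriv_log_Gamma_add_one (by positivity),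
      Nat.cast_succ, add_assoc]

lemma tendsto_deriv_log_Gamma_sub_log :
    Tendsto (fun x => deriv (log ∘ Gamma) x - log x) atTop (𝓝 0) := by
  have h : Tendsto (fun x : ℝ => -(1 / x)) atTop (𝓝 0) := by
    simpa using (tendsto_inv_atTop_zero (𝕜 := ℝ)).neg
  refine tendsto_of_tendsto_of_tendsto_of_le_of_le' h tendsto_const_nhds ?_ ?_
  · filter_upwards [eventually_gt_atTop 0] with x hx
    linarith [log_sub_inv_le_deriv_log_Gamma hx]
  · filter_upwards [eventually_gt_atTop 0] with x hx
    linarith [deriv_log_Gamma_le hx]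

lemma tendsto_deriv_log_Gamma_add_nat_sub_log (x : ℝ) :
    Tendsto (fun N : ℕ => deriv (log ∘ Gamma) (x + N) - log N) atTop (𝓝 0) := by
  have hN := tendsto_natCast_atTop_atTop (R := ℝ)
  have h := (tendsto_deriv_log_Gamma_sub_log.comp (tendsto_atTop_add_const_left _ x hN)).add
    ((tendsto_log_comp_add_sub_log x).comp hN)
  rw [add_zero] at h
  refine h.congr fun N => ?_
  simp only [Function.comp_def, add_comm x, sub_add_sub_cancel]

lemma hasSum_deriv_log_Gamma_sub {x y : ℝ} (hx : 0 < x) (hxy : x ≤ y) :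
    HasSum (fun n : ℕ => 1 / (x + n) - 1 / (y + n))
      (deriv (log ∘ Gamma) y - deriv (log ∘ Gamma) x) := by
  have hy : 0 < y := hx.trans_le hxy
  rw [hasSum_iff_tendsto_nat_of_nonneg fun n => sub_nonneg.2 (by gcongr)]
  have h := ((tendsto_deriv_log_Gamma_add_nat_sub_log x).sub
    (tendsto_deriv_log_Gamma_add_nat_sub_log y)).const_add
    (deriv (log ∘ Gamma) y - deriv (log ∘ Gamma) x)
  rw [sub_zero, add_zero] at h
  refine h.congr fun N => ?_
  rw [deriv_log_Gamma_add_nat hx, deriv_log_Gamma_add_nat hy, Finset.sum_sub_distrib]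
  ring

lemma digamma_ofReal {x : ℝ} (hx : 0 < x) :
    Complex.digamma x = (deriv (log ∘ Gamma) x : ℝ) := by
  have hGamma : DifferentiableAt ℂ Complex.Gamma x :=
    differentiableAt_Gamma_of_re_pos (by simpa using hx)
  have hderiv : HasDerivAt (fun y : ℝ => ((Gamma y : ℝ) : ℂ)) (deriv Complex.Gamma x) x :=
    hGamma.hasDerivAt.comp_ofReal.congr_of_eventuallyEq
      (Eventually.of_forall fun y => (Complex.Gamma_ofReal y).symm)
  have hreal := differentiableAt_Gamma_of_pos hx
  have hlog : deriv (log ∘ Gamma) x = deriv Gamma x / Gamma x :=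
    deriv.log hreal (Gamma_pos_of_pos hx).ne'
  rw [Complex.digamma_def, logDeriv_apply, hderiv.unique hreal.hasDerivAt.ofReal_comp, hlog,
    Complex.Gamma_ofReal, Complex.ofReal_div]

lemma deriv_log_Gamma_three_halves :
    deriv (log ∘ Gamma) (3 / 2) = 2 - 2 * log 2 - eulerMascheroniConstant := by
  have hhalf : deriv (log ∘ Gamma) (1 / 2) = -2 * log 2 - eulerMascheroniConstant := by
    have h := digamma_ofReal (x := 1 / 2) (by norm_num)
    rw [Complex.ofReal_div, Complex.ofReal_one, Complex.ofReal_ofNat, Complex.digamma_one_half,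
      ← Complex.ofReal_ofNat, ← Complex.ofReal_log zero_le_two] at h
    exact_mod_cast h.symm
  have hshift := deriv_log_Gamma_add_one (x := 1 / 2) (by norm_num)
  rw [show (1 / 2 + 1 : ℝ) = 3 / 2 by norm_num, hhalf] at hshift
  rw [hshift]
  ring

end DigammaAsymptotics

section LaplaceIntegrals

open Set MeasureTheory Real

lemma integral_tsum_of_nonneg {α : Type*} [MeasurableSpace α] {μ : Measure α} {F : ℕ → α → ℝ}
    (hF : ∀ n, Integrable (F n) μ) (hpos : ∀ n a, 0 ≤ F n a)
    (hsum : Summable fun n => ∫ a, F n a ∂μ) :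
    ∫ a, ∑' n, F n a ∂μ = ∑' n, ∫ a, F n a ∂μ := by
  refine (integral_tsum_of_summable_integral_norm hF ?_).symm
  simpa only [norm_of_nonneg (hpos _ _)] using hsum

lemma integrable_tsum_of_nonneg {α : Type*} [MeasurableSpace α] {μ : Measure α} {F : ℕ → α → ℝ}
    (hF : ∀ n, Integrable (F n) μ) (hpos : ∀ n a, 0 ≤ F n a)
    (hsum : Summable fun n => ∫ a, F n a ∂μ) : Integrable (fun a => ∑' n, F n a) μ := by
  by_cases hne : ∑' n, ∫ a, F n a ∂μ = 0
  · have hzero (n : ℕ) : F n =ᵐ[μ] 0 := by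
      rw [← integral_eq_zero_iff_of_nonneg (hpos n) (hF n)]
      exact congrFun ((hasSum_zero_iff_of_nonneg fun n => integral_nonneg (hpos n)).1
        (hne ▸ hsum.hasSum)) n
    refine (integrable_zero α ℝ μ).congr ?_
    filter_upwards [ae_all_iff.2 hzero] with a ha
    simp [ha]
  · exact .of_integral_ne_zero (integral_tsum_of_nonneg hF hpos hsum ▸ hne)

/-- The Laplace integral `∫₀^∞ f(u) e^{-su} du` converges absolutely and equals `v`. -/
def HasLaplace (f : ℝ → ℝ) (s v : ℝ) : Prop :=
  IntegrableOn (fun u => f u * exp (-(s * u))) (Ioi 0) ∧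
    ∫ u in Ioi (0 : ℝ), f u * exp (-(s * u)) = v

namespace HasLaplace

variable {f g : ℝ → ℝ} {s v w : ℝ}

lemma congr (hf : HasLaplace f s v) (hfg : EqOn g f (Ioi 0)) : HasLaplace g s v := by
  have h : EqOn (fun u => f u * exp (-(s * u))) (fun u => g u * exp (-(s * u))) (Ioi 0) :=
    fun u hu => congrArg (· * exp (-(s * u))) (hfg hu).symm
  exact ⟨hf.1.congr_fun h measurableSet_Ioi,
    (setIntegral_congr_fun measurableSet_Ioi h).symm.trans hf.2⟩

lemma add (hf : HasLaplace f s v) (hg : HasLaplace g s w) :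
    HasLaplace (fun u => f u + g u) s (v + w) := by
  simp only [HasLaplace, add_mul]
  exact ⟨hf.1.add hg.1, by rw [integral_add hf.1 hg.1, hf.2, hg.2]⟩

lemma sub (hf : HasLaplace f s v) (hg : HasLaplace g s w) :
    HasLaplace (fun u => f u - g u) s (v - w) := by
  simp only [HasLaplace, sub_mul]
  exact ⟨hf.1.sub hg.1, by rw [integral_sub hf.1 hg.1, hf.2, hg.2]⟩

lemma const_mul (hf : HasLaplace f s v) (c : ℝ) : HasLaplace (fun u => c * f u) s (c * v) := by
  simp only [HasLaplace, mul_assoc]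
  exact ⟨hf.1.const_mul c, by rw [integral_const_mul, hf.2]⟩

lemma exp_mul {a : ℝ} (hf : HasLaplace f (s - a) v) :
    HasLaplace (fun u => exp (a * u) * f u) s v := by
  have h (u : ℝ) : exp (a * u) * f u * exp (-(s * u)) = f u * exp (-((s - a) * u)) := by
    rw [mul_right_comm, mul_comm, ← exp_add]
    ring_nf
  simpa only [HasLaplace, h] using hf

lemma comp_mul_left {a : ℝ} (hf : HasLaplace f s v) (ha : 0 < a) :
    HasLaplace (fun u => f (a * u)) (a * s) (v / a) := by
  have h (u : ℝ) : f (a * u) * exp (-(a * s * u)) = f (a * u) * exp (-(s * (a * u))) := by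
    ring_nf
  simp only [HasLaplace, h]
  refine ⟨(integrableOn_Ioi_comp_mul_left_iff _ 0 ha).2 (by simpa using hf.1), ?_⟩
  rw [integral_comp_mul_left_Ioi (fun x => f x * exp (-(s * x))) 0 ha, mul_zero, hf.2,
    smul_eq_mul, inv_mul_eq_div]

lemma mono (hf : HasLaplace f s v) (hg : HasLaplace g s w) (hfg : ∀ u, 0 < u → f u ≤ g u) :
    v ≤ w := by
  rw [← hf.2, ← hg.2]
  exact setIntegral_mono_on hf.1 hg.1 measurableSet_Ioi fun u hu =>
    mul_le_mul_of_nonneg_right (hfg u hu) (exp_pos _).le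

lemma tsum_of_nonneg {F : ℕ → ℝ → ℝ} {v : ℕ → ℝ} (hF : ∀ n, HasLaplace (F n) s (v n))
    (hpos : ∀ n u, 0 ≤ F n u) (hv : Summable v) :
    HasLaplace (fun u => ∑' n, F n u) s (∑' n, v n) := by
  have hpos' (n : ℕ) (u : ℝ) : 0 ≤ F n u * exp (-(s * u)) := mul_nonneg (hpos n u) (exp_pos _).le
  obtain rfl : (fun n => ∫ u in Ioi (0 : ℝ), F n u * exp (-(s * u))) = v := funext fun n => (hF n).2
  simp only [HasLaplace, ← tsum_mul_right]
  exact ⟨integrable_tsum_of_nonneg (fun n => (hF n).1) hpos' hv,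
    integral_tsum_of_nonneg (fun n => (hF n).1) hpos' hv⟩

end HasLaplace

lemma hasLaplace_pow (n : ℕ) {s : ℝ} (hs : 0 < s) :
    HasLaplace (fun u => u ^ n) s (n.factorial / s ^ (n + 1)) :=
  ⟨integrableOn_pow_mul_exp_neg n hs, integral_pow_mul_exp_neg n hs⟩

lemma hasLaplace_const (c : ℝ) {s : ℝ} (hs : 0 < s) : HasLaplace (fun _ => c) s (c / s) := by
  simpa [div_eq_mul_inv] using (hasLaplace_pow 0 hs).const_mul c

lemma hasLaplace_id {s : ℝ} (hs : 0 < s) : HasLaplace (fun u => u) s (1 / s ^ 2) := by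
  simpa using hasLaplace_pow 1 hs

lemma indicator_max_sub_mul_exp_neg (s : ℝ) {v : ℝ} (hv : 0 ≤ v) :
    (Ioi 0).indicator (fun u => max (u - v) 0 * exp (-(s * u)))
      = fun u => exp (-(s * v)) * (Ioi 0).indicator (fun t => t ^ 1 * exp (-(s * t))) (u - v) := by
  ext u
  by_cases h : v < u
  · rw [indicator_of_mem (mem_Ioi.2 (hv.trans_lt h)), indicator_of_mem (mem_Ioi.2 (sub_pos.2 h)),
      pow_one, max_eq_left (sub_pos.2 h).le, mul_left_comm, ← exp_add]
    ring_nf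
  · have hmax : max (u - v) 0 = 0 := max_eq_right (by linarith)
    rw [indicator_of_notMem (s := Ioi 0) (a := u - v) (by simpa using h), mul_zero]
    exact indicator_apply_eq_zero.2 fun _ => by rw [hmax, zero_mul]

lemma hasLaplace_max_sub {s v : ℝ} (hs : 0 < s) (hv : 0 ≤ v) :
    HasLaplace (fun u => max (u - v) 0) s (exp (-(s * v)) / s ^ 2) := by
  rw [HasLaplace, ← integrable_indicator_iff measurableSet_Ioi,
    ← integral_indicator measurableSet_Ioi, indicator_max_sub_mul_exp_neg s hv]
  constructor
  · exact (((integrable_indicator_iff measurableSet_Ioi).2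
      (integrableOn_pow_mul_exp_neg 1 hs)).comp_sub_right v).const_mul _
  · rw [integral_const_mul, integral_sub_right_eq_self, integral_indicator measurableSet_Ioi,
      integral_pow_mul_exp_neg 1 hs, Nat.factorial_one, Nat.cast_one, mul_one_div]

end LaplaceIntegrals

section RampSums

open Topology Real

/-- The piecewise linear function with slope increments `a n` at `log n`. The term `n = 0` sits at
`log 0 = 0`. -/
noncomputable def ramp (a : ℕ → ℝ) (u : ℝ) : ℝ := ∑' n, a n * max (u - log n) 0

lemma ramp_term_eq_zero (a : ℕ → ℝ) {u : ℝ} {n : ℕ} (h : exp u ≤ n) :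
    a n * max (u - log n) 0 = 0 := by
  have : u ≤ log n := by rwa [le_log_iff_exp_le ((exp_pos u).trans_le h)]
  rw [max_eq_right (by linarith), mul_zero]

lemma ramp_eq_sum (a : ℕ → ℝ) {u : ℝ} {N : ℕ} (hN : exp u ≤ N) :
    ramp a u = ∑ n ∈ Finset.range N, a n * max (u - log n) 0 :=
  tsum_eq_sum fun n hn => ramp_term_eq_zero a (hN.trans (by simpa using hn))

lemma continuous_ramp (a : ℕ → ℝ) : Continuous (ramp a) := by
  refine continuous_iff_continuousAt.2 fun u => ?_
  have hlocal : ramp a =ᶠ[𝓝 u] fun v => ∑ n ∈ Finset.range ⌈exp (u + 1)⌉₊,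
      a n * max (v - log n) 0 := by
    filter_upwards [gt_mem_nhds (lt_add_one u)] with v hv
    exact ramp_eq_sum a ((exp_le_exp.2 hv.le).trans (Nat.le_ceil _))
  exact ContinuousAt.congr (Continuous.continuousAt (by fun_prop)) hlocal.symm

lemma ramp_nonneg {a : ℕ → ℝ} (ha : ∀ n, 0 ≤ a n) (u : ℝ) : 0 ≤ ramp a u :=
  tsum_nonneg fun n => mul_nonneg (ha n) (le_max_right _ _)

lemma ramp_le {a : ℕ → ℝ} (ha1 : ∀ n, a n ≤ 1) {u : ℝ} (hu : 0 ≤ u) :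
    ramp a u ≤ 2 * exp (2 * u) := by
  rw [ramp_eq_sum a (Nat.le_ceil (exp u))]
  have hterm (n : ℕ) : a n * max (u - log n) 0 ≤ u :=
    calc a n * max (u - log n) 0 ≤ 1 * max (u - log n) 0 := by gcongr; exact ha1 n
      _ ≤ u := by rw [one_mul]; exact max_le (by linarith [log_natCast_nonneg n]) hu
  have hceil : (⌈exp u⌉₊ : ℝ) ≤ 2 * exp u := by
    linarith [Nat.ceil_lt_add_one (exp_pos u).le, one_le_exp hu]
  calc _ ≤ ∑ _n ∈ Finset.range ⌈exp u⌉₊, u := Finset.sum_le_sum fun n _ => hterm n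
    _ = ⌈exp u⌉₊ * u := by simp
    _ ≤ 2 * exp u * exp u := by
        gcongr
        linarith [add_one_le_exp u]
    _ = 2 * exp (2 * u) := by rw [two_mul u, exp_add]; ring

lemma exp_neg_mul_log_natCast {s : ℝ} {n : ℕ} (hn : n ≠ 0) :
    exp (-(s * log n)) = (n : ℝ) ^ (-s) := by
  rw [rpow_def_of_pos (by positivity), mul_neg, mul_comm]

lemma hasLaplace_ramp {a : ℕ → ℝ} {s : ℝ} (ha : ∀ n, 0 ≤ a n) (ha0 : a 0 = 0) (hs : 0 < s)
    (hsum : Summable fun n => a n * (n : ℝ) ^ (-s)) :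
    HasLaplace (ramp a) s ((∑' n, a n * (n : ℝ) ^ (-s)) / s ^ 2) := by
  rw [← tsum_div_const]
  refine .tsum_of_nonneg (fun n => ?_) (fun n u => mul_nonneg (ha n) (le_max_right _ _))
    (hsum.div_const _)
  convert (hasLaplace_max_sub hs (log_natCast_nonneg n)).const_mul (a n) using 1
  rcases eq_or_ne n 0 with rfl | hn
  · simp [ha0]
  · rw [exp_neg_mul_log_natCast hn, mul_div_assoc]

end RampSums

section ArchimedeanTerm

open Set Topology Real

lemma hasSum_sub_succ_of_antitone {f : ℕ → ℝ} {l : ℝ} (hf : Antitone f)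
    (hl : Tendsto f atTop (𝓝 l)) : HasSum (fun n => f n - f (n + 1)) (f 0 - l) := by
  rw [hasSum_iff_tendsto_nat_of_nonneg fun n => sub_nonneg.2 (hf n.le_succ)]
  simpa only [Finset.sum_range_sub'] using hl.const_sub (f 0)

lemma hasSum_one_div_succ_sub :
    HasSum (fun j : ℕ => 1 / (4 * ((j : ℝ) + 1)) - 1 / (4 * ((j : ℝ) + 2))) (1 / 4) := by
  have hanti : Antitone fun j : ℕ => 1 / (4 * ((j : ℝ) + 1)) := fun i j hij => by
    dsimp only
    gcongr
  have hlim : Tendsto (fun j : ℕ => 1 / (4 * ((j : ℝ) + 1))) atTop (𝓝 0) := by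
    simpa using (tendsto_one_div_add_atTop_nhds_zero_nat (𝕜 := ℝ)).mul_const (4⁻¹)
  convert hasSum_sub_succ_of_antitone hanti hlim using 3
  · push_cast; ring
  · simp

lemma one_div_odd_sq_le (j : ℕ) :
    1 / (2 * (j : ℝ) + 3) ^ 2 ≤ 1 / (4 * ((j : ℝ) + 1)) - 1 / (4 * ((j : ℝ) + 2)) := by
  rw [show 1 / (4 * ((j : ℝ) + 1)) - 1 / (4 * ((j : ℝ) + 2)) = 1 / (4 * ((j + 1) * (j + 2))) by
    field_simp; ring]
  gcongr
  nlinarith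

lemma summable_one_div_odd_sq : Summable fun j : ℕ => 1 / (2 * (j : ℝ) + 3) ^ 2 :=
  hasSum_one_div_succ_sub.summable.of_nonneg_of_le (fun j => by positivity) one_div_odd_sq_le

lemma tsum_one_div_odd_sq_le : ∑' j : ℕ, 1 / (2 * (j : ℝ) + 3) ^ 2 ≤ 1 / 4 :=
  hasSum_one_div_succ_sub.tsum_eq ▸
    summable_one_div_odd_sq.tsum_le_tsum one_div_odd_sq_le hasSum_one_div_succ_sub.summable

/-- The inverse Laplace transform of the archimedean term in the explicit formula. -/
noncomputable def archKernel (u : ℝ) : ℝ :=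
  ∑' j : ℕ, 1 / (2 * (j : ℝ) + 3) ^ 2 * exp (-((2 * j + 5 / 2) * u))

lemma archKernel_term_le {u : ℝ} (hu : 0 ≤ u) (j : ℕ) :
    1 / (2 * (j : ℝ) + 3) ^ 2 * exp (-((2 * j + 5 / 2) * u))
      ≤ 1 / (2 * (j : ℝ) + 3) ^ 2 * exp (-(5 / 2 * u)) := by
  gcongr
  linarith [j.cast_nonneg (α := ℝ)]

lemma archKernel_nonneg (u : ℝ) : 0 ≤ archKernel u := tsum_nonneg fun j => by positivity

lemma archKernel_le {u : ℝ} (hu : 0 ≤ u) : archKernel u ≤ 1 / 4 * exp (-(5 / 2 * u)) := by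
  have hs := summable_one_div_odd_sq.mul_right (exp (-(5 / 2 * u)))
  calc archKernel u ≤ ∑' j : ℕ, 1 / (2 * (j : ℝ) + 3) ^ 2 * exp (-(5 / 2 * u)) :=
        (hs.of_nonneg_of_le (fun j => by positivity)
          (archKernel_term_le hu)).tsum_le_tsum (archKernel_term_le hu) hs
    _ = (∑' j : ℕ, 1 / (2 * (j : ℝ) + 3) ^ 2) * exp (-(5 / 2 * u)) := tsum_mul_right
    _ ≤ 1 / 4 * exp (-(5 / 2 * u)) := by
        gcongr
        exact tsum_one_div_odd_sq_le

lemma continuousOn_archKernel : ContinuousOn archKernel (Ici 0) := by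
  refine continuousOn_tsum (fun j => by fun_prop) summable_one_div_odd_sq fun j u hu => ?_
  rw [norm_of_nonneg (by positivity)]
  refine (archKernel_term_le hu j).trans (mul_le_of_le_one_right (by positivity) ?_)
  rw [exp_le_one_iff]
  linarith [mem_Ici.1 hu]

lemma summable_one_div_odd_sq_div {w : ℝ} (hw : 0 ≤ w) :
    Summable fun j : ℕ => 1 / (2 * (j : ℝ) + 3) ^ 2 / (w + (2 * j + 5 / 2)) :=
  summable_one_div_odd_sq.of_nonneg_of_le (fun j => by positivity) fun j =>
    div_le_self (by positivity) (by linarith [j.cast_nonneg (α := ℝ)])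

lemma hasLaplace_archKernel {w : ℝ} (hw : 0 < w) :
    HasLaplace archKernel w
      (∑' j : ℕ, 1 / (2 * (j : ℝ) + 3) ^ 2 / (w + (2 * j + 5 / 2))) := by
  refine .tsum_of_nonneg (fun j => ?_) (fun j u => by positivity)
    (summable_one_div_odd_sq_div hw.le)
  simp only [mul_comm (1 / (2 * (j : ℝ) + 3) ^ 2), ← neg_mul]
  rw [← sub_neg_eq_add w]
  exact (hasLaplace_const _ (by rw [sub_neg_eq_add]; positivity)).exp_mul

lemma one_div_sub_one_div_add_half {s : ℝ} (hs : 0 ≤ s) (j : ℕ) :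
    1 / (3 / 2 + (j : ℝ)) - 1 / (3 / 2 + s / 2 + j)
      = 2 * s * (1 / (2 * (j : ℝ) + 3) ^ 2)
        - 2 * s ^ 2 * (1 / (2 * (j : ℝ) + 3) ^ 2 / (s + 1 / 2 + (2 * j + 5 / 2))) := by
  rw [show 3 / 2 + (j : ℝ) = (2 * j + 3) / 2 by ring,
    show 3 / 2 + s / 2 + (j : ℝ) = (2 * j + 3 + s) / 2 by ring,
    show s + 1 / 2 + (2 * (j : ℝ) + 5 / 2) = 2 * j + 3 + s by ring]
  field_simp
  ring

lemma deriv_log_Gamma_eq_tsum {s : ℝ} (hs : 0 ≤ s) :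
    deriv (log ∘ Gamma) (3 / 2 + s / 2) = deriv (log ∘ Gamma) (3 / 2)
      + 2 * s * ∑' j : ℕ, 1 / (2 * (j : ℝ) + 3) ^ 2
      - 2 * s ^ 2 * ∑' j : ℕ, 1 / (2 * (j : ℝ) + 3) ^ 2 / (s + 1 / 2 + (2 * j + 5 / 2)) := by
  have hΓ := hasSum_deriv_log_Gamma_sub (x := 3 / 2) (y := 3 / 2 + s / 2) (by norm_num)
    (by linarith)
  simp only [one_div_sub_one_div_add_half hs] at hΓ
  have := hΓ.unique ((summable_one_div_odd_sq.hasSum.mul_left (2 * s)).sub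
    ((summable_one_div_odd_sq_div (by positivity)).hasSum.mul_left (2 * s ^ 2)))
  linarith

end ArchimedeanTerm

section LogDerivXi

open Topology Complex

local notation "γ" => Real.eulerMascheroniConstant
local notation "Λ" => ArithmeticFunction.vonMangoldt

lemma logDeriv_xiGamma {s : ℂ} (hs : -2 < s.re) :
    logDeriv xiGamma s = -(Real.log Real.pi : ℝ) / 2 + digamma (1 + s / 2) / 2 := by
  have hpi : (Real.pi : ℂ) ≠ 0 := by exact_mod_cast Real.pi_ne_zero
  have hre : 0 < (1 + s / 2).re := by
    rw [add_re, one_re, div_ofNat_re]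
    linarith
  have hΓ : DifferentiableAt ℂ Gamma (1 + s / 2) := differentiableAt_Gamma_of_re_pos hre
  have hpow : HasDerivAt (fun z : ℂ => (Real.pi : ℂ) ^ (-z / 2))
      ((Real.pi : ℂ) ^ (-s / 2) * log Real.pi * (-1 / 2)) s :=
    ((hasDerivAt_id s).neg.div_const 2).const_cpow (Or.inl hpi)
  have hcomp : HasDerivAt (fun z : ℂ => Gamma (1 + z / 2))
      (deriv Gamma (1 + s / 2) * (1 / 2)) s :=
    hΓ.hasDerivAt.comp s (((hasDerivAt_id s).div_const 2).const_add 1)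
  have hpow0 : (Real.pi : ℂ) ^ (-s / 2) ≠ 0 := by simp [cpow_eq_zero_iff, hpi]
  have hmul : logDeriv xiGamma s = _ := logDeriv_mul s hpow0 (Gamma_ne_zero_of_re_pos hre)
    hpow.differentiableAt hcomp.differentiableAt
  rw [hmul, logDeriv_apply, logDeriv_apply, hpow.deriv, hcomp.deriv, digamma_def, logDeriv_apply,
    ofReal_log Real.pi_pos.le]
  field_simp

lemma term_vonMangoldt_one_add (s : ℝ) (n : ℕ) :
    LSeries.term (fun n => (Λ n : ℂ)) (1 + s) n = ((Λ n / n * (n : ℝ) ^ (-s) : ℝ) : ℂ) := by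
  rcases eq_or_ne n 0 with rfl | hn
  · simp
  · have hn' : (n : ℂ) ≠ 0 := by exact_mod_cast hn
    rw [LSeries.term_of_ne_zero hn, cpow_add _ _ hn', cpow_one, div_mul_eq_div_div, ofReal_mul,
      ofReal_cpow n.cast_nonneg, ofReal_neg, ofReal_natCast, cpow_neg, ofReal_div, ofReal_natCast,
      div_eq_mul_inv (_ / _)]

lemma summable_vonMangoldt_div_mul_rpow {s : ℝ} (hs : 0 < s) :
    Summable fun n : ℕ => Λ n / n * (n : ℝ) ^ (-s) := by
  have h : LSeriesSummable (fun n => (Λ n : ℂ)) (1 + s) :=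
    ArithmeticFunction.LSeriesSummable_vonMangoldt (by simpa using hs)
  simp only [LSeriesSummable, funext (term_vonMangoldt_one_add s)] at h
  exact summable_ofReal.1 h

lemma LSeries_vonMangoldt_one_add (s : ℝ) :
    LSeries (fun n => (Λ n : ℂ)) (1 + s) = ((∑' n : ℕ, Λ n / n * (n : ℝ) ^ (-s) : ℝ) : ℂ) := by
  rw [LSeries, ofReal_tsum]
  exact tsum_congr (term_vonMangoldt_one_add s)

lemma logDeriv_riemannZeta₁ {s : ℂ} (hs : 1 < s.re) :
    logDeriv riemannZeta₁ s = 1 / (s - 1) - LSeries (fun n => (Λ n : ℂ)) s := by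
  have hs1 : s ≠ 1 := by
    rintro rfl
    exact hs.ne' one_re
  have heq : riemannZeta₁ =ᶠ[𝓝 s] fun z => (z - 1) * riemannZeta z := by
    filter_upwards [isOpen_ne.mem_nhds hs1] with z hz using riemannZeta₁_eq_mul hz
  have hmul := logDeriv_mul (f := fun z : ℂ => z - 1) s (sub_ne_zero.2 hs1)
    (riemannZeta_ne_zero_of_one_lt_re hs) (by fun_prop) (differentiableAt_riemannZeta hs1)
  rw [logDeriv_apply, heq.deriv_eq, heq.eq_of_nhds, ← logDeriv_apply, hmul,
    ArithmeticFunction.LSeries_vonMangoldt_eq_deriv_riemannZeta_div hs, logDeriv_apply,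
    logDeriv_apply, deriv_sub_const, deriv_id'']
  ring

lemma logDeriv_riemannXi {s : ℂ} (hs : -2 < s.re) (hz : riemannZeta₁ s ≠ 0) :
    logDeriv riemannXi s = logDeriv riemannZeta₁ s
      + (-(Real.log Real.pi : ℝ) / 2 + digamma (1 + s / 2) / 2) := by
  rw [← logDeriv_xiGamma hs]
  exact logDeriv_mul s hz (xiGamma_ne_zero hs) (differentiable_riemannZeta₁ s)
    (differentiableAt_xiGamma hs)

lemma riemannZeta₁_ne_zero_of_one_lt_re {s : ℂ} (hs : 1 < s.re) : riemannZeta₁ s ≠ 0 := by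
  have hs1 : s ≠ 1 := by
    rintro rfl
    exact hs.ne' one_re
  rw [riemannZeta₁_eq_mul hs1]
  exact mul_ne_zero (sub_ne_zero.2 hs1) (riemannZeta_ne_zero_of_one_lt_re hs)

lemma digamma_three_halves_add {s : ℝ} (hs : 0 ≤ s) :
    digamma (1 + (1 + s : ℂ) / 2) = (deriv (Real.log ∘ Real.Gamma) (3 / 2 + s / 2) : ℝ) := by
  rw [← digamma_ofReal (by positivity)]
  congr 1
  push_cast
  ring

lemma logDeriv_riemannXi_one_add {s : ℝ} (hs : 0 < s) :
    logDeriv riemannXi (1 + s) = ((1 / s - ∑' n : ℕ, Λ n / n * (n : ℝ) ^ (-s)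
      - Real.log Real.pi / 2 + deriv (Real.log ∘ Real.Gamma) (3 / 2 + s / 2) / 2 : ℝ) : ℂ) := by
  have hre : 1 < (1 + s : ℂ).re := by simpa using hs
  rw [logDeriv_riemannXi (by linarith) (riemannZeta₁_ne_zero_of_one_lt_re hre),
    logDeriv_riemannZeta₁ hre, LSeries_vonMangoldt_one_add, digamma_three_halves_add hs.le]
  push_cast
  ring

lemma logDeriv_riemannXi_one :
    logDeriv riemannXi 1 = ((γ - Real.log Real.pi / 2
      + deriv (Real.log ∘ Real.Gamma) (3 / 2) / 2 : ℝ) : ℂ) := by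
  have hdigamma := digamma_three_halves_add le_rfl
  simp only [ofReal_zero, add_zero, zero_div] at hdigamma
  rw [logDeriv_riemannXi (by rw [one_re]; norm_num) (by simp), hdigamma, logDeriv_apply,
    deriv_riemannZeta₁_one, riemannZeta₁_one]
  push_cast
  ring

lemma two_mul_logDeriv_riemannXi_one :
    2 * (logDeriv riemannXi 1).re = 2 + γ - Real.log (4 * Real.pi) := by
  rw [logDeriv_riemannXi_one, ofReal_re, deriv_log_Gamma_three_halves,
    Real.log_mul (by norm_num) Real.pi_ne_zero, show (4 : ℝ) = 2 ^ 2 by norm_num, Real.log_pow]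
  push_cast
  ring

end LogDerivXi

section ExplicitFormula

open Set Topology

local notation "γ" => Real.eulerMascheroniConstant
local notation "Λ" => ArithmeticFunction.vonMangoldt

lemma vonMangoldt_div_nonneg (n : ℕ) : 0 ≤ Λ n / (n : ℝ) :=
  div_nonneg ArithmeticFunction.vonMangoldt_nonneg n.cast_nonneg

lemma vonMangoldt_div_le_one (n : ℕ) : Λ n / (n : ℝ) ≤ 1 :=
  div_le_one_of_le₀ (ArithmeticFunction.vonMangoldt_le_log.trans (Real.log_le_self n.cast_nonneg))
    n.cast_nonneg

/-- The remainder in the expansion of the smoothed sum `∑ Λ(n) / n * (u - log n)₊` as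
`u ^ 2 / 2 - γ u + κ + ⋯`, with the constant term `κ` left as a parameter. -/
noncomputable def chebyshevRemainder (κ u : ℝ) : ℝ :=
  κ - γ * u + u ^ 2 / 2 - ramp (fun n => Λ n / n) u

lemma continuous_chebyshevRemainder (κ : ℝ) : Continuous (chebyshevRemainder κ) := by
  have := continuous_ramp fun n => Λ n / (n : ℝ)
  unfold chebyshevRemainder
  fun_prop

lemma abs_chebyshevRemainder_le (κ : ℝ) {u : ℝ} (hu : 0 ≤ u) :
    |chebyshevRemainder κ u| ≤ (|κ| + γ + 3) * Real.exp (2 * u) := by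
  have hramp_le := ramp_le vonMangoldt_div_le_one hu
  have hramp_nonneg := ramp_nonneg vonMangoldt_div_nonneg u
  have hγ : 0 ≤ γ := Real.one_half_lt_eulerMascheroniConstant.le.trans' (by norm_num)
  have hlin : γ * u ≤ γ * Real.exp (2 * u) := by
    gcongr
    linarith [Real.add_one_le_exp (2 * u)]
  have hsq : u ^ 2 / 2 ≤ Real.exp (2 * u) := by
    nlinarith [Real.quadratic_le_exp_of_nonneg (by linarith : 0 ≤ 2 * u)]
  have hκ : |κ| ≤ |κ| * Real.exp (2 * u) :=
    le_mul_of_one_le_right (abs_nonneg κ) (Real.one_le_exp (by linarith))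
  rw [chebyshevRemainder, abs_le]
  constructor <;>
    linarith [neg_abs_le κ, le_abs_self κ, sq_nonneg u, mul_nonneg hγ hu, Real.exp_pos (2 * u)]

lemma hasLaplace_chebyshevRemainder (κ : ℝ) {s : ℝ} (hs : 0 < s) :
    HasLaplace (chebyshevRemainder κ) s
      (κ / s - γ / s ^ 2 + 1 / s ^ 3 - (∑' n : ℕ, Λ n / n * (n : ℝ) ^ (-s)) / s ^ 2) := by
  have hramp := hasLaplace_ramp vonMangoldt_div_nonneg (by simp) hs
    (summable_vonMangoldt_div_mul_rpow hs)
  convert ((((hasLaplace_const κ hs).sub ((hasLaplace_id hs).const_mul γ)).add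
    ((hasLaplace_pow 2 hs).const_mul (1 / 2))).sub hramp) using 1
  · ext u
    rw [chebyshevRemainder]
    ring
  · rw [Nat.factorial_two, Nat.cast_ofNat]
    ring

lemma hasLaplace_exp_mul_chebyshevRemainder_sub (κ : ℝ) {s : ℝ} (hs : 0 < s) :
    HasLaplace (fun u => Real.exp (1 / 2 * u) * chebyshevRemainder κ u - archKernel u) (s + 1 / 2)
      (κ / s - γ / s ^ 2 + 1 / s ^ 3 - (∑' n : ℕ, Λ n / n * (n : ℝ) ^ (-s)) / s ^ 2
        - ∑' j : ℕ, 1 / (2 * (j : ℝ) + 3) ^ 2 / (s + 1 / 2 + (2 * j + 5 / 2))) := by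
  refine HasLaplace.sub (.exp_mul ?_) (hasLaplace_archKernel (by positivity))
  rw [add_sub_cancel_right]
  exact hasLaplace_chebyshevRemainder κ hs

lemma abs_exp_mul_chebyshevRemainder_sub_le (κ : ℝ) {u : ℝ} (hu : 0 ≤ u) :
    |Real.exp (1 / 2 * u) * chebyshevRemainder κ u - archKernel u|
      ≤ (|κ| + γ + 4) * Real.exp (5 / 2 * u) := by
  have hmul : |Real.exp (1 / 2 * u) * chebyshevRemainder κ u|
      ≤ (|κ| + γ + 3) * Real.exp (5 / 2 * u) := by
    rw [abs_mul, Real.abs_exp, show 5 / 2 * u = 1 / 2 * u + 2 * u by ring, Real.exp_add,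
      mul_left_comm]
    gcongr
    exact abs_chebyshevRemainder_le κ hu
  have harch : |archKernel u| ≤ Real.exp (5 / 2 * u) := by
    rw [abs_of_nonneg (archKernel_nonneg u)]
    refine (archKernel_le hu).trans ?_
    have : Real.exp (-(5 / 2 * u)) ≤ Real.exp (5 / 2 * u) := Real.exp_le_exp.2 (by linarith)
    linarith [Real.exp_pos (5 / 2 * u)]
  linarith [abs_sub (Real.exp (1 / 2 * u) * chebyshevRemainder κ u) (archKernel u)]

lemma sq_mul_dslope_dslope (f : ℂ → ℂ) (a z : ℂ) :
    (z - a) ^ 2 * dslope (dslope f a) a z = f z - f a - (z - a) * deriv f a := by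
  rw [pow_two, mul_assoc, ← smul_eq_mul (z - a) (dslope _ _ _), sub_smul_dslope, dslope_same,
    mul_sub, ← smul_eq_mul (z - a) (dslope _ _ _), sub_smul_dslope]

lemma deriv_conj_of_forall_conj {f : ℂ → ℂ}
    (hf : ∀ z, f (starRingEnd ℂ z) = starRingEnd ℂ (f z)) (z : ℂ) :
    deriv f (starRingEnd ℂ z) = starRingEnd ℂ (deriv f z) := by
  have hfix : starRingEnd ℂ ∘ f ∘ starRingEnd ℂ = f := by
    ext w
    simp [hf]
  have h := congrFun (deriv_conj_conj (f := f)) (starRingEnd ℂ z)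
  simpa [hfix] using h

lemma im_deriv_logDeriv_riemannXi_ofReal (x : ℝ) :
    (deriv (logDeriv riemannXi) x).im = 0 := by
  have hlog (z : ℂ) :
      logDeriv riemannXi (starRingEnd ℂ z) = starRingEnd ℂ (logDeriv riemannXi z) := by
    rw [logDeriv_apply, logDeriv_apply, deriv_conj_of_forall_conj riemannXi_conj, riemannXi_conj,
      map_div₀]
  rw [← Complex.conj_eq_iff_im, ← deriv_conj_of_forall_conj hlog, Complex.conj_ofReal]

/-- The function `ξ' / ξ` recentred at the critical line. -/
noncomputable def shiftedLogDerivXi (w : ℂ) : ℂ := logDeriv riemannXi (1 / 2 + w)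

lemma differentiableOn_shiftedLogDerivXi (hRH : RiemannHypothesis) :
    DifferentiableOn ℂ shiftedLogDerivXi {z | 0 < z.re} := fun z hz =>
  ((differentiableAt_logDeriv_riemannXi hRH (by simpa using hz)).comp z
    (f := fun w => 1 / 2 + w) (by fun_prop)).differentiableWithinAt

lemma differentiableOn_dslope_dslope_shiftedLogDerivXi (hRH : RiemannHypothesis) :
    DifferentiableOn ℂ (dslope (dslope shiftedLogDerivXi (1 / 2)) (1 / 2)) {z | 0 < z.re} := by
  have hmem : {z : ℂ | 0 < z.re} ∈ 𝓝 (1 / 2 : ℂ) := (isOpen_setOf_lt_re 0).mem_nhds (by norm_num)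
  exact (Complex.differentiableOn_dslope hmem).2 ((Complex.differentiableOn_dslope hmem).2
    (differentiableOn_shiftedLogDerivXi hRH))

lemma deriv_shiftedLogDerivXi (w : ℂ) :
    deriv shiftedLogDerivXi w = deriv (logDeriv riemannXi) (1 / 2 + w) :=
  deriv_comp_const_add ..

/-- The constant term of the expansion of `∑ Λ(n) / n * (u - log n)₊`, in terms of `ξ' / ξ`; the
series comes from the archimedean factor. -/
noncomputable def chebyshevConstant : ℝ :=
  ∑' j : ℕ, 1 / (2 * (j : ℝ) + 3) ^ 2 - (deriv (logDeriv riemannXi) 1).re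

lemma dslope_dslope_shiftedLogDerivXi_eq {s : ℝ} (hs : 0 < s) :
    dslope (dslope shiftedLogDerivXi (1 / 2)) (1 / 2) (s + 1 / 2)
      = ((chebyshevConstant / s - γ / s ^ 2 + 1 / s ^ 3
          - (∑' n : ℕ, Λ n / n * (n : ℝ) ^ (-s)) / s ^ 2
          - ∑' j : ℕ, 1 / (2 * (j : ℝ) + 3) ^ 2 / (s + 1 / 2 + (2 * j + 5 / 2)) : ℝ) : ℂ) := by
  have hs' : (s : ℂ) ≠ 0 := by exact_mod_cast hs.ne'
  have hderiv : deriv (logDeriv riemannXi) 1 = ((deriv (logDeriv riemannXi) 1).re : ℂ) := by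
    refine Complex.ext rfl ?_
    simpa using im_deriv_logDeriv_riemannXi_ofReal 1
  have hmul := sq_mul_dslope_dslope shiftedLogDerivXi (1 / 2) (s + 1 / 2)
  rw [deriv_shiftedLogDerivXi, shiftedLogDerivXi, shiftedLogDerivXi, add_sub_cancel_right,
    show 1 / 2 + (s + 1 / 2 : ℂ) = 1 + s by ring, add_halves, hderiv,
    logDeriv_riemannXi_one_add hs, logDeriv_riemannXi_one, deriv_log_Gamma_eq_tsum hs.le] at hmul
  refine mul_left_cancel₀ (pow_ne_zero 2 hs') (hmul.trans ?_)
  rw [chebyshevConstant]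
  norm_cast
  field_simp
  ring

lemma dslope_dslope_shiftedLogDerivXi_eq_integral {x : ℝ} (hx : 1 / 2 < x) :
    dslope (dslope shiftedLogDerivXi (1 / 2)) (1 / 2) x
      = ∫ u in Ioi (0 : ℝ), ((Real.exp (1 / 2 * u) * chebyshevRemainder chebyshevConstant u
          - archKernel u : ℝ) : ℂ) * Complex.exp (-(x * u)) := by
  have hs : 0 < x - 1 / 2 := sub_pos.2 hx
  have hlaplace := (hasLaplace_exp_mul_chebyshevRemainder_sub chebyshevConstant hs).2
  have hvalue := dslope_dslope_shiftedLogDerivXi_eq hs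
  rw [← hlaplace, ← integral_complex_ofReal, sub_add_cancel] at hvalue
  rw [show ((x - 1 / 2 : ℝ) + 1 / 2 : ℂ) = x by push_cast; ring] at hvalue
  rw [hvalue]
  congr 1 with u
  push_cast
  ring_nf

theorem abs_exp_mul_chebyshevRemainder_sub_archKernel_le_of_RH (hRH : RiemannHypothesis) {u : ℝ}
    (hu : 0 < u) :
    |Real.exp (1 / 2 * u) * chebyshevRemainder chebyshevConstant u - archKernel u|
      ≤ 2 + γ - Real.log (4 * Real.pi) := by
  have hQ := differentiableOn_dslope_dslope_shiftedLogDerivXi hRH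
  have hTaylor (n : ℕ) {x : ℝ} (hx : 1 / 2 < x) :=
    norm_iteratedDeriv_mul_le_of_re_nonneg_halfPlane (q := 1 / 2) (by norm_num)
      (differentiableOn_shiftedLogDerivXi hRH) hQ
      (fun z hz => re_logDeriv_riemannXi_nonneg hRH (by simpa using le_of_lt hz))
      (fun z _ => by simpa using sq_mul_dslope_dslope shiftedLogDerivXi (1 / 2) z) n hx
  rw [← two_mul_logDeriv_riemannXi_one, ← Real.norm_eq_abs, ← Complex.norm_real]
  refine norm_le_of_laplace_of_iteratedDeriv_le (a := 5 / 2) (b := 1 / 4)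
    (C := |chebyshevConstant| + γ + 4)
    (E := fun u => ((Real.exp (1 / 2 * u) * chebyshevRemainder chebyshevConstant u
      - archKernel u : ℝ) : ℂ)) ?_ (fun v hv => ?_) (by norm_num)
    (hQ.mono fun z (hz : 5 / 2 < z.re) => lt_trans (by norm_num : (0 : ℝ) < 5 / 2) hz)
    (fun x hx => dslope_dslope_shiftedLogDerivXi_eq_integral (by linarith)) (fun n x hx => ?_) hu
  · have := continuous_chebyshevRemainder chebyshevConstant
    exact Complex.continuous_ofReal.comp_continuousOn
      (.sub (by fun_prop) continuousOn_archKernel)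
  · rw [Complex.norm_real, Real.norm_eq_abs]
    exact abs_exp_mul_chebyshevRemainder_sub_le _ hv
  · have h := hTaylor n (x := x) (by linarith)
    rw [shiftedLogDerivXi] at h
    norm_num at h ⊢
    convert h using 2
    ring

end ExplicitFormula

section SmoothedMertens

open Set Topology MeasureTheory

local notation "γ" => Real.eulerMascheroniConstant
local notation "Λ" => ArithmeticFunction.vonMangoldt

lemma integral_mul_log_mul_exp_neg :
    ∫ t in Ioi (0 : ℝ), t * Real.log t * Real.exp (-t) = 1 - γ := by
  have htwo : (0 : ℝ) < (2 : ℂ).re := by norm_num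
  have heq : Complex.GammaIntegral =ᶠ[𝓝 2] Complex.Gamma := by
    filter_upwards [(isOpen_lt continuous_const Complex.continuous_re).mem_nhds htwo] with z hz
    exact (Complex.Gamma_eq_integral hz).symm
  have hderiv : deriv Complex.Gamma 2 = 1 - γ := by
    have h := Complex.deriv_Gamma_nat 1
    norm_num at h
    rw [h]
    ring
  apply Complex.ofReal_injective
  rw [Complex.ofReal_sub, Complex.ofReal_one, ← hderiv, ← heq.deriv_eq,
    (Complex.hasDerivAt_GammaIntegral htwo).deriv, ← integral_complex_ofReal]
  refine setIntegral_congr_fun measurableSet_Ioi fun t _ => ?_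
  rw [show (2 : ℂ) - 1 = 1 by norm_num, Complex.cpow_one]
  push_cast
  ring

lemma hasLaplace_mul_log_one : HasLaplace (fun t => t * Real.log t) 1 (1 - γ) := by
  have hne : ∫ t in Ioi (0 : ℝ), t * Real.log t * Real.exp (-t) ≠ 0 := by
    rw [integral_mul_log_mul_exp_neg]
    linarith [Real.eulerMascheroniConstant_lt_two_thirds]
  simp only [HasLaplace, one_mul]
  exact ⟨.of_integral_ne_zero hne, integral_mul_log_mul_exp_neg⟩

lemma hasLaplace_mul_log {s : ℝ} (hs : 0 < s) :
    HasLaplace (fun t => t * Real.log t) s ((1 - γ - Real.log s) / s ^ 2) := by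
  have hscaled := (hasLaplace_mul_log_one.comp_mul_left hs).const_mul s⁻¹
  rw [mul_one] at hscaled
  convert (hscaled.sub ((hasLaplace_id hs).const_mul (Real.log s))).congr fun t ht => ?_ using 1
  · field_simp
  · dsimp only
    rw [Real.log_mul hs.ne' (ne_of_gt ht)]
    field_simp
    ring

lemma vonMangoldt_div_mul_log_nonneg (n : ℕ) : 0 ≤ Λ n / (n * Real.log n) :=
  div_nonneg ArithmeticFunction.vonMangoldt_nonneg
    (mul_nonneg n.cast_nonneg (Real.log_natCast_nonneg n))

lemma vonMangoldt_div_mul_log_le (n : ℕ) :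
    Λ n / (n * Real.log n) ≤ 1 / Real.log 2 * (Λ n / n) := by
  rcases Nat.lt_or_ge n 2 with hn | hn
  · interval_cases n <;> simp
  · rw [div_mul_div_comm, one_mul]
    have : 0 < Real.log 2 := Real.log_pos one_lt_two
    have hlog : Real.log 2 ≤ Real.log n := Real.log_le_log two_pos (by exact_mod_cast hn)
    rw [mul_comm (n : ℝ)]
    gcongr

lemma summable_vonMangoldt_div_mul_log_mul_rpow {s : ℝ} (hs : 0 < s) :
    Summable fun n : ℕ => Λ n / (n * Real.log n) * (n : ℝ) ^ (-s) := by
  refine .of_nonneg_of_le (fun n => mul_nonneg (vonMangoldt_div_mul_log_nonneg n) (by positivity))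
    (fun n => ?_) ((summable_vonMangoldt_div_mul_rpow hs).mul_left (1 / Real.log 2))
  rw [← mul_assoc]
  gcongr
  exact vonMangoldt_div_mul_log_le n

lemma tsum_vonMangoldt_div_mul_log_mul_rpow {s : ℝ} (hs : 0 < s) :
    ∑' n : ℕ, Λ n / (n * Real.log n) * (n : ℝ) ^ (-s)
      = Real.log (riemannZeta ((1 + s : ℝ) : ℂ)).re := by
  rw [log_riemannZeta_eq (by linarith)]
  refine tsum_congr fun n => ?_
  rcases n.eq_zero_or_pos with rfl | hn
  · simp
  · have hn' : (0 : ℝ) < n := by exact_mod_cast hn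
    rw [Real.rpow_add hn', Real.rpow_one, Real.rpow_neg hn'.le]
    ring

/-- The error term in the smoothed form of Mertens' theorem: the sum
`∑ Λ(n) / (n log n) * (l - log n)₊` subtracted from its main terms. -/
noncomputable def mertensError (l : ℝ) : ℝ :=
  l * Real.log l + (γ - 1) * l + γ - ramp (fun n => Λ n / (n * Real.log n)) l

lemma continuous_mertensError : Continuous mertensError := by
  have hramp := continuous_ramp fun n => Λ n / ((n : ℝ) * Real.log n)
  unfold mertensError
  exact ((Real.continuous_mul_log.add (by fun_prop)).add continuous_const).sub hramp

lemma hasLaplace_mertensError {s : ℝ} (hs : 0 < s) :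
    HasLaplace mertensError s
      ((γ * s - (Real.log (riemannZeta ((1 + s : ℝ) : ℂ)).re + Real.log s)) / s ^ 2) := by
  have hramp := hasLaplace_ramp vonMangoldt_div_mul_log_nonneg (by simp) hs
    (summable_vonMangoldt_div_mul_log_mul_rpow hs)
  rw [tsum_vonMangoldt_div_mul_log_mul_rpow hs] at hramp
  convert (((hasLaplace_mul_log hs).add ((hasLaplace_id hs).const_mul (γ - 1))).add
    (hasLaplace_const γ hs)).sub hramp using 1
  · rfl
  · field_simp
    ring

lemma tendsto_log_riemannZeta_one_add_add_log :
    Tendsto (fun s : ℝ => Real.log (riemannZeta ((1 + s : ℝ) : ℂ)).re + Real.log s)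
      (𝓝[>] 0) (𝓝 0) := by
  have hshift : Tendsto (fun s : ℝ => 1 + s) (𝓝[>] 0) (𝓝[>] 1) := by
    have h : Tendsto (fun s : ℝ => 1 + s) (𝓝 0) (𝓝 1) := by
      simpa using (continuous_const_add (1 : ℝ)).tendsto 0
    refine tendsto_nhdsWithin_iff.2 ⟨h.mono_left nhdsWithin_le_nhds, ?_⟩
    filter_upwards [self_mem_nhdsWithin] with s (hs : 0 < s) using lt_add_of_pos_right 1 hs
  simpa [Function.comp_def] using
    log_riemannZeta_add_log_sub_isLittleO_ofReal.tendsto_div_nhds_zero.comp hshift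

lemma exists_le_mul_add_mul_exp_neg {f : ℝ → ℝ} (hf : Continuous f) {a T : ℝ}
    (hfT : ∀ t ≥ T, f t ≤ a * t) : ∃ C, ∀ t, 0 < t → f t ≤ a * t + Real.exp (-t) * C := by
  obtain ⟨M, hM⟩ := (isCompact_Icc (a := 0) (b := T)).bddAbove_image
    (f := fun t => Real.exp t * (f t - a * t)) (by fun_prop)
  refine ⟨max M 0, fun t ht => ?_⟩
  rcases le_total t T with htT | htT
  · have hmem := (hM (mem_image_of_mem _ ⟨ht.le, htT⟩)).trans (le_max_left M 0)
    rw [← sub_le_iff_le_add', Real.exp_neg, inv_mul_eq_div, le_div_iff₀' (Real.exp_pos t)]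
    exact hmem
  · exact (hfT t htT).trans (le_add_of_nonneg_right (by positivity))

/-- The Laplace transform of the error term is `o(s⁻²)` as `s → 0⁺`, whereas an eventual bound
`-η t` would make it at most `-η s⁻² + O(1)`. -/
lemma exists_lt_mertensError {η : ℝ} (hη : 0 < η) (T : ℝ) :
    ∃ t ≥ T, -η * t < mertensError t := by
  by_contra! hcon
  obtain ⟨C, hC⟩ := exists_le_mul_add_mul_exp_neg continuous_mertensError hcon
  have htransform {s : ℝ} (hs : 0 < s) :
      γ * s - (Real.log (riemannZeta ((1 + s : ℝ) : ℂ)).re + Real.log s)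
        ≤ -η + s ^ 2 * (C / (s + 1)) := by
    have hexp : HasLaplace (fun t => Real.exp (-t) * C) s (C / (s + 1)) := by
      simpa using (hasLaplace_const C (by linarith : 0 < s - -1)).exp_mul
    have h := (hasLaplace_mertensError hs).mono (((hasLaplace_id hs).const_mul (-η)).add hexp) hC
    rw [div_le_iff₀ (by positivity)] at h
    refine h.trans_eq ?_
    field_simp
  have hlhs : Tendsto (fun s : ℝ => γ * s
      - (Real.log (riemannZeta ((1 + s : ℝ) : ℂ)).re + Real.log s)) (𝓝[>] 0) (𝓝 0) := by
    simpa using (((continuous_const_mul γ).tendsto 0).mono_left nhdsWithin_le_nhds).sub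
      tendsto_log_riemannZeta_one_add_add_log
  have hrhs : Tendsto (fun s : ℝ => -η + s ^ 2 * (C / (s + 1))) (𝓝[>] 0) (𝓝 (-η)) := by
    have h : ContinuousAt (fun s : ℝ => -η + s ^ 2 * (C / (s + 1))) 0 := by
      fun_prop (disch := norm_num)
    simpa using h.tendsto.mono_left nhdsWithin_le_nhds
  have hle := le_of_tendsto_of_tendsto hlhs hrhs
    (by filter_upwards [self_mem_nhdsWithin] with s hs using htransform hs)
  linarith

end SmoothedMertens

section MertensLowerBound

open Set Topology

local notation "γ" => Real.eulerMascheroniConstant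
local notation "Λ" => ArithmeticFunction.vonMangoldt

lemma max_zero_sq (x : ℝ) : max x 0 ^ 2 = x * max x 0 := by
  rcases le_total x 0 with h | h
  · simp [max_eq_right h]
  · rw [max_eq_left h, pow_two]

lemma hasDerivAt_max_zero_sq (x : ℝ) :
    HasDerivAt (fun y : ℝ => max y 0 ^ 2) (2 * max x 0) x := by
  rcases lt_trichotomy x 0 with h | rfl | h
  · rw [max_eq_right h.le, mul_zero]
    refine (hasDerivAt_const x (0 : ℝ)).congr_of_eventuallyEq ?_
    filter_upwards [gt_mem_nhds h] with y hy
    rw [max_eq_right (le_of_lt hy), zero_pow two_ne_zero]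
  · have hO : HasFDerivAt (fun y : ℝ => max y 0 ^ 2) (0 : ℝ →L[ℝ] ℝ) 0 := by
      refine Asymptotics.IsBigO.hasFDerivAt (n := 2) (.of_bound 1 (.of_forall fun y => ?_))
        one_lt_two
      rw [sub_zero, one_mul, norm_pow, norm_pow, norm_norm, Real.norm_eq_abs, Real.norm_eq_abs,
        abs_of_nonneg (le_max_right y 0)]
      gcongr
      exact max_le (le_abs_self y) (abs_nonneg y)
    simpa using hO.hasDerivAt
  · rw [max_eq_left h.le]
    refine HasDerivAt.congr_of_eventuallyEq (f := fun y => y ^ 2) ?_ ?_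
    · simpa using hasDerivAt_pow 2 x
    · filter_upwards [lt_mem_nhds h] with y hy
      rw [max_eq_left (le_of_lt hy)]

lemma hasDerivAt_max_sub_sq_div_sq (v : ℝ) {t : ℝ} (ht : t ≠ 0) :
    HasDerivAt (fun u : ℝ => max (u - v) 0 ^ 2 / u ^ 2) (2 * v * max (t - v) 0 / t ^ 3) t := by
  have hquot := ((hasDerivAt_max_zero_sq (t - v)).comp_sub_const t v).div (hasDerivAt_pow 2 t)
    (pow_ne_zero 2 ht)
  refine hquot.congr_deriv ?_
  rw [max_zero_sq]
  push_cast
  field_simp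
  ring

lemma vonMangoldt_div_mul_log_mul_log (n : ℕ) : Λ n / (n * Real.log n) * Real.log n = Λ n / n := by
  rcases Nat.lt_or_ge n 2 with hn | hn
  · interval_cases n <;> simp
  · have hlog : Real.log n ≠ 0 := (Real.log_pos (by exact_mod_cast hn)).ne'
    rw [div_mul_eq_div_div, div_mul_cancel₀ _ hlog]

lemma mertensError_div_sub_chebyshevRemainder_div_sq (κ : ℝ) {N : ℕ} {u : ℝ} (hu : u ≠ 0)
    (hN : Real.exp u ≤ N) :
    mertensError u / u - chebyshevRemainder κ u / u ^ 2
      = Real.log u + γ - 1 + γ / u - (κ - γ * u + u ^ 2 / 2) / u ^ 2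
        - ∑ n ∈ Finset.range N, Λ n / (n * Real.log n) * (max (u - Real.log n) 0 ^ 2 / u ^ 2) := by
  have hterm (n : ℕ) : Λ n / (n * Real.log n) * (max (u - Real.log n) 0 ^ 2 / u ^ 2)
      = Λ n / (n * Real.log n) * max (u - Real.log n) 0 / u
        - Λ n / n * max (u - Real.log n) 0 / u ^ 2 := by
    rw [← vonMangoldt_div_mul_log_mul_log, max_zero_sq]
    generalize Λ n / (n * Real.log n) = a
    field_simp
  rw [Finset.sum_congr rfl fun n _ => hterm n, Finset.sum_sub_distrib, ← Finset.sum_div,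
    ← Finset.sum_div, ← ramp_eq_sum (fun n => Λ n / (n * Real.log n)) hN,
    ← ramp_eq_sum (fun n => Λ n / n) hN, mertensError, chebyshevRemainder]
  field_simp
  ring

lemma hasDerivAt_mertensError_div_sub (κ : ℝ) {t : ℝ} (ht : 0 < t) :
    HasDerivAt (fun u => mertensError u / u - chebyshevRemainder κ u / u ^ 2)
      (2 * chebyshevRemainder κ t / t ^ 3) t := by
  obtain ⟨N, hN⟩ := exists_nat_ge (Real.exp (t + 1))
  have hsum : HasDerivAt (fun u : ℝ => ∑ n ∈ Finset.range N,
      Λ n / (n * Real.log n) * (max (u - Real.log n) 0 ^ 2 / u ^ 2))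
      (2 * ramp (fun n => Λ n / n) t / t ^ 3) t := by
    refine (HasDerivAt.fun_sum fun (n : ℕ) _ =>
      (hasDerivAt_max_sub_sq_div_sq (Real.log n) ht.ne').const_mul
        (Λ n / (n * Real.log n))).congr_deriv ?_
    rw [ramp_eq_sum _ ((Real.exp_le_exp.2 (by linarith)).trans hN), Finset.mul_sum, Finset.sum_div]
    refine Finset.sum_congr rfl fun n _ => ?_
    rw [← vonMangoldt_div_mul_log_mul_log]
    ring
  have hpoly : HasDerivAt (fun u : ℝ => κ - γ * u + u ^ 2 / 2) (-γ + t) t := by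
    refine ((((hasDerivAt_id t).const_mul γ).const_sub κ).add
      ((hasDerivAt_pow 2 t).div_const 2)).congr_deriv ?_
    push_cast
    ring
  have hmain := ((((Real.hasDerivAt_log ht.ne').add_const γ).sub_const 1).add
    ((hasDerivAt_const t γ).div (hasDerivAt_id t) ht.ne')).sub
    (hpoly.div (hasDerivAt_pow 2 t) (pow_ne_zero 2 ht.ne'))
  refine ((hmain.sub hsum).congr_deriv ?_).congr_of_eventuallyEq ?_
  · rw [chebyshevRemainder, id]
    push_cast
    field_simp
    ring
  · filter_upwards [Ioo_mem_nhds ht (lt_add_one t)] with u hu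
    exact mertensError_div_sub_chebyshevRemainder_div_sq κ hu.1.ne'
      ((Real.exp_le_exp.2 hu.2.le).trans hN)

section

variable {κ B : ℝ}

lemma antitoneOn_mertensError_div_sub_add (hB : 0 ≤ B)
    (hup : ∀ u, 0 < u → chebyshevRemainder κ u
      ≤ B * Real.exp (-(u / 2)) + 1 / 4 * Real.exp (-(3 * u))) {l : ℝ} (hl : 0 < l) :
    AntitoneOn (fun u => mertensError u / u - chebyshevRemainder κ u / u ^ 2
      + (4 * B * Real.exp (-(u / 2)) + Real.exp (-(3 * u)) / 6) / l ^ 3) (Ici l) := by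
  have hmajorant (t : ℝ) : HasDerivAt
      (fun u => (4 * B * Real.exp (-(u / 2)) + Real.exp (-(3 * u)) / 6) / l ^ 3)
      (-(2 * (B * Real.exp (-(t / 2)) + 1 / 4 * Real.exp (-(3 * t))) / l ^ 3)) t := by
    refine (((((((hasDerivAt_id t).div_const 2).neg.exp).const_mul (4 * B)).add
      ((((hasDerivAt_id t).const_mul 3).neg.exp).div_const 6))).div_const (l ^ 3)).congr_deriv ?_
    simp only [id, Pi.neg_apply]
    ring
  have hderiv {t : ℝ} (ht : l ≤ t) :=
    (hasDerivAt_mertensError_div_sub κ (hl.trans_le ht)).fun_add (hmajorant t)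
  refine antitoneOn_of_deriv_nonpos (convex_Ici l)
    (fun t ht => (hderiv ht).continuousAt.continuousWithinAt)
    (fun t ht => (hderiv (interior_subset ht)).differentiableAt.differentiableWithinAt)
    fun t ht => ?_
  have hlt : l ≤ t := interior_subset ht
  have ht0 := hl.trans_le hlt
  rw [(hderiv hlt).deriv, ← sub_eq_add_neg, sub_nonpos]
  calc 2 * chebyshevRemainder κ t / t ^ 3
      ≤ 2 * (B * Real.exp (-(t / 2)) + 1 / 4 * Real.exp (-(3 * t))) / t ^ 3 := by
        gcongr
        exact hup t ht0
    _ ≤ 2 * (B * Real.exp (-(t / 2)) + 1 / 4 * Real.exp (-(3 * t))) / l ^ 3 := by gcongr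

lemma chebyshevRemainder_div_sq_le (hB : 0 ≤ B)
    (hup : ∀ u, 0 < u → chebyshevRemainder κ u
      ≤ B * Real.exp (-(u / 2)) + 1 / 4 * Real.exp (-(3 * u))) {t : ℝ} (ht : 1 ≤ t) :
    chebyshevRemainder κ t / t ^ 2 ≤ (B + 1) / t := by
  have hremainder : chebyshevRemainder κ t ≤ B + 1 := by
    have hhalf : Real.exp (-(t / 2)) ≤ 1 := Real.exp_le_one_iff.2 (by linarith)
    have hthree : Real.exp (-(3 * t)) ≤ 1 := Real.exp_le_one_iff.2 (by linarith)
    have := hup t (by linarith)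
    nlinarith
  calc chebyshevRemainder κ t / t ^ 2 ≤ (B + 1) / t ^ 2 := by gcongr
    _ ≤ (B + 1) / t := by
        gcongr
        exact le_self_pow₀ ht two_ne_zero

lemma le_mertensError_div (hB : 0 ≤ B)
    (hlow : ∀ u, 0 < u → -(B * Real.exp (-(u / 2))) ≤ chebyshevRemainder κ u)
    (hup : ∀ u, 0 < u → chebyshevRemainder κ u
      ≤ B * Real.exp (-(u / 2)) + 1 / 4 * Real.exp (-(3 * u))) {l : ℝ} (hl : 0 < l) :
    -(B * Real.exp (-(l / 2)) / l ^ 2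
        + (4 * B * Real.exp (-(l / 2)) + Real.exp (-(3 * l)) / 6) / l ^ 3)
      ≤ mertensError l / l := by
  refine le_of_forall_pos_le_add fun ε hε => ?_
  obtain ⟨t, ht, hlt⟩ := exists_lt_mertensError (half_pos hε)
    (max (max l 1) ((B + 1) / (ε / 2)))
  obtain ⟨⟨hlt', ht1⟩, htε⟩ : (l ≤ t ∧ 1 ≤ t) ∧ (B + 1) / (ε / 2) ≤ t := by
    simpa only [ge_iff_le, max_le_iff] using ht
  have ht0 : 0 < t := by linarith
  have hanti := antitoneOn_mertensError_div_sub_add hB hup hl self_mem_Ici hlt' hlt'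
  have hmajorant : 0 ≤ (4 * B * Real.exp (-(t / 2)) + Real.exp (-(3 * t)) / 6) / l ^ 3 := by
    positivity
  have hremainder : chebyshevRemainder κ t / t ^ 2 ≤ ε / 2 :=
    (chebyshevRemainder_div_sq_le hB hup ht1).trans
      ((div_le_comm₀ (by positivity) (by positivity)).1 htε)
  have hmertens : -(ε / 2) ≤ mertensError t / t := ((lt_div_iff₀ ht0).2 hlt).le
  have hstart : -(chebyshevRemainder κ l / l ^ 2) ≤ B * Real.exp (-(l / 2)) / l ^ 2 := by
    rw [← neg_div]
    gcongr
    linarith [hlow l hl]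
  dsimp only at hanti
  linarith

end

end MertensLowerBound

section EulerConstantBounds

open Topology

local notation "γ" => Real.eulerMascheroniConstant

lemma log_one_add_inv_le {x : ℝ} (hx : 0 < x) :
    Real.log (1 + 1 / x) ≤ (1 / x + 1 / (x + 1)) / 2 := by
  have hlog : 0 ≤ Real.log (1 + 1 / x) := Real.log_nonneg (by simp [hx.le])
  refine (Real.self_le_sinh_iff.2 hlog).trans_eq ?_
  rw [Real.sinh_log (by positivity)]
  field_simp
  ring

lemma le_log_one_add_inv {x : ℝ} (hx : 0 < x) : 2 / (2 * x + 1) ≤ Real.log (1 + 1 / x) := by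
  refine Eq.trans_le ?_ (Real.le_log_one_add_of_nonneg (x := 1 / x) (by positivity))
  field_simp
  ring

lemma log_add_one_eq {x : ℝ} (hx : 0 < x) :
    Real.log (x + 1) = Real.log x + Real.log (1 + 1 / x) := by
  rw [← Real.log_mul hx.ne' (by positivity), mul_add, mul_one, mul_one_div_cancel hx.ne']

lemma monotoneOn_harmonic_sub_log_sub :
    MonotoneOn (fun n : ℕ => (harmonic n : ℝ) - Real.log n - 1 / 2 * (1 / (n : ℝ)))
      (Set.Ici 1) := by
  refine monotoneOn_nat_Ici_of_le_succ fun n hn => ?_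
  have hn' : (0 : ℝ) < n := by exact_mod_cast hn
  have hlog := log_one_add_inv_le hn'
  rw [harmonic_succ]
  push_cast
  rw [log_add_one_eq hn', ← one_div]
  linarith

lemma antitoneOn_harmonic_sub_log_sub_add :
    AntitoneOn (fun n : ℕ => (harmonic n : ℝ) - Real.log n - 1 / 2 * (1 / (n : ℝ))
      + 1 / 8 * (1 / (n : ℝ)) ^ 2) (Set.Ici 1) := by
  refine antitoneOn_nat_Ici_of_succ_le fun n hn => ?_
  have hn' : (0 : ℝ) < n := by exact_mod_cast hn
  have hlog := le_log_one_add_inv hn'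
  have hgap : 2 / (2 * (n : ℝ) + 1) - (1 / 2 * (1 / (n : ℝ) + 1 / (n + 1))
      + 1 / 8 * (1 / ((n : ℝ) + 1)) ^ 2 - 1 / 8 * (1 / (n : ℝ)) ^ 2)
      = 1 / (8 * (2 * n + 1) * n ^ 2 * (n + 1) ^ 2) := by
    field_simp
    ring
  have hpos : 0 ≤ 1 / (8 * (2 * (n : ℝ) + 1) * n ^ 2 * (n + 1) ^ 2) := by positivity
  rw [harmonic_succ]
  push_cast
  rw [log_add_one_eq hn', ← one_div]
  linarith

lemma harmonic_sub_log_sub_le_eulerMascheroniConstant {n : ℕ} (hn : 1 ≤ n) :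
    (harmonic n : ℝ) - Real.log n - 1 / 2 * (1 / (n : ℝ)) ≤ γ := by
  have hlim : Tendsto (fun m : ℕ => (harmonic m : ℝ) - Real.log m - 1 / 2 * (1 / (m : ℝ))) atTop
      (𝓝 γ) := by
    simpa using Real.tendsto_harmonic_sub_log.sub
      (tendsto_one_div_atTop_nhds_zero_nat.const_mul (1 / 2 : ℝ))
  refine ge_of_tendsto hlim ?_
  filter_upwards [eventually_ge_atTop n] with m hm
  exact monotoneOn_harmonic_sub_log_sub hn (hn.trans hm) hm

lemma eulerMascheroniConstant_le_harmonic_sub_log_sub_add {n : ℕ} (hn : 1 ≤ n) :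
    γ ≤ (harmonic n : ℝ) - Real.log n - 1 / 2 * (1 / (n : ℝ)) + 1 / 8 * (1 / (n : ℝ)) ^ 2 := by
  have hlim : Tendsto (fun m : ℕ => (harmonic m : ℝ) - Real.log m - 1 / 2 * (1 / (m : ℝ))
      + 1 / 8 * (1 / (m : ℝ)) ^ 2) atTop (𝓝 γ) := by
    simpa using (Real.tendsto_harmonic_sub_log.sub
      (tendsto_one_div_atTop_nhds_zero_nat.const_mul (1 / 2 : ℝ))).add
      ((tendsto_one_div_atTop_nhds_zero_nat.pow 2).const_mul (1 / 8 : ℝ))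
  refine le_of_tendsto hlim ?_
  filter_upwards [eventually_ge_atTop n] with m hm
  exact antitoneOn_harmonic_sub_log_sub_add hn (hn.trans hm) hm

lemma harmonic_eight : harmonic 8 = 761 / 280 := by
  norm_num [harmonic, Finset.sum_range_succ]

lemma log_eight : Real.log 8 = 3 * Real.log 2 := by
  rw [show (8 : ℝ) = 2 ^ 3 by norm_num, Real.log_pow, Nat.cast_ofNat]

lemma le_eulerMascheroniConstant : 0.5759 ≤ γ := by
  have h := harmonic_sub_log_sub_le_eulerMascheroniConstant (n := 8) (by norm_num)
  rw [harmonic_eight, Nat.cast_ofNat, log_eight] at h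
  norm_num at h ⊢
  linarith [Real.log_two_lt_d9]

lemma eulerMascheroniConstant_le : γ ≤ 0.5786 := by
  have h := eulerMascheroniConstant_le_harmonic_sub_log_sub_add (n := 8) (by norm_num)
  rw [harmonic_eight, Nat.cast_ofNat, log_eight] at h
  norm_num at h ⊢
  linarith [Real.log_two_gt_d9]

lemma exp_neg_eulerMascheroniConstant_lt : Real.exp (-γ) < 0.56223 := by
  have hseries : (1.7787 : ℝ) ≤ Real.exp 0.5759 := by
    refine le_trans ?_ (Real.sum_le_exp_of_nonneg (by norm_num) 7)
    norm_num [Finset.sum_range_succ, Nat.factorial]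
  rw [Real.exp_neg]
  calc (Real.exp γ)⁻¹ ≤ (1.7787 : ℝ)⁻¹ := inv_anti₀ (by norm_num)
        (hseries.trans (Real.exp_le_exp.2 le_eulerMascheroniConstant))
    _ < 0.56223 := by norm_num

lemma le_log_pi : 1.1424 ≤ Real.log Real.pi := by
  rw [Real.le_log_iff_exp_le Real.pi_pos]
  refine le_trans ?_ Real.pi_gt_d2.le
  have hfrac := Real.exp_bound' (x := 0.1424) (by norm_num) (by norm_num) (n := 3) (by norm_num)
  simp only [Finset.sum_range_succ, Finset.sum_range_zero] at hfrac
  norm_num [Nat.factorial] at hfrac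
  calc Real.exp 1.1424 = Real.exp 1 * Real.exp 0.1424 := by rw [← Real.exp_add]; norm_num
    _ ≤ 2.7182818286 * 1.1536 := by
        gcongr
        · exact Real.exp_one_lt_d9.le
        · norm_num at hfrac ⊢
          linarith
    _ ≤ 3.14 := by norm_num

lemma two_add_eulerMascheroniConstant_sub_log_four_mul_pi_le :
    2 + γ - Real.log (4 * Real.pi) ≤ 0.05 := by
  have hlog : Real.log (4 * Real.pi) = 2 * Real.log 2 + Real.log Real.pi := by
    rw [Real.log_mul (by norm_num) Real.pi_ne_zero, show (4 : ℝ) = 2 ^ 2 by norm_num,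
      Real.log_pow, Nat.cast_ofNat]
  linarith [Real.log_two_gt_d9, le_log_pi, eulerMascheroniConstant_le]

end EulerConstantBounds

section SmallPrimes

local notation "γ" => Real.eulerMascheroniConstant

/-- The first fifteen primes, tabulated with junk value `0` beyond them. -/
def smallPrime (i : ℕ) : ℕ := [2, 3, 5, 7, 11, 13, 17, 19, 23, 29, 31, 37, 41, 43, 47].getD i 0

/-- The integer part of `12 log₂ p` for the primes tabulated in `smallPrime`. -/
def smallPrimeLog (i : ℕ) : ℕ :=
  [12, 19, 27, 33, 41, 44, 49, 50, 54, 58, 59, 62, 64, 65, 66].getD i 0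

lemma nth_prime_eq_smallPrime {i : ℕ} (hi : i < 15) : Nat.nth Nat.Prime i = smallPrime i := by
  interval_cases i <;> exact (congrArg _ (by decide)).trans (Nat.nth_count (by decide))

lemma two_pow_smallPrimeLog_le {i : ℕ} (hi : i < 15) :
    2 ^ smallPrimeLog i ≤ smallPrime i ^ 12 := by
  interval_cases i <;> decide

lemma le_log_of_two_pow_le {n a b : ℕ} (ha : 0 < a) (h : 2 ^ b ≤ n ^ a) :
    (b : ℝ) / a * 0.6931 ≤ Real.log n := by
  have ha' : (0 : ℝ) < a := by exact_mod_cast ha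
  have hlog : (b : ℝ) * Real.log 2 ≤ a * Real.log n := by
    rw [← Real.log_pow, ← Real.log_pow]
    exact Real.log_le_log (by positivity) (by exact_mod_cast h)
  rw [div_mul_eq_mul_div, div_le_iff₀' ha']
  refine le_trans ?_ hlog
  gcongr
  linarith [Real.log_two_gt_d9]

lemma log_nth_prime_div_nonneg (i : ℕ) :
    0 ≤ Real.log (Nat.nth Nat.Prime i) / ((Nat.nth Nat.Prime i : ℝ) - 1) := by
  have hone : (1 : ℝ) ≤ Nat.nth Nat.Prime i := by exact_mod_cast (Nat.prime_nth_prime i).one_le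
  exact div_nonneg (Real.log_nonneg hone) (sub_nonneg.2 hone)

lemma sum_smallPrimeLog_le {r : ℕ} (hr : r ≤ 15) :
    ∑ i ∈ Finset.range r, (smallPrimeLog i : ℝ) / 12 * 0.6931 / ((smallPrime i : ℝ) - 1)
      ≤ ∑ i ∈ Finset.range r,
          Real.log (Nat.nth Nat.Prime i) / ((Nat.nth Nat.Prime i : ℝ) - 1) := by
  refine Finset.sum_le_sum fun i hi => ?_
  have hi' : i < 15 := (Finset.mem_range.1 hi).trans_le hr
  have hone : (1 : ℝ) ≤ smallPrime i := by
    rw [← nth_prime_eq_smallPrime hi']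
    exact_mod_cast (Nat.prime_nth_prime i).one_le
  rw [nth_prime_eq_smallPrime hi']
  gcongr
  exact_mod_cast le_log_of_two_pow_le (by norm_num) (two_pow_smallPrimeLog_le hi')

lemma lt_prod_smallPrime_mul {r : ℕ} (hr : r < 15) :
    0.56223 < (∏ i ∈ Finset.range r, (1 - 1 / (smallPrime i : ℝ)))
      * (0.5759 + ∑ i ∈ Finset.range r,
          (smallPrimeLog i : ℝ) / 12 * 0.6931 / ((smallPrime i : ℝ) - 1)) := by
  interval_cases r <;>
    simp only [Finset.prod_range_succ, Finset.sum_range_succ, Finset.prod_range_zero,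
      Finset.sum_range_zero, smallPrime, smallPrimeLog, List.getD_cons_succ, List.getD_cons_zero,
      Nat.cast_ofNat] <;>
    norm_num

lemma four_le_add_sum_smallPrimeLog :
    4 ≤ 0.5759 + ∑ i ∈ Finset.range 15,
      (smallPrimeLog i : ℝ) / 12 * 0.6931 / ((smallPrime i : ℝ) - 1) := by
  norm_num [Finset.sum_range_succ, smallPrime, smallPrimeLog]

lemma nth_prime_injective : Function.Injective (Nat.nth Nat.Prime) :=
  (Nat.nth_strictMono Nat.infinite_setOfPred_prime).injective

lemma exp_neg_lt_gammaR_of_lt {r : ℕ} (hr : r < 15) : Real.exp (-γ) < gammaR r := by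
  have hprod : ∏ i ∈ Finset.range r, (1 - 1 / (Nat.nth Nat.Prime i : ℝ))
      = ∏ i ∈ Finset.range r, (1 - 1 / (smallPrime i : ℝ)) :=
    Finset.prod_congr rfl fun i hi => by
      rw [nth_prime_eq_smallPrime ((Finset.mem_range.1 hi).trans hr)]
  have hprod_nonneg : 0 ≤ ∏ i ∈ Finset.range r, (1 - 1 / (Nat.nth Nat.Prime i : ℝ)) :=
    Finset.prod_nonneg fun i _ => sub_nonneg.2 (div_le_one_of_le₀
      (by exact_mod_cast (Nat.prime_nth_prime i).one_le) (Nat.cast_nonneg _))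
  rw [gammaR, gammaP, Finset.prod_image nth_prime_injective.injOn,
    Finset.sum_image nth_prime_injective.injOn]
  refine exp_neg_eulerMascheroniConstant_lt.trans
    ((lt_prod_smallPrime_mul hr).trans_le (hprod ▸ ?_))
  exact mul_le_mul_of_nonneg_left
    (add_le_add le_eulerMascheroniConstant (sum_smallPrimeLog_le hr.le)) hprod_nonneg

lemma four_le_add_sum_log_nth_prime_div {r : ℕ} (hr : 15 ≤ r) :
    4 ≤ γ + ∑ i ∈ Finset.range r,
      Real.log (Nat.nth Nat.Prime i) / ((Nat.nth Nat.Prime i : ℝ) - 1) :=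
  calc 4 ≤ _ := four_le_add_sum_smallPrimeLog
    _ ≤ γ + ∑ i ∈ Finset.range 15,
          Real.log (Nat.nth Nat.Prime i) / ((Nat.nth Nat.Prime i : ℝ) - 1) :=
        add_le_add le_eulerMascheroniConstant (sum_smallPrimeLog_le le_rfl)
    _ ≤ _ := by
        gcongr
        exact fun i _ _ => log_nth_prime_div_nonneg i

end SmallPrimes

section RampSecondDifference

local notation "Λ" => ArithmeticFunction.vonMangoldt

lemma max_second_difference_eq (x : ℝ) :
    max (x + 1) 0 - 2 * max (x + 1 / 2) 0 + max x 0
      = if x < 0 ∧ 0 ≤ x + 1 then min (-x) (x + 1) else 0 := by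
  grind

lemma ramp_second_difference_eq_sum (a : ℕ → ℝ) {m : ℝ} {N : ℕ} (hN : Real.exp (m + 1) ≤ N) :
    ramp a (m + 1) - 2 * ramp a (m + 1 / 2) + ramp a m
      = ∑ n ∈ (Finset.range N).filter fun n : ℕ => m < Real.log n ∧ Real.log n ≤ m + 1,
          a n * min (Real.log n - m) (1 - (Real.log n - m)) := by
  rw [ramp_eq_sum a hN, ramp_eq_sum a ((Real.exp_le_exp.2 (by linarith)).trans hN),
    ramp_eq_sum a ((Real.exp_le_exp.2 (by linarith)).trans hN), Finset.mul_sum,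
    ← Finset.sum_sub_distrib, ← Finset.sum_add_distrib, Finset.sum_filter]
  refine Finset.sum_congr rfl fun n _ => ?_
  calc a n * max (m + 1 - Real.log n) 0 - 2 * (a n * max (m + 1 / 2 - Real.log n) 0)
        + a n * max (m - Real.log n) 0
      = a n * (max (m - Real.log n + 1) 0 - 2 * max (m - Real.log n + 1 / 2) 0
          + max (m - Real.log n) 0) := by ring_nf
    _ = _ := by
        rw [max_second_difference_eq]
        grind

lemma min_le_exp_neg_mul_sub {m τ : ℝ} (hm : 2 ≤ m) (h0 : 0 ≤ τ) (h1 : τ ≤ 1) :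
    1 / (4 * m ^ 2) * (2 / 3) * min τ (1 - τ)
      ≤ Real.exp (-τ) * (1 / (2 * m) - 1 / (2 * (m + τ))) := by
  have : 0 < m := by linarith
  have hmin : min τ (1 - τ) ≤ 2 * (τ * (1 - τ)) := by
    rcases le_total τ (1 / 2) with h | h
    · nlinarith [min_le_left τ (1 - τ)]
    · nlinarith [min_le_right τ (1 - τ)]
  have hm' : 1 / (4 * m ^ 2) * (2 / 3) * 2 ≤ 1 / (2 * m * (m + τ)) := by
    rw [← sub_nonneg, show 1 / (2 * m * (m + τ)) - 1 / (4 * m ^ 2) * (2 / 3) * 2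
      = (m - 2 * τ) / (6 * m ^ 2 * (m + τ)) by field_simp; ring]
    exact div_nonneg (by linarith) (by positivity)
  calc 1 / (4 * m ^ 2) * (2 / 3) * min τ (1 - τ)
      ≤ 1 / (4 * m ^ 2) * (2 / 3) * (2 * (τ * (1 - τ))) := by gcongr
    _ = 1 / (4 * m ^ 2) * (2 / 3) * 2 * (τ * (1 - τ)) := by ring
    _ ≤ 1 / (2 * m * (m + τ)) * (τ * (1 - τ)) :=
        mul_le_mul_of_nonneg_right hm' (mul_nonneg h0 (sub_nonneg.2 h1))
    _ = (1 - τ) * (1 / (2 * m) - 1 / (2 * (m + τ))) := by field_simp; ring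
    _ ≤ Real.exp (-τ) * (1 / (2 * m) - 1 / (2 * (m + τ))) :=
        mul_le_mul_of_nonneg_right (Real.one_sub_le_exp_neg τ)
          (sub_nonneg.2 (one_div_le_one_div_of_le (by positivity) (by linarith)))

lemma pos_of_lt_log {m : ℝ} (hm : 0 ≤ m) {n : ℕ} (hn : m < Real.log n) : 0 < n := by
  rcases Nat.eq_zero_or_pos n with rfl | hpos
  · rw [Nat.cast_zero, Real.log_zero] at hn
    exact absurd hn hm.not_gt
  · exact hpos

lemma vonMangoldt_div_mul_min_le {m : ℝ} (hm : 2 ≤ m) {n : ℕ} (hn : m < Real.log n)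
    (hn' : Real.log n ≤ m + 1) :
    Real.exp (-m) / (4 * m ^ 2) * (2 / 3)
        * (Λ n / n * min (Real.log n - m) (1 - (Real.log n - m)))
      ≤ Λ n / (n : ℝ) ^ 2 * (1 / (2 * m) - 1 / (2 * Real.log n)) := by
  have hn0 : (0 : ℝ) < n := by exact_mod_cast pos_of_lt_log (by linarith) hn
  have hinv : Real.exp (-m) * Real.exp (-(Real.log n - m)) = 1 / (n : ℝ) := by
    rw [← Real.exp_add, show -m + -(Real.log n - m) = -Real.log n by ring, Real.exp_neg,
      Real.exp_log hn0, one_div]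
  have htent := min_le_exp_neg_mul_sub hm (τ := Real.log n - m) (by linarith) (by linarith)
  rw [add_sub_cancel] at htent
  calc Real.exp (-m) / (4 * m ^ 2) * (2 / 3)
        * (Λ n / n * min (Real.log n - m) (1 - (Real.log n - m)))
      = Λ n / n * Real.exp (-m)
        * (1 / (4 * m ^ 2) * (2 / 3) * min (Real.log n - m) (1 - (Real.log n - m))) := by ring
    _ ≤ Λ n / n * Real.exp (-m) * (Real.exp (-(Real.log n - m))
          * (1 / (2 * m) - 1 / (2 * Real.log n))) :=
        mul_le_mul_of_nonneg_left htent
          (mul_nonneg (vonMangoldt_div_nonneg n) (Real.exp_pos _).le)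
    _ = Λ n / n * (Real.exp (-m) * Real.exp (-(Real.log n - m)))
          * (1 / (2 * m) - 1 / (2 * Real.log n)) := by ring
    _ = _ := by rw [hinv]; ring

lemma ramp_second_difference_le_sum {m : ℝ} (hm : 2 ≤ m) {N : ℕ} (hN : Real.exp (m + 1) ≤ N) :
    Real.exp (-m) / (4 * m ^ 2) * (2 / 3) * (ramp (fun n => Λ n / n) (m + 1)
        - 2 * ramp (fun n => Λ n / n) (m + 1 / 2) + ramp (fun n => Λ n / n) m)
      ≤ ∑ n ∈ (Finset.range N).filter fun n : ℕ => m < Real.log n ∧ Real.log n ≤ m + 1,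
        Λ n / (n : ℝ) ^ 2 * (1 / (2 * m) - 1 / (2 * Real.log n)) := by
  rw [ramp_second_difference_eq_sum _ hN, Finset.mul_sum]
  refine Finset.sum_le_sum fun n hn => ?_
  obtain ⟨hlt, hle⟩ := (Finset.mem_filter.1 hn).2
  exact vonMangoldt_div_mul_min_le hm hlt hle

end RampSecondDifference

section PrimePowerSums

local notation "Λ" => ArithmeticFunction.vonMangoldt

lemma hasSum_ite_minFac_eq {F : ℕ → ℝ} (hF : ∀ n, ¬IsPrimePow n → F n = 0) {p : ℕ}
    (hp : p.Prime) {a : ℝ} (h : HasSum (fun k : ℕ => F (p ^ (k + 1))) a) :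
    HasSum (fun n : ℕ => if n.minFac = p then F n else 0) a := by
  have hinj : Function.Injective fun k : ℕ => p ^ (k + 1) := fun i j hij =>
    Nat.succ_injective (Nat.pow_right_injective hp.two_le hij)
  rw [← hinj.hasSum_iff fun n hn => ?_]
  · exact h.congr_fun fun k => by simp [hp.pow_minFac (Nat.succ_ne_zero k)]
  · refine ite_eq_right_iff.2 fun hmin => hF n fun hpow => hn ?_
    obtain ⟨q, k, hq, hk, rfl⟩ := (isPrimePow_nat_iff n).1 hpow
    rw [hq.pow_minFac hk.ne'] at hmin
    exact ⟨k - 1, by simp only [Nat.sub_add_cancel hk, hmin]⟩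

lemma hasSum_ite_minFac_mem {F : ℕ → ℝ} (hF : ∀ n, ¬IsPrimePow n → F n = 0) {P : Finset ℕ}
    (hP : ∀ p ∈ P, p.Prime) {a : ℕ → ℝ}
    (h : ∀ p ∈ P, HasSum (fun k : ℕ => F (p ^ (k + 1))) (a p)) :
    HasSum (fun n : ℕ => if n.minFac ∈ P then F n else 0) (∑ p ∈ P, a p) :=
  (hasSum_sum fun p hp => hasSum_ite_minFac_eq hF (hP p hp) (h p hp)).congr_fun fun n => by
    rw [Finset.sum_ite_eq]

lemma one_div_natCast_lt_one {p : ℕ} (hp : 1 < p) : 1 / (p : ℝ) < 1 :=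
  (div_lt_one (by positivity)).2 (by exact_mod_cast hp)

lemma hasSum_vonMangoldt_div {P : Finset ℕ} (hP : ∀ p ∈ P, p.Prime) :
    HasSum (fun n : ℕ => if n.minFac ∈ P then Λ n / (n : ℝ) else 0)
      (∑ p ∈ P, Real.log p / ((p : ℝ) - 1)) := by
  refine hasSum_ite_minFac_mem (fun n hn => by
    rw [ArithmeticFunction.vonMangoldt_eq_zero_iff.2 hn, zero_div]) hP fun p hp => ?_
  have hone : (1 : ℝ) < p := by exact_mod_cast (hP p hp).one_lt
  have hgeometric := (hasSum_geometric_of_lt_one (r := 1 / (p : ℝ)) (by positivity)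
    (one_div_natCast_lt_one (hP p hp).one_lt)).mul_left (Real.log p / p)
  have hvalue : Real.log p / p * (1 - 1 / (p : ℝ))⁻¹ = Real.log p / ((p : ℝ) - 1) := by
    rw [one_sub_div (by linarith), inv_div, div_mul_div_cancel₀ (by linarith)]
  rw [hvalue] at hgeometric
  refine hgeometric.congr_fun fun k => ?_
  rw [ArithmeticFunction.vonMangoldt_apply_pow (Nat.succ_ne_zero k),
    ArithmeticFunction.vonMangoldt_apply_prime (hP p hp), Nat.cast_pow, div_pow, one_pow, pow_succ]
  field_simp

lemma hasSum_vonMangoldt_div_mul_log {P : Finset ℕ} (hP : ∀ p ∈ P, p.Prime) :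
    HasSum (fun n : ℕ => if n.minFac ∈ P then Λ n / (n * Real.log n) else 0)
      (∑ p ∈ P, -Real.log (1 - 1 / (p : ℝ))) := by
  refine hasSum_ite_minFac_mem (fun n hn => by
    rw [ArithmeticFunction.vonMangoldt_eq_zero_iff.2 hn, zero_div]) hP fun p hp => ?_
  have hseries := Real.hasSum_pow_div_log_of_abs_lt_one (x := 1 / (p : ℝ)) (by
    rw [abs_of_nonneg (by positivity)]
    exact one_div_natCast_lt_one (hP p hp).one_lt)
  refine hseries.congr_fun fun k => ?_
  have hlog : 0 < Real.log p := Real.log_pos (by exact_mod_cast (hP p hp).one_lt)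
  rw [ArithmeticFunction.vonMangoldt_apply_pow (Nat.succ_ne_zero k),
    ArithmeticFunction.vonMangoldt_apply_prime (hP p hp), Nat.cast_pow, div_pow, one_pow,
    Real.log_pow, Nat.cast_succ]
  field_simp

end PrimePowerSums

section PrimeSetComparison

local notation "γ" => Real.eulerMascheroniConstant
local notation "Λ" => ArithmeticFunction.vonMangoldt

lemma hasSum_ramp (a : ℕ → ℝ) (u : ℝ) :
    HasSum (fun n => a n * max (u - Real.log n) 0) (ramp a u) := by
  obtain ⟨N, hN⟩ := exists_nat_ge (Real.exp u)
  exact (summable_of_ne_finset_zero (s := Finset.range N) fun n hn =>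
    ramp_term_eq_zero a (hN.trans (by simpa using hn))).hasSum

/-- The excess incurred at `n` when the prime powers built from `P` stand in for those up to
`exp l`: a prime power in exactly one of the two sets contributes its Mertens weight
`Λ n / (n log n)` times the relative distance of `log n` from `l`. -/
noncomputable def primeSetGap (P : Finset ℕ) (l : ℝ) (n : ℕ) : ℝ :=
  Λ n / (n * Real.log n) *
    if n.minFac ∈ P then max (Real.log n / l - 1) 0 else max (1 - Real.log n / l) 0

lemma primeSetGap_nonneg (P : Finset ℕ) (l : ℝ) (n : ℕ) : 0 ≤ primeSetGap P l n := by
  refine mul_nonneg (vonMangoldt_div_mul_log_nonneg n) ?_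
  split_ifs <;> exact le_max_right _ _

lemma primeSetGap_eq (P : Finset ℕ) {l : ℝ} (hl : 0 < l) (n : ℕ) :
    primeSetGap P l n = (if n.minFac ∈ P then Λ n / (n : ℝ) else 0) / l
      - (if n.minFac ∈ P then Λ n / (n * Real.log n) else 0)
      + Λ n / (n * Real.log n) * max (l - Real.log n) 0 / l := by
  have hscale : max (l - Real.log n) 0 / l = max (1 - Real.log n / l) 0 := by
    rw [← max_div_div_right hl.le, sub_div, div_self hl.ne', zero_div]
  have hreflect : max (Real.log n / l - 1) 0 = Real.log n / l - 1 + max (1 - Real.log n / l) 0 := by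
    grind
  rw [primeSetGap, mul_div_assoc, hscale]
  split_ifs
  · rw [hreflect, ← vonMangoldt_div_mul_log_mul_log]
    ring
  · ring

lemma eulerMascheroniConstant_add_sum_pos {P : Finset ℕ} (hP : ∀ p ∈ P, p.Prime) :
    0 < γ + ∑ p ∈ P, Real.log p / ((p : ℝ) - 1) := by
  refine add_pos_of_pos_of_nonneg (by linarith [le_eulerMascheroniConstant])
    (Finset.sum_nonneg fun p hp => ?_)
  have hone : (1 : ℝ) ≤ p := by exact_mod_cast (hP p hp).one_le
  exact div_nonneg (Real.log_nonneg hone) (sub_nonneg.2 hone)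

lemma prod_one_sub_one_div_pos {P : Finset ℕ} (hP : ∀ p ∈ P, p.Prime) :
    0 < ∏ p ∈ P, (1 - 1 / (p : ℝ)) :=
  Finset.prod_pos fun p hp => sub_pos.2 (one_div_natCast_lt_one (hP p hp).one_lt)

lemma gammaP_pos {P : Finset ℕ} (hP : ∀ p ∈ P, p.Prime) : 0 < gammaP P :=
  mul_pos (prod_one_sub_one_div_pos hP) (eulerMascheroniConstant_add_sum_pos hP)

lemma log_gammaP {P : Finset ℕ} (hP : ∀ p ∈ P, p.Prime) :
    Real.log (gammaP P) = Real.log (γ + ∑ p ∈ P, Real.log p / ((p : ℝ) - 1))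
      - ∑ p ∈ P, -Real.log (1 - 1 / (p : ℝ)) := by
  rw [gammaP, Real.log_mul (prod_one_sub_one_div_pos hP).ne'
      (eulerMascheroniConstant_add_sum_pos hP).ne', Finset.sum_neg_distrib,
    Real.log_prod fun p hp => (sub_pos.2 (one_div_natCast_lt_one (hP p hp).one_lt)).ne']
  ring

/-- For `l = γ + ∑ p ∈ P, log p / (p - 1)` the term `(∑ log p / (p - 1)) / l` is `1 - γ / l`,
that is, `γ` minus the main terms `γ - 1 + γ / l` of `mertensError l / l`. -/
lemma hasSum_primeSetGap {P : Finset ℕ} (hP : ∀ p ∈ P, p.Prime) {l : ℝ}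
    (hl : γ + ∑ p ∈ P, Real.log p / ((p : ℝ) - 1) = l) :
    HasSum (primeSetGap P l) (Real.log (gammaP P) + γ - mertensError l / l) := by
  have hl0 : 0 < l := hl ▸ eulerMascheroniConstant_add_sum_pos hP
  have hvalue : Real.log (gammaP P) + γ - mertensError l / l
      = (∑ p ∈ P, Real.log p / ((p : ℝ) - 1)) / l - ∑ p ∈ P, -Real.log (1 - 1 / (p : ℝ))
        + ramp (fun n => Λ n / (n * Real.log n)) l / l := by
    rw [log_gammaP hP, hl, mertensError, eq_sub_iff_add_eq'.2 hl]
    field_simp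
    ring
  rw [hvalue]
  exact ((((hasSum_vonMangoldt_div hP).div_const l).sub (hasSum_vonMangoldt_div_mul_log hP)).add
    ((hasSum_ramp _ l).div_const l)).congr_fun (primeSetGap_eq P hl0)

lemma minFac_ite_sq (P : Finset ℕ) (n : ℕ) :
    (if n.minFac ∈ P then n ^ 2 else n).minFac = n.minFac := by
  split_ifs
  · exact Nat.pow_minFac two_ne_zero
  · rfl

lemma injective_ite_minFac_sq (P : Finset ℕ) :
    Function.Injective fun n : ℕ => if n.minFac ∈ P then n ^ 2 else n := by
  intro x y hxy
  have hmin : x.minFac = y.minFac := by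
    rw [← minFac_ite_sq P x, ← minFac_ite_sq P y]
    exact congrArg Nat.minFac hxy
  simp only [hmin] at hxy
  split_ifs at hxy
  · exact Nat.pow_left_injective two_ne_zero hxy
  · exact hxy

/-- Every prime power `n` with `exp m < n ≤ exp (m + 1)` forces an excess: at `n²`, which exceeds
`exp (2 * m)`, if it is built from `P`, and otherwise at `n` itself, which is below. -/
lemma le_primeSetGap_ite_sq (P : Finset ℕ) {m : ℝ} (hm : 2 ≤ m) {n : ℕ} (hn : m < Real.log n)
    (hn' : Real.log n ≤ m + 1) :
    Λ n / (n : ℝ) ^ 2 * (1 / (2 * m) - 1 / (2 * Real.log n))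
      ≤ primeSetGap P (2 * m) (if n.minFac ∈ P then n ^ 2 else n) := by
  have hpos : 0 < n := pos_of_lt_log (by linarith) hn
  have hone : (1 : ℝ) ≤ n := by exact_mod_cast hpos
  have hlog : 0 < Real.log n := by linarith
  rw [primeSetGap, minFac_ite_sq]
  split_ifs
  · rw [ArithmeticFunction.vonMangoldt_apply_pow two_ne_zero, Nat.cast_pow, Real.log_pow,
      Nat.cast_ofNat]
    calc Λ n / (n : ℝ) ^ 2 * (1 / (2 * m) - 1 / (2 * Real.log n))
        = Λ n / ((n : ℝ) ^ 2 * (2 * Real.log n)) * (2 * Real.log n / (2 * m) - 1) := by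
          field_simp
      _ ≤ _ := mul_le_mul_of_nonneg_left (le_max_left _ _)
          (div_nonneg ArithmeticFunction.vonMangoldt_nonneg (by positivity))
  · have hdistance : (Real.log n - m) / n / (2 * m) ≤ 1 - Real.log n / (2 * m) := by
      rw [one_sub_div (by positivity)]
      gcongr
      exact (div_le_self (by linarith) hone).trans (by linarith)
    calc Λ n / (n : ℝ) ^ 2 * (1 / (2 * m) - 1 / (2 * Real.log n))
        = Λ n / (n * Real.log n) * ((Real.log n - m) / n / (2 * m)) := by field_simp
      _ ≤ _ := mul_le_mul_of_nonneg_left (hdistance.trans (le_max_left _ _))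
          (vonMangoldt_div_mul_log_nonneg n)

lemma sum_le_of_hasSum_primeSetGap {P : Finset ℕ} {m : ℝ} (hm : 2 ≤ m) (N : ℕ) {a : ℝ}
    (h : HasSum (primeSetGap P (2 * m)) a) :
    ∑ n ∈ (Finset.range N).filter fun n : ℕ => m < Real.log n ∧ Real.log n ≤ m + 1,
        Λ n / (n : ℝ) ^ 2 * (1 / (2 * m) - 1 / (2 * Real.log n)) ≤ a := by
  refine (Finset.sum_le_sum fun n hn => ?_).trans <|
    (Finset.sum_map _ ⟨_, injective_ite_minFac_sq P⟩ _).symm.trans_le <|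
      sum_le_hasSum _ (fun n _ => primeSetGap_nonneg P (2 * m) n) h
  obtain ⟨hlt, hle⟩ := (Finset.mem_filter.1 hn).2
  exact le_primeSetGap_ite_sq P hm hlt hle

end PrimeSetComparison

section MainInequality

local notation "γ" => Real.eulerMascheroniConstant
local notation "Λ" => ArithmeticFunction.vonMangoldt

lemma neg_le_chebyshevRemainder_of_RH (hRH : RiemannHypothesis) {u : ℝ} (hu : 0 < u) :
    -(0.05 * Real.exp (-(u / 2))) ≤ chebyshevRemainder chebyshevConstant u := by
  have hbound := (abs_le.1 (abs_exp_mul_chebyshevRemainder_sub_archKernel_le_of_RH hRH hu)).1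
  have hscaled : -0.05 ≤ chebyshevRemainder chebyshevConstant u * Real.exp (u / 2) := by
    rw [mul_comm, div_eq_inv_mul, inv_eq_one_div]
    linarith [archKernel_nonneg u, two_add_eulerMascheroniConstant_sub_log_four_mul_pi_le]
  rwa [Real.exp_neg, ← neg_mul, ← div_eq_mul_inv, div_le_iff₀ (Real.exp_pos _)]

lemma chebyshevRemainder_le_of_RH (hRH : RiemannHypothesis) {u : ℝ} (hu : 0 < u) :
    chebyshevRemainder chebyshevConstant u
      ≤ 0.05 * Real.exp (-(u / 2)) + 1 / 4 * Real.exp (-(3 * u)) := by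
  have hbound := (abs_le.1 (abs_exp_mul_chebyshevRemainder_sub_archKernel_le_of_RH hRH hu)).2
  have hscaled : chebyshevRemainder chebyshevConstant u * Real.exp (u / 2)
      ≤ 0.05 + 1 / 4 * Real.exp (-(5 / 2 * u)) := by
    rw [mul_comm, div_eq_inv_mul, inv_eq_one_div]
    linarith [archKernel_le hu.le, two_add_eulerMascheroniConstant_sub_log_four_mul_pi_le]
  calc chebyshevRemainder chebyshevConstant u
      ≤ (0.05 + 1 / 4 * Real.exp (-(5 / 2 * u))) * Real.exp (-(u / 2)) := by
        rwa [Real.exp_neg (u / 2), ← div_eq_mul_inv, le_div_iff₀ (Real.exp_pos _)]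
    _ = 0.05 * Real.exp (-(u / 2))
          + 1 / 4 * (Real.exp (-(5 / 2 * u)) * Real.exp (-(u / 2))) := by ring
    _ = _ := by rw [← Real.exp_add]; ring_nf

lemma exp_neg_three_mul_le {m : ℝ} (hm : 2 ≤ m) : Real.exp (-(3 * m)) ≤ 0.0025 :=
  calc Real.exp (-(3 * m)) ≤ Real.exp (-1) ^ 6 := by
        rw [← Real.exp_nat_mul]
        exact Real.exp_le_exp.2 (by push_cast; linarith)
    _ ≤ 0.3678794412 ^ 6 := pow_le_pow_left₀ (Real.exp_pos _).le Real.exp_neg_one_lt_d9.le 6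
    _ ≤ 0.0025 := by norm_num

lemma le_ramp_second_difference_of_RH (hRH : RiemannHypothesis) {m : ℝ} (hm : 2 ≤ m) :
    0.175 ≤ ramp (fun n => Λ n / n) (m + 1) - 2 * ramp (fun n => Λ n / n) (m + 1 / 2)
      + ramp (fun n => Λ n / n) m := by
  have hramp : ∀ u, ramp (fun n => Λ n / n) u
      = chebyshevConstant - γ * u + u ^ 2 / 2 - chebyshevRemainder chebyshevConstant u :=
    fun u => by rw [chebyshevRemainder, sub_sub_cancel]
  have hhalf : ∀ u, m ≤ u → Real.exp (-(u / 2)) ≤ 0.3678794412 := fun u hu =>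
    (Real.exp_le_exp.2 (by linarith)).trans Real.exp_neg_one_lt_d9.le
  rw [hramp, hramp, hramp]
  linarith [chebyshevRemainder_le_of_RH hRH (by linarith : 0 < m + 1),
    neg_le_chebyshevRemainder_of_RH hRH (by linarith : 0 < m + 1 / 2),
    chebyshevRemainder_le_of_RH hRH (by linarith : 0 < m),
    hhalf (m + 1) (by linarith), hhalf (m + 1 / 2) (by linarith), hhalf m le_rfl,
    exp_neg_three_mul_le hm, exp_neg_three_mul_le (by linarith : 2 ≤ m + 1)]

lemma mertens_loss_lt {m : ℝ} (hm : 2 ≤ m) :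
    0.05 * Real.exp (-(2 * m / 2)) / (2 * m) ^ 2
        + (4 * 0.05 * Real.exp (-(2 * m / 2)) + Real.exp (-(3 * (2 * m))) / 6) / (2 * m) ^ 3
      < Real.exp (-m) / (4 * m ^ 2) * (2 / 3) * 0.175 := by
  have hexp : Real.exp (-(3 * (2 * m))) ≤ Real.exp (-m) * 0.0025 :=
    calc Real.exp (-(3 * (2 * m))) ≤ Real.exp (-m) * Real.exp (-(3 * m)) := by
          rw [← Real.exp_add]
          exact Real.exp_le_exp.2 (by linarith)
      _ ≤ Real.exp (-m) * 0.0025 := by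
          gcongr
          exact exp_neg_three_mul_le hm
  rw [mul_div_cancel_left₀ m two_ne_zero]
  calc 0.05 * Real.exp (-m) / (2 * m) ^ 2
        + (4 * 0.05 * Real.exp (-m) + Real.exp (-(3 * (2 * m))) / 6) / (2 * m) ^ 3
      ≤ 0.05 * Real.exp (-m) / (2 * m) ^ 2 + Real.exp (-m) * 0.201 / (2 * m) ^ 3 := by
        gcongr
        linarith [Real.exp_pos (-m)]
    _ = Real.exp (-m) / (4 * m ^ 2) * (0.05 + 0.201 / (2 * m)) := by field_simp; ring
    _ ≤ Real.exp (-m) / (4 * m ^ 2) * (0.05 + 0.201 / (2 * 2)) := by gcongr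
    _ < Real.exp (-m) / (4 * m ^ 2) * (2 / 3 * 0.175) := by gcongr; norm_num
    _ = _ := (mul_assoc _ _ _).symm

theorem exp_neg_lt_gammaP_of_RH (hRH : RiemannHypothesis) {P : Finset ℕ}
    (hP : ∀ p ∈ P, p.Prime) (hL : 4 ≤ γ + ∑ p ∈ P, Real.log p / ((p : ℝ) - 1)) :
    Real.exp (-γ) < gammaP P := by
  obtain ⟨m, hm⟩ : ∃ m : ℝ, γ + ∑ p ∈ P, Real.log p / ((p : ℝ) - 1) = 2 * m :=
    ⟨_ / 2, (mul_div_cancel₀ _ two_ne_zero).symm⟩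
  have hm2 : 2 ≤ m := by linarith
  obtain ⟨N, hN⟩ := exists_nat_ge (Real.exp (m + 1))
  have hgain : Real.exp (-m) / (4 * m ^ 2) * (2 / 3) * 0.175
      ≤ Real.log (gammaP P) + γ - mertensError (2 * m) / (2 * m) :=
    calc _ ≤ _ := mul_le_mul_of_nonneg_left (le_ramp_second_difference_of_RH hRH hm2)
          (by positivity)
      _ ≤ _ := ramp_second_difference_le_sum hm2 hN
      _ ≤ _ := sum_le_of_hasSum_primeSetGap hm2 N (hasSum_primeSetGap hP hm)
  have hloss := le_mertensError_div (by norm_num)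
    (fun _ => neg_le_chebyshevRemainder_of_RH hRH) (fun _ => chebyshevRemainder_le_of_RH hRH)
    (by linarith : 0 < 2 * m)
  rw [← Real.lt_log_iff_exp_lt (gammaP_pos hP)]
  linarith [mertens_loss_lt hm2]

end MainInequality

/-- On RH, `γ_r > e^{-γ}` for all `r ≥ 0`. -/
theorem gammaR_gt_of_RH (hRH : RiemannHypothesis) (r : ℕ) :
    Real.exp (-Real.eulerMascheroniConstant) < gammaR r := by
  rcases lt_or_ge r 15 with hr | hr
  · exact exp_neg_lt_gammaR_of_lt hr
  · refine exp_neg_lt_gammaP_of_RH hRH (fun p hp => ?_) ?_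
    · obtain ⟨i, -, rfl⟩ := Finset.mem_image.1 hp
      exact Nat.prime_nth_prime i
    · rw [Finset.sum_image nth_prime_injective.injOn]
      exact four_le_add_sum_log_nth_prime_div hr
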